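/- Assume ε ∉ (1/2)ℤ. Then there exist h₀ > 0 and C > 0, depending only on V₁, V₂ and ε, such that for every C^∞ 1-periodic φ : ℝ → ℂ and every positive integer N with h = 1/N ≤ h₀, the Nyström system with data g = Wφ has a unique solution (φ₀,…,φ_{N−1}), and max_{0 ≤ j ≤ N−1} |φ_j − φ(t_j)| ≤ C h ‖φ‖₃. -/

import Mathlib

/-!
In the variables `(s, u) = (s, s - t)` a logarithmic kernel is `β(s,u) log(4 sin² πu) + κ(s,u)` with
smooth `β`, `κ`, so `W` sends `e_n` to `∑ₖ w(k,n) e_{n+k}` with a symbol `w` that decays rapidly in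
`k` and grows linearly in `n`. On the grids, the Nyström matrix acts on `e_n` in the same way, by a
discrete symbol: the Fourier coefficients `-1/|q|` of the logarithm are replaced by discrete ones
`L(q)` on the shifted grid, and the derivatives by the difference symbol `2 N sin(πn/N)`.

Everything rests on uniform estimates for `L` on `2|n| ≤ N`. Aliasing expresses `L(q) + 1/|q|` by
the integrals `∫₀¹ z r^{k-1}/(1 - r^N z) dr`, `z = exp(2πiε)`, `k = N ± q`, whose denominators are
bounded below by `|sin 2πε|`; this is positive because `ε ∉ ½ℤ`. Hence `L(q) + 1/|q| = O(1/N)`, this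
remainder has differences `O(N⁻²)`, and `|n| |L(n)|` is bounded below: where the real part could
cancel, the imaginary part does not vanish. Since `A₁(s,s)` is constant, the off-diagonal part of
the discrete symbol has order zero, while its diagonal is elliptic of order one.

Stability is a compactness argument. If it failed, there would be coefficient vectors `c` with
`max ⟨n⟩²|c(n)| = 1` and images tending to zero. A limit along an ultrafilter is annihilated by `w`;
ellipticity makes it rapidly decreasing, so it vanishes by injectivity of `W`. But ellipticity also
keeps the maximizing mode in a bounded range, so the limit is not zero.

For the error, compare the discrete Fourier coefficients of the solution with those of `φ`, which
are `O(‖φ‖₃ ⟨n⟩⁻³)`. On the modes `|n| ≤ N/2` the defect is `O(⟨n⟩⁻¹ ‖φ‖₃/N)`, because the discrete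
symbol differs from `w` by `O(⟨n⟩²/N)`; the remaining modes, folded back by aliasing, contribute the
same order. Stability turns this into a coefficient error `O(⟨n⟩⁻² ‖φ‖₃/N)`, which is summable.
-/

noncomputable section

/-- Smooth kernel data, 1-periodic in each variable. -/
def SPK (A : ℝ → ℝ → ℂ) : Prop :=
  ContDiff ℝ (⊤ : ℕ∞) (fun p : ℝ × ℝ => A p.1 p.2) ∧
    (∀ s t, A (s + 1) t = A s t) ∧ (∀ s t, A s (t + 1) = A s t)

/-- Logarithmic kernel `V(s,t) = (i/(2π)) A(s,t) log(sin²(π(s−t))) + K(s,t)`. -/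
def logKer (A K : ℝ → ℝ → ℂ) (s t : ℝ) : ℂ :=
  Complex.I / (2 * Real.pi) * A s t * (Real.log (Real.sin (Real.pi * (s - t)) ^ 2) : ℂ) + K s t

/-- Grid point `s_{j+ε} = (j − 1/2 + ε)h`. -/
def sg (h ε : ℝ) (j : ℤ) : ℝ := ((j : ℝ) - 1 / 2 + ε) * h

/-- Grid point `t_{j+ε} = (j + ε)h`. -/
def tg (h ε : ℝ) (j : ℤ) : ℝ := ((j : ℝ) + ε) * h

/-- Integral operator with kernel `V`. -/
def Vop (V : ℝ → ℝ → ℂ) (φ : ℝ → ℂ) (s : ℝ) : ℂ := ∫ t in (0:ℝ)..1, V s t * φ t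

/-- Hypersingular operator `W = −D V₁ D + V₂`. -/
def Wop (V1 V2 : ℝ → ℝ → ℂ) (φ : ℝ → ℂ) (s : ℝ) : ℂ :=
  -deriv (Vop V1 (deriv φ)) s + Vop V2 φ s

/-- Nyström matrix entries `W^ε_{ij}`. -/
def Wmat (V1 V2 : ℝ → ℝ → ℂ) (h ε : ℝ) (i j : ℤ) : ℂ :=
  V1 (sg h ε (i + 1)) (sg h 0 (j + 1)) - V1 (sg h ε i) (sg h 0 (j + 1))
    - V1 (sg h ε (i + 1)) (sg h 0 j) + V1 (sg h ε i) (sg h 0 j)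
    + (h : ℂ) ^ 2 * V2 (tg h ε i) (tg h 0 j)

/-- Fourier coefficient of a 1-periodic function. -/
def fc (u : ℝ → ℂ) (m : ℤ) : ℂ :=
  ∫ t in (0:ℝ)..1, u t * Complex.exp (-(2 * Real.pi * Complex.I * (m : ℂ) * (t : ℂ)))

/-- Periodic Sobolev norm of order `r`. -/
def sobNorm (r : ℝ) (u : ℝ → ℂ) : ℝ :=
  Real.sqrt (‖fc u 0‖ ^ 2 +
    ∑' m : ℤ, if m = 0 then 0 else |(m : ℝ)| ^ (2 * r) * ‖fc u m‖ ^ 2)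

/-- 1-periodic step function on the ε-shifted grid with coefficients `v`. -/
def stepf (N : ℕ) (ε : ℝ) (v : ZMod N → ℂ) (s : ℝ) : ℂ :=
  v ((⌊s * N + 1 / 2 - ε⌋ : ℤ) : ZMod N)

/-- Midpoint quadrature error matrix entries `E^ε_{ij}`. -/
def Emat (V2 : ℝ → ℝ → ℂ) (h ε : ℝ) (i j : ℤ) : ℂ :=
  (∫ s in (sg h ε i)..(sg h ε (i + 1)), ∫ t in (sg h 0 j)..(sg h 0 (j + 1)), V2 s t)
    - (h : ℂ) ^ 2 * V2 (tg h ε i) (tg h 0 j)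

/-- Spectral (ℓ²-operator) norm of a complex `N×N` matrix. -/
def specNorm {N : ℕ} (M : Matrix (Fin N) (Fin N) ℂ) : ℝ :=
  ‖LinearMap.toContinuousLinearMap (Matrix.toEuclideanLin M)‖

/-- The function `C̄₁(t) = −(1/(2πi)) log(4 sin²(πt))`. -/
def Cbar1 (t : ℝ) : ℂ :=
  -(1 / (2 * Real.pi * Complex.I)) * (Real.log (4 * Real.sin (Real.pi * t) ^ 2) : ℂ)

end

/-- The Nyström linear system with data `g = Wφ`:
`Σ_j W^ε_{ij} v_j = h (Wφ)(t_{i+ε})`, `i = 0,…,N−1`. -/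
def Nys (V1 V2 : ℝ → ℝ → ℂ) (ε : ℝ) (N : ℕ) [NeZero N] (φ : ℝ → ℂ)
    (v : ZMod N → ℂ) : Prop :=
  ∀ i : ZMod N,
    (∑ j : ZMod N,
        Wmat V1 V2 (1 / (N : ℝ)) ε ((i.val : ℕ) : ℤ) ((j.val : ℕ) : ℤ) * v j)
      = (1 / (N : ℂ)) * Wop V1 V2 φ (tg (1 / (N : ℝ)) ε ((i.val : ℕ) : ℤ))

namespace Nystrom

open Complex Filter Topology MeasureTheory
open scoped ComplexConjugate

/-! ### Weights and Fourier modes -/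

/-- The weight `⟨n⟩ = 1 + |n|` against which decay and growth in the frequency `n` are measured. -/
noncomputable def bracket (n : ℤ) : ℝ := 1 + |(n : ℝ)|

lemma one_le_bracket (n : ℤ) : 1 ≤ bracket n := le_add_of_nonneg_right (abs_nonneg _)

lemma bracket_pos (n : ℤ) : 0 < bracket n := one_pos.trans_le (one_le_bracket n)

@[simp] lemma bracket_neg (n : ℤ) : bracket (-n) = bracket n := by simp [bracket]

@[simp] lemma bracket_zero : bracket 0 = 1 := by simp [bracket]

lemma abs_le_bracket (n : ℤ) : |(n : ℝ)| ≤ bracket n := le_add_of_nonneg_left zero_le_one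

lemma bracket_add_le (m n : ℤ) : bracket (m + n) ≤ bracket m * bracket n := by
  have := abs_add_le (m : ℝ) n
  simp only [bracket, Int.cast_add]
  nlinarith [mul_nonneg (abs_nonneg (m : ℝ)) (abs_nonneg (n : ℝ))]

lemma bracket_sub_le (m n : ℤ) : bracket (m - n) ≤ bracket m * bracket n := by
  simpa [sub_eq_add_neg] using bracket_add_le m (-n)

lemma bracket_le_bracket_sub_mul (m n : ℤ) : bracket m ≤ bracket (m - n) * bracket n := by
  simpa using bracket_add_le (m - n) n

lemma bracket_le_of_abs_le {m n : ℤ} (h : |m| ≤ |n|) : bracket m ≤ bracket n :=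
  add_le_add_right (by exact_mod_cast h) 1

lemma bracket_le_two_mul_abs {n : ℤ} (h : n ≠ 0) : bracket n ≤ 2 * |(n : ℝ)| := by
  have : (1 : ℝ) ≤ |(n : ℝ)| := by exact_mod_cast Int.one_le_abs h
  unfold bracket
  linarith

lemma summable_inv_bracket_sq : Summable fun n : ℤ => (bracket n ^ 2)⁻¹ := by
  have hsq : Summable fun n : ℤ => 1 / |(n : ℝ)| ^ 2 := by
    simpa using (Real.summable_one_div_int_pow (p := 2)).2 one_lt_two
  refine hsq.of_norm_bounded_eventually ?_
  filter_upwards [(Set.finite_singleton (0 : ℤ)).compl_mem_cofinite] with n hn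
  have : 0 < |(n : ℝ)| := abs_pos.2 (Int.cast_ne_zero.2 hn)
  rw [Real.norm_of_nonneg (by positivity), one_div]
  gcongr
  exact abs_le_bracket n

lemma summable_of_norm_le_inv_bracket_sq {f : ℤ → ℂ} {D : ℝ}
    (h : ∀ n, ‖f n‖ ≤ D * (bracket n ^ 2)⁻¹) : Summable f :=
  .of_norm_bounded (summable_inv_bracket_sq.mul_left D) h

/-- The Fourier mode `t ↦ exp(2πint)`, as a function on the real line. -/
noncomputable def mode (n : ℤ) (t : ℝ) : ℂ := fourier n (t : UnitAddCircle)

lemma mode_eq_exp (n : ℤ) (t : ℝ) : mode n t = Complex.exp (2 * Real.pi * I * n * t) := by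
  simp [mode]

lemma mode_one_eq_exp (t : ℝ) : mode 1 t = Complex.exp ((2 * Real.pi * t : ℝ) * I) := by
  rw [mode_eq_exp]
  push_cast
  ring_nf

@[simp] lemma mode_zero_left (t : ℝ) : mode 0 t = 1 := fourier_zero

@[simp] lemma mode_zero_right (n : ℤ) : mode n 0 = 1 := fourier_eval_zero n

lemma mode_add_left (m n : ℤ) (t : ℝ) : mode (m + n) t = mode m t * mode n t := fourier_add

lemma mode_add_right (n : ℤ) (s t : ℝ) : mode n (s + t) = mode n s * mode n t := by
  simp only [mode_eq_exp, ← Complex.exp_add]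
  push_cast
  ring_nf

lemma conj_mode (n : ℤ) (t : ℝ) : conj (mode n t) = mode (-n) t := fourier_neg.symm

lemma mode_neg_left (n : ℤ) (t : ℝ) : mode (-n) t = mode n (-t) := by
  simp only [mode_eq_exp]
  push_cast
  ring_nf

lemma mode_mul_left (m n : ℤ) (t : ℝ) : mode (m * n) t = mode m (n * t) := by
  simp only [mode_eq_exp]
  push_cast
  ring_nf

@[simp] lemma norm_mode (n : ℤ) (t : ℝ) : ‖mode n t‖ = 1 := Circle.norm_coe _

lemma mode_natCast_mul (j : ℕ) (n : ℤ) (t : ℝ) : mode (j * n) t = mode n t ^ j := by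
  rw [mode_eq_exp, mode_eq_exp, ← Complex.exp_nat_mul]
  push_cast
  ring_nf

lemma mode_intCast (n m : ℤ) : mode n m = 1 := by
  rw [mode_eq_exp, Complex.exp_eq_one_iff]
  exact ⟨n * m, by push_cast; ring⟩

lemma mode_add_intCast (n : ℤ) (t : ℝ) (m : ℤ) : mode n (t + m) = mode n t := by
  rw [mode_add_right, mode_intCast, mul_one]

lemma mode_periodic (n : ℤ) : Function.Periodic (mode n) 1 := fun t => by
  simpa using mode_add_intCast n t 1

lemma mode_sub_right (n : ℤ) (s t : ℝ) : mode n (s - t) = mode n s * mode (-n) t := by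
  rw [sub_eq_add_neg, mode_add_right, mode_neg_left]

lemma mode_eq_one_iff {n : ℤ} {t : ℝ} : mode n t = 1 ↔ ∃ m : ℤ, n * t = m := by
  rw [mode_eq_exp, Complex.exp_eq_one_iff]
  refine exists_congr fun m => ?_
  rw [show (2 * Real.pi * I * n * t : ℂ) = (n * t : ℝ) * (2 * Real.pi * I) by push_cast; ring,
    mul_left_inj' Complex.two_pi_I_ne_zero]
  exact_mod_cast Iff.rfl

@[fun_prop] lemma continuous_mode (n : ℤ) : Continuous (mode n) := by
  unfold mode
  fun_prop

lemma hasDerivAt_mode (n : ℤ) (t : ℝ) :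
    HasDerivAt (mode n) (2 * Real.pi * I * n * mode n t) t :=
  (hasDerivAt_fourier 1 n t).congr_deriv (by simp [mode])

lemma fc_eq_integral_mode (u : ℝ → ℂ) (m : ℤ) :
    fc u m = ∫ t in (0 : ℝ)..1, u t * mode (-m) t := by
  simp only [fc, mode_eq_exp]
  push_cast
  ring_nf

lemma integral_mode (n : ℤ) : ∫ t in (0 : ℝ)..1, mode n t = if n = 0 then 1 else 0 := by
  have h := congrFun (fourierCoeff_fourier (T := 1) n) 0
  rw [fourierCoeff_eq_intervalIntegral _ 0 0] at h
  simpa [mode, Pi.single_apply, eq_comm] using h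

/-! ### Discrete Fourier coefficients on a shifted grid -/

/-- The `q`-th discrete Fourier coefficient of `f`, sampled on the shifted grid `(j + ε)/N`,
`0 ≤ j < N`. -/
noncomputable def gridCoeff (N : ℕ) (ε : ℝ) (f : ℝ → ℂ) (q : ℤ) : ℂ :=
  (N : ℂ)⁻¹ * ∑ j ∈ Finset.range N, f ((j + ε) / N) * mode (-q) ((j + ε) / N)

section Grid

variable (N : ℕ) [NeZero N] (ε : ℝ)

lemma mode_add_mul_grid (q p j : ℤ) :
    mode (q + p * N) ((j + ε) / N) = mode q ((j + ε) / N) * mode p ε := by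
  have hN : (N : ℝ) ≠ 0 := NeZero.ne _
  rw [mode_add_left, ← Int.cast_natCast (R := ℝ) N, mode_mul_left, Int.cast_natCast,
    mul_div_cancel₀ _ hN, add_comm (j : ℝ) ε, mode_add_intCast]

lemma mode_one_grid_pow (j : ℕ) : mode 1 ((j + ε) / N) ^ N = mode 1 ε := by
  simpa [← mode_natCast_mul] using mode_add_mul_grid N ε 0 1 j

lemma mode_one_grid_ne_one {ε : ℝ} (hε : mode 1 ε ≠ 1) (j : ℕ) : mode 1 ((j + ε) / N) ≠ 1 :=
  fun h => hε (by rw [← mode_one_grid_pow N ε j, h, one_pow])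

lemma sum_mode_grid (q : ℤ) :
    ∑ j ∈ Finset.range N, mode q ((j + ε) / N) =
      if (N : ℤ) ∣ q then N * mode q (ε / N) else 0 := by
  have hN : (N : ℝ) ≠ 0 := NeZero.ne _
  have hroot : mode q (1 / N) = 1 ↔ (N : ℤ) ∣ q := by
    rw [mode_eq_one_iff]
    refine exists_congr fun m => ?_
    rw [mul_one_div, div_eq_iff hN, mul_comm (N : ℤ)]
    exact_mod_cast Iff.rfl
  have hpow : mode q (1 / N) ^ N = 1 := by
    rw [← mode_natCast_mul, mul_comm, mode_mul_left, Int.cast_natCast, mul_one_div_cancel hN]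
    simpa using mode_intCast q 1
  have hgeom (j : ℕ) : mode q ((j + ε) / N) = mode q (ε / N) * mode q (1 / N) ^ j := by
    rw [← mode_natCast_mul, mul_comm (j : ℤ), mode_mul_left, ← mode_add_right]
    congr 1
    push_cast
    ring
  simp_rw [hgeom, ← Finset.mul_sum]
  split_ifs with hq
  · rw [hroot.2 hq]
    simp [mul_comm]
  · rw [geom_sum_eq (mt hroot.1 hq), hpow, sub_self, zero_div, mul_zero]

lemma gridCoeff_mode (m q : ℤ) :
    gridCoeff N ε (mode m) q = if (N : ℤ) ∣ m - q then mode (m - q) (ε / N) else 0 := by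
  have hN : (N : ℂ) ≠ 0 := NeZero.ne _
  simp only [gridCoeff, ← mode_add_left, ← sub_eq_add_neg, sum_mode_grid]
  split_ifs <;> simp [hN]

lemma gridCoeff_mode_of_abs_lt {m q : ℤ} (h : |m - q| < N) :
    gridCoeff N ε (mode m) q = if m = q then 1 else 0 := by
  rw [gridCoeff_mode]
  split_ifs with hdvd heq heq
  · simp [heq]
  · exact absurd (sub_eq_zero.1 (Int.eq_zero_of_abs_lt_dvd hdvd h)) heq
  · exact absurd (by simp [heq]) hdvd
  · rfl

lemma gridCoeff_add_mul (f : ℝ → ℂ) (q p : ℤ) :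
    gridCoeff N ε f (q + p * N) = mode (-p) ε * gridCoeff N ε f q := by
  have hshift (j : ℕ) :
      mode (-(q + p * N)) ((j + ε) / N) = mode (-q) ((j + ε) / N) * mode (-p) ε := by
    rw [neg_add, ← neg_mul]
    exact mode_add_mul_grid N ε (-q) (-p) j
  simp only [gridCoeff, hshift, Finset.mul_sum]
  exact Finset.sum_congr rfl fun j _ => by ring

end Grid

lemma gridCoeff_congr {N : ℕ} {ε : ℝ} {f g : ℝ → ℂ}
    (h : ∀ j : ℕ, f ((j + ε) / N) = g ((j + ε) / N)) (q : ℤ) :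
    gridCoeff N ε f q = gridCoeff N ε g q := by
  simp only [gridCoeff, h]

lemma gridCoeff_add (N : ℕ) (ε : ℝ) (f g : ℝ → ℂ) (q : ℤ) :
    gridCoeff N ε (fun t => f t + g t) q = gridCoeff N ε f q + gridCoeff N ε g q := by
  simp only [gridCoeff, add_mul, Finset.sum_add_distrib, mul_add]

lemma gridCoeff_sum (N : ℕ) (ε : ℝ) {ι : Type*} (s : Finset ι) (a : ι → ℂ) (f : ι → ℝ → ℂ)
    (q : ℤ) :
    gridCoeff N ε (fun t => ∑ k ∈ s, a k * f k t) q = ∑ k ∈ s, a k * gridCoeff N ε (f k) q := by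
  simp only [gridCoeff, Finset.sum_mul, Finset.mul_sum]
  rw [Finset.sum_comm]
  exact Finset.sum_congr rfl fun k _ => Finset.sum_congr rfl fun j _ => by ring

lemma gridCoeff_conj (N : ℕ) (ε : ℝ) (f : ℝ → ℂ) (q : ℤ) :
    gridCoeff N ε (fun t => conj (f t)) q = conj (gridCoeff N ε f (-q)) := by
  simp [gridCoeff, conj_mode]

/-! ### Aliasing of the logarithm -/

/-- The 1-periodic logarithm `log (4 sin² πt)`. -/
noncomputable def logSinSq (t : ℝ) : ℝ := Real.log (4 * Real.sin (Real.pi * t) ^ 2)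

/-- The Fourier coefficients of `logSinSq`, namely `-1/|q|` for `q ≠ 0`; the coefficient `0` at
`q = 0` is encoded by `0⁻¹ = 0`. -/
noncomputable def logCoeff (q : ℤ) : ℂ := -(|(q : ℝ)|⁻¹ : ℝ)

/-- The discrete Fourier coefficients of `logSinSq` on the shifted grid. -/
noncomputable def gridLogCoeff (N : ℕ) (ε : ℝ) (q : ℤ) : ℂ :=
  gridCoeff N ε (fun t => (logSinSq t : ℂ)) q

/-- The discrete Fourier coefficients of the constant function `1` on the shifted grid. -/
noncomputable def gridOneCoeff (N : ℕ) (ε : ℝ) (q : ℤ) : ℂ := gridCoeff N ε (mode 0) q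

/-- The integral `∫₀¹ z r^{k-1}/(1 - r^N z) dr`, for `k ≥ 1` the sum of the geometrically
expanded tail `∑ₚ z^{p+1}/(k + pN)` of the aliases of `1/q`. -/
noncomputable def aliasIntegral (z : ℂ) (N k : ℕ) : ℂ :=
  ∫ r in (0 : ℝ)..1, z * (r : ℂ) ^ (k - 1) / (1 - (r : ℂ) ^ N * z)

section UnitCircle

variable {z : ℂ} (hz : ‖z‖ = 1)

include hz

lemma one_sub_mem_slitPlane (hz1 : z ≠ 1) : 1 - z ∈ slitPlane := by
  refine Or.inl ?_
  have hle : z.re ≤ 1 := hz ▸ z.re_le_norm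
  have hne : z.re ≠ 1 := fun hre => hz1 <| by
    have him : z.im = 0 := by
      have := Complex.sq_norm z
      rw [hz, normSq_apply, hre] at this
      nlinarith
    exact Complex.ext hre him
  simpa using lt_of_le_of_ne hle hne

lemma one_sub_ofReal_mul_ne_zero (hz1 : z ≠ 1) {r : ℝ} (hr : r ∈ Set.Icc (0 : ℝ) 1) :
    1 - (r : ℂ) * z ≠ 0 := by
  intro h
  have hrz : (r : ℂ) * z = 1 := (sub_eq_zero.1 h).symm
  have hr1 : r = 1 := by
    simpa [hz, abs_of_nonneg hr.1] using congrArg norm hrz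
  exact hz1 (by simpa [hr1] using hrz)

lemma one_sub_pow_mul_ne_zero (hz1 : z ≠ 1) (N : ℕ) {r : ℝ} (hr : r ∈ Set.Icc (0 : ℝ) 1) :
    1 - (r : ℂ) ^ N * z ≠ 0 := by
  simpa using one_sub_ofReal_mul_ne_zero hz hz1 (r := r ^ N)
    ⟨pow_nonneg hr.1 _, pow_le_one₀ hr.1 hr.2⟩

lemma continuousOn_geom_div (hz1 : z ≠ 1) :
    ContinuousOn (fun r : ℝ => z / (1 - r * z)) (Set.Icc 0 1) :=
  .div (by fun_prop) (by fun_prop) fun _ => one_sub_ofReal_mul_ne_zero hz hz1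

lemma intervalIntegrable_aliasIntegrand (hz1 : z ≠ 1) (N k : ℕ) :
    IntervalIntegrable (fun r : ℝ => z * (r : ℂ) ^ (k - 1) / (1 - (r : ℂ) ^ N * z)) volume 0 1 :=
  ContinuousOn.intervalIntegrable_of_Icc zero_le_one <|
    .div (by fun_prop) (by fun_prop) fun _ => one_sub_pow_mul_ne_zero hz hz1 N

lemma log_one_sub_eq_integral (hz1 : z ≠ 1) :
    log (1 - z) = -∫ r in (0 : ℝ)..1, z / (1 - r * z) := by
  have hmem := one_sub_mem_slitPlane hz hz1
  rw [← neg_eq_iff_eq_neg, ← log_inv _ (slitPlane_arg_ne_pi hmem), log_inv_eq_integral hmem,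
    ← intervalIntegral.integral_const_mul]
  simp only [real_smul, div_eq_mul_inv]

end UnitCircle

lemma logSinSq_eq_log_add_conj (t : ℝ) :
    (logSinSq t : ℂ) = log (1 - mode 1 t) + conj (log (1 - mode 1 t)) := by
  have hnorm : ‖1 - mode 1 t‖ ^ 2 = 4 * Real.sin (Real.pi * t) ^ 2 := by
    rw [norm_sub_rev, mode_one_eq_exp, mul_comm _ I, norm_exp_I_mul_ofReal_sub_one,
      Real.norm_eq_abs, sq_abs, show 2 * Real.pi * t / 2 = Real.pi * t by ring]
    ring
  rw [add_conj, log_re, logSinSq, ← hnorm, Real.log_pow]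
  norm_num

section Aliasing

variable {ε : ℝ} (hε : mode 1 ε ≠ 1) (N : ℕ) [NeZero N]

include hε

lemma gridCoeff_log_one_sub_mode (q : ℤ) :
    gridCoeff N ε (fun t => log (1 - mode 1 t)) q =
      -∫ r in (0 : ℝ)..1, gridCoeff N ε (fun t => mode 1 t / (1 - r * mode 1 t)) q := by
  have hint (j : ℕ) : IntervalIntegrable (fun r : ℝ => mode 1 ((j + ε) / N) /
      (1 - r * mode 1 ((j + ε) / N)) * mode (-q) ((j + ε) / N)) volume 0 1 :=
    ((continuousOn_geom_div (norm_mode _ _) (mode_one_grid_ne_one N hε j)).mul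
      continuousOn_const).intervalIntegrable_of_Icc zero_le_one
  rw [gridCoeff_congr (g := fun t => -∫ r in (0 : ℝ)..1, mode 1 t / (1 - r * mode 1 t))
    fun j => log_one_sub_eq_integral (norm_mode _ _) (mode_one_grid_ne_one N hε j)]
  simp only [gridCoeff, intervalIntegral.integral_const_mul]
  rw [intervalIntegral.integral_finsetSum fun j _ => hint j]
  simp [intervalIntegral.integral_mul_const]

lemma gridCoeff_geom_div {r : ℝ} (hr : r ∈ Set.Icc (0 : ℝ) 1) {q : ℕ} (hq : q < N) :
    gridCoeff N ε (fun t => mode 1 t / (1 - r * mode 1 t)) (q + 1) =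
      (r : ℂ) ^ q / (1 - (r : ℂ) ^ N * mode 1 ε) := by
  have hd := one_sub_pow_mul_ne_zero (norm_mode 1 ε) hε N hr
  -- On the grid `mode 1` is an `N`-th root of `mode 1 ε`, so the geometric series closes up.
  have hgeom (j : ℕ) : mode 1 ((j + ε) / N) / (1 - r * mode 1 ((j + ε) / N)) =
      ∑ k ∈ Finset.range N, ((r : ℂ) ^ k / (1 - (r : ℂ) ^ N * mode 1 ε)) *
        mode ((k : ℤ) + 1) ((j + ε) / N) := by
    have hw := one_sub_ofReal_mul_ne_zero (norm_mode 1 ((j + ε) / N))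
      (mode_one_grid_ne_one N hε j) hr
    have hsum := geom_sum_mul_neg (r * mode 1 ((j + ε) / N)) N
    rw [mul_pow, mode_one_grid_pow] at hsum
    calc mode 1 ((j + ε) / N) / (1 - r * mode 1 ((j + ε) / N))
        = (∑ k ∈ Finset.range N, (r * mode 1 ((j + ε) / N)) ^ k) *
            (mode 1 ((j + ε) / N) / (1 - (r : ℂ) ^ N * mode 1 ε)) := by
          rw [← mul_div_assoc, div_eq_div_iff hw hd]
          linear_combination (-mode 1 ((j + ε) / N)) * hsum
      _ = _ := by
          rw [Finset.sum_mul]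
          refine Finset.sum_congr rfl fun k _ => ?_
          rw [mode_add_left, ← mul_one (k : ℤ), mode_natCast_mul, mul_pow]
          ring
  have hmode {k : ℕ} (hk : k ∈ Finset.range N) :
      gridCoeff N ε (mode ((k : ℤ) + 1)) (q + 1) = if k = q then 1 else 0 := by
    rw [gridCoeff_mode_of_abs_lt]
    · simp
    · rw [abs_lt]
      have := Finset.mem_range.1 hk
      omega
  rw [gridCoeff_congr (g := fun t => ∑ k ∈ Finset.range N,
    ((r : ℂ) ^ k / (1 - (r : ℂ) ^ N * mode 1 ε)) * mode ((k : ℤ) + 1) t) hgeom, gridCoeff_sum,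
    Finset.sum_congr rfl fun k hk => by rw [hmode hk]]
  simp [hq]

lemma gridCoeff_log_neg {q : ℕ} (hq : q < N) :
    gridCoeff N ε (fun t => log (1 - mode 1 t)) (-q) = -aliasIntegral (mode 1 ε) N (N - q) := by
  rw [gridCoeff_log_one_sub_mode hε, aliasIntegral]
  congr 1
  refine intervalIntegral.integral_congr fun r hr => ?_
  rw [Set.uIcc_of_le zero_le_one] at hr
  have hindex : -(q : ℤ) = ((N - q - 1 : ℕ) + 1) + (-1 : ℤ) * N := by omega
  rw [hindex, gridCoeff_add_mul, gridCoeff_geom_div hε N hr (by omega), neg_neg, mul_div_assoc]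

lemma gridCoeff_log_pos {q : ℕ} (hq : q < N) :
    gridCoeff N ε (fun t => log (1 - mode 1 t)) q =
      logCoeff q - aliasIntegral (mode 1 ε) N (N + q) := by
  rcases q with _ | q
  · simpa [logCoeff] using gridCoeff_log_neg hε N hq
  have hlog : logCoeff (q + 1 : ℕ) = -∫ r in (0 : ℝ)..1, (r : ℂ) ^ q := by
    rw [show (fun r : ℝ => (r : ℂ) ^ q) = fun r => ((r ^ q : ℝ) : ℂ) by simp,
      intervalIntegral.integral_ofReal, integral_pow]
    simp [logCoeff, abs_of_nonneg (by positivity : (0 : ℝ) ≤ q + 1)]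
  rw [gridCoeff_log_one_sub_mode hε, hlog, aliasIntegral, ← neg_add', neg_inj,
    ← intervalIntegral.integral_add (Continuous.intervalIntegrable (by fun_prop) _ _)
      (intervalIntegrable_aliasIntegrand (norm_mode 1 ε) hε N _)]
  refine intervalIntegral.integral_congr fun r hr => ?_
  rw [Set.uIcc_of_le zero_le_one] at hr
  have hd := one_sub_pow_mul_ne_zero (norm_mode 1 ε) hε N hr
  simp only [Nat.cast_add, Nat.cast_one, gridCoeff_geom_div hε N hr (Nat.lt_of_succ_lt hq),
    ← add_assoc, Nat.add_sub_cancel, pow_add]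
  field_simp
  ring

theorem gridLogCoeff_eq {q : ℤ} (hq : |q| < N) :
    gridLogCoeff N ε q = logCoeff q - aliasIntegral (mode 1 ε) N (N + q).toNat -
      conj (aliasIntegral (mode 1 ε) N (N - q).toNat) := by
  have hsplit : gridLogCoeff N ε q = gridCoeff N ε (fun t => log (1 - mode 1 t)) q +
      conj (gridCoeff N ε (fun t => log (1 - mode 1 t)) (-q)) := by
    simp only [gridLogCoeff, logSinSq_eq_log_add_conj]
    rw [gridCoeff_add, gridCoeff_conj]
  have hconj : conj (logCoeff q) = logCoeff q := by simp [logCoeff]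
  obtain ⟨n, rfl | rfl⟩ := q.eq_nat_or_neg <;> have hn : n < N := by simpa using hq
  · rw [hsplit, gridCoeff_log_pos hε N hn, gridCoeff_log_neg hε N hn, map_neg, ← sub_eq_add_neg,
      show ((N : ℤ) + n).toNat = N + n by omega, show ((N : ℤ) - n).toNat = N - n by omega]
  · have hneg : logCoeff (-n) = logCoeff n := by simp [logCoeff]
    rw [hneg] at hconj ⊢
    rw [hsplit, gridCoeff_log_neg hε N hn, neg_neg, gridCoeff_log_pos hε N hn, map_sub, hconj,
      show ((N : ℤ) + -n).toNat = N - n by omega, show ((N : ℤ) - -n).toNat = N + n by omega]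
    ring

end Aliasing

/-! ### Bounds for the aliasing terms -/

section AliasIntegral

lemma im_mul_div_one_sub (z : ℂ) (x ρ : ℝ) :
    (z * x / (1 - ρ * z)).im = z.im * (x / normSq (1 - ρ * z)) := by
  simp only [div_im, mul_im, mul_re, ofReal_re, ofReal_im, sub_re, sub_im, one_re, one_im]
  ring

lemma integral_pow_pred {k : ℕ} (hk : 0 < k) : ∫ r in (0 : ℝ)..1, r ^ (k - 1) = 1 / k := by
  rw [integral_pow, Nat.sub_add_cancel hk, one_pow, zero_pow hk.ne', sub_zero, Nat.cast_pred hk,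
    sub_add_cancel]

lemma integral_pow_pred_sub {k k' : ℕ} (hk : 0 < k) (hk' : 0 < k') :
    ∫ r in (0 : ℝ)..1, (r ^ (k - 1) - r ^ (k' - 1)) = 1 / k - 1 / k' := by
  rw [intervalIntegral.integral_sub (Continuous.intervalIntegrable (by fun_prop) _ _)
    (Continuous.intervalIntegrable (by fun_prop) _ _), integral_pow_pred hk, integral_pow_pred hk']

variable {z : ℂ} (hz : ‖z‖ = 1)

include hz

lemma abs_im_le_norm_one_sub (ρ : ℝ) : |z.im| ≤ ‖1 - ρ * z‖ := by
  have hconj : z * conj z = 1 := by rw [mul_conj, normSq_eq_norm_sq, hz]; simp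
  have hfactor : 1 - ρ * z = z * (conj z - ρ) := by linear_combination -hconj
  rw [hfactor, norm_mul, hz, one_mul]
  simpa using abs_im_le_norm (conj z - ρ)

lemma normSq_one_sub_le {ρ : ℝ} (hρ : ρ ∈ Set.Icc (0 : ℝ) 1) : normSq (1 - ρ * z) ≤ 4 := by
  have hle : ‖1 - ρ * z‖ ≤ 2 := by
    refine (norm_sub_le _ _).trans ?_
    rw [norm_mul, hz, norm_one, norm_real, Real.norm_of_nonneg hρ.1]
    linarith [hρ.2]
  rw [normSq_eq_norm_sq]
  nlinarith [norm_nonneg (1 - ρ * z)]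

section Weighted

variable (hz0 : 0 < |z.im|) (N : ℕ) {f : ℝ → ℝ} (hf : Continuous f)
  (hf0 : ∀ r ∈ Set.Icc (0 : ℝ) 1, 0 ≤ f r)

include hz0 hf hf0

lemma norm_integral_div_one_sub_le :
    ‖∫ r in (0 : ℝ)..1, z * f r / (1 - (r : ℂ) ^ N * z)‖ ≤
      |z.im|⁻¹ * ∫ r in (0 : ℝ)..1, f r := by
  rw [← intervalIntegral.integral_const_mul]
  refine intervalIntegral.norm_integral_le_of_norm_le zero_le_one (.of_forall fun r hr => ?_)
    (Continuous.intervalIntegrable (by fun_prop) _ _)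
  have hle := abs_im_le_norm_one_sub hz (r ^ N)
  have hfr := hf0 r ⟨hr.1.le, hr.2⟩
  rw [ofReal_pow] at hle
  rw [norm_div, norm_mul, hz, one_mul, norm_real, Real.norm_of_nonneg hfr, ← div_eq_inv_mul]
  gcongr

lemma abs_im_integral_div_one_sub_ge :
    |z.im| / 4 * ∫ r in (0 : ℝ)..1, f r ≤
      |(∫ r in (0 : ℝ)..1, z * f r / (1 - (r : ℂ) ^ N * z)).im| := by
  have hne {r : ℝ} (hr : r ∈ Set.Icc (0 : ℝ) 1) : 1 - (r : ℂ) ^ N * z ≠ 0 :=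
    one_sub_pow_mul_ne_zero hz (by rintro rfl; simp at hz0) N hr
  have hint : IntervalIntegrable (fun r : ℝ => z * f r / (1 - (r : ℂ) ^ N * z)) volume 0 1 :=
    ContinuousOn.intervalIntegrable_of_Icc zero_le_one <|
      .div (by fun_prop) (by fun_prop) fun _ => hne
  have him : (∫ r in (0 : ℝ)..1, z * f r / (1 - (r : ℂ) ^ N * z)).im =
      z.im * ∫ r in (0 : ℝ)..1, f r / normSq (1 - (r : ℂ) ^ N * z) := by
    rw [← imCLM_apply, ← imCLM.intervalIntegral_comp_comm hint,
      ← intervalIntegral.integral_const_mul]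
    simp only [imCLM_apply, ← ofReal_pow, im_mul_div_one_sub]
  rw [him, abs_mul, div_mul_eq_mul_div, mul_div_assoc, ← intervalIntegral.integral_div]
  gcongr
  refine (intervalIntegral.integral_mono_on zero_le_one
    (Continuous.intervalIntegrable (by fun_prop) _ _) ?_ fun r hr => ?_).trans (le_abs_self _)
  · refine ContinuousOn.intervalIntegrable_of_Icc zero_le_one (.div (by fun_prop) ?_ ?_)
    · exact (continuous_normSq.comp (by fun_prop)).continuousOn
    · exact fun r hr => normSq_eq_zero.not.2 (hne hr)
  · have hle := normSq_one_sub_le hz ⟨pow_nonneg hr.1 N, pow_le_one₀ hr.1 hr.2⟩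
    rw [ofReal_pow] at hle
    exact div_le_div_of_nonneg_left (hf0 r hr) (normSq_pos.2 (hne hr)) hle

end Weighted

section Differences

variable (hz0 : 0 < |z.im|) (N : ℕ)

include hz0

lemma norm_aliasIntegral_le {k : ℕ} (hk : 0 < k) :
    ‖aliasIntegral z N k‖ ≤ |z.im|⁻¹ * (1 / k) := by
  simpa [aliasIntegral, integral_pow_pred hk] using norm_integral_div_one_sub_le hz hz0 N
    (continuous_pow (k - 1)) fun r hr => pow_nonneg hr.1 _

lemma aliasIntegral_sub (k k' : ℕ) :
    aliasIntegral z N k - aliasIntegral z N k' =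
      ∫ r in (0 : ℝ)..1, z * (r ^ (k - 1) - r ^ (k' - 1) : ℝ) / (1 - (r : ℂ) ^ N * z) := by
  have hz1 : z ≠ 1 := by rintro rfl; simp at hz0
  rw [aliasIntegral, aliasIntegral,
    ← intervalIntegral.integral_sub (intervalIntegrable_aliasIntegrand hz hz1 N k)
      (intervalIntegrable_aliasIntegrand hz hz1 N k')]
  congr 1
  ext r
  push_cast
  ring

lemma norm_aliasIntegral_sub_le {k k' : ℕ} (hk : 0 < k) (hk' : 0 < k') :
    ‖aliasIntegral z N k - aliasIntegral z N k'‖ ≤ |z.im|⁻¹ * |1 / (k : ℝ) - 1 / k'| := by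
  wlog hkk : k ≤ k' generalizing k k'
  · rw [norm_sub_rev, abs_sub_comm]
    exact this hk' hk (by omega)
  rw [aliasIntegral_sub hz hz0, ← integral_pow_pred_sub hk hk']
  refine (norm_integral_div_one_sub_le hz hz0 N (by fun_prop) fun r hr => ?_).trans
    (mul_le_mul_of_nonneg_left (le_abs_self _) (by positivity))
  exact sub_nonneg.2 (pow_le_pow_of_le_one hr.1 hr.2 (by omega))

lemma abs_im_aliasIntegral_sub_ge {k k' : ℕ} (hk : 0 < k) (hk' : 0 < k') :
    |z.im| / 4 * |1 / (k : ℝ) - 1 / k'| ≤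
      |(aliasIntegral z N k).im - (aliasIntegral z N k').im| := by
  wlog hkk : k ≤ k' generalizing k k'
  · rw [abs_sub_comm, abs_sub_comm (aliasIntegral z N k).im]
    exact this hk' hk (by omega)
  have hinv : 0 ≤ 1 / (k : ℝ) - 1 / k' := sub_nonneg.2 (by gcongr)
  rw [← sub_im, aliasIntegral_sub hz hz0, abs_of_nonneg hinv, ← integral_pow_pred_sub hk hk']
  exact abs_im_integral_div_one_sub_ge hz hz0 N (by fun_prop) fun r hr =>
    sub_nonneg.2 (pow_le_pow_of_le_one hr.1 hr.2 (by omega))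

end Differences

end AliasIntegral

/-! ### Uniform bounds for the sampled logarithm -/

lemma norm_logCoeff (q : ℤ) : ‖logCoeff q‖ = |(q : ℝ)|⁻¹ := by simp [logCoeff]

lemma norm_logCoeff_le_one (q : ℤ) : ‖logCoeff q‖ ≤ 1 := by
  rw [norm_logCoeff]
  rcases eq_or_ne q 0 with rfl | hq
  · simp
  · exact inv_le_one_of_one_le₀ (by exact_mod_cast Int.one_le_abs hq)

lemma norm_logCoeff_le (q : ℤ) : ‖logCoeff q‖ ≤ 2 / bracket q := by
  rw [norm_logCoeff]
  rcases eq_or_ne q 0 with rfl | hq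
  · simp
  · rw [inv_eq_one_div, div_le_div_iff₀ (by simpa using hq) (bracket_pos q), one_mul]
    exact bracket_le_two_mul_abs hq

lemma norm_logCoeff_sub_le (m n : ℤ) :
    ‖logCoeff m - logCoeff n‖ ≤ 4 * bracket (m - n) / (bracket m * bracket n) := by
  have hb := bracket_pos m
  have hb' := bracket_pos n
  have hbs := bracket_pos (m - n)
  rcases eq_or_ne m 0 with rfl | hm
  · have h := norm_logCoeff_le n
    simp only [logCoeff, Int.cast_zero, abs_zero, inv_zero, ofReal_zero, neg_zero, zero_sub,
      norm_neg, bracket_neg, bracket_zero, one_mul] at h ⊢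
    refine h.trans ?_
    gcongr
    linarith [one_le_bracket n]
  rcases eq_or_ne n 0 with rfl | hn
  · have h := norm_logCoeff_le m
    simp only [logCoeff, Int.cast_zero, abs_zero, inv_zero, ofReal_zero, neg_zero, sub_zero,
      bracket_zero, mul_one] at h ⊢
    refine h.trans ?_
    gcongr
    linarith [one_le_bracket m]
  have ham : 0 < |(m : ℝ)| := by simpa using hm
  have han : 0 < |(n : ℝ)| := by simpa using hn
  have hnum : |(|(n : ℝ)| - |(m : ℝ)|)| ≤ bracket (m - n) :=
    (abs_abs_sub_abs_le _ _).trans <| by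
      rw [abs_sub_comm, ← Int.cast_sub]
      exact abs_le_bracket _
  calc ‖logCoeff m - logCoeff n‖
      = |(|(n : ℝ)| - |(m : ℝ)|)| / (|(m : ℝ)| * |(n : ℝ)|) := by
        rw [logCoeff, logCoeff, neg_sub_neg, ← ofReal_sub, norm_real, Real.norm_eq_abs,
          inv_sub_inv han.ne' ham.ne', abs_div, abs_mul, abs_abs, abs_abs, abs_sub_comm,
          mul_comm |(n : ℝ)|]
    _ = 4 * |(|(n : ℝ)| - |(m : ℝ)|)| / ((2 * |(m : ℝ)|) * (2 * |(n : ℝ)|)) := by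
        field_simp
        norm_num
    _ ≤ 4 * bracket (m - n) / (bracket m * bracket n) := by
        gcongr
        exacts [bracket_le_two_mul_abs hm, bracket_le_two_mul_abs hn]

lemma norm_logCoeff_sub_left_le (n l : ℤ) : ‖logCoeff (n - l)‖ ≤ 2 * bracket l / bracket n := by
  refine (norm_logCoeff_le _).trans ?_
  rw [div_le_div_iff₀ (bracket_pos _) (bracket_pos _)]
  linarith [bracket_le_bracket_sub_mul n l]

lemma norm_logCoeff_shift_sub_le (n l : ℤ) :
    ‖logCoeff (n - l) - logCoeff n‖ ≤ 4 * bracket l ^ 2 / bracket n ^ 2 := by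
  have hn := bracket_pos n
  have hl := bracket_pos l
  refine (norm_logCoeff_sub_le (n - l) n).trans ?_
  rw [sub_sub_cancel_left, bracket_neg,
    div_le_div_iff₀ (mul_pos (bracket_pos _) hn) (by positivity)]
  calc 4 * bracket l * bracket n ^ 2 = 4 * bracket l * bracket n * bracket n := by ring
    _ ≤ 4 * bracket l * bracket n * (bracket (n - l) * bracket l) := by
        gcongr
        exact bracket_le_bracket_sub_mul n l
    _ = 4 * bracket l ^ 2 * (bracket (n - l) * bracket n) := by ring

/-- The distance `|Im exp(2πiε)| = |sin 2πε|` from `1` to the real line spanned by `exp(2πiε)`; it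
vanishes exactly for `ε ∈ ½ℤ` and quantifies the stability of the shifted grid. -/
noncomputable def shiftGap (ε : ℝ) : ℝ := |(mode 1 ε).im|

lemma shiftGap_pos {ε : ℝ} (hε : ∀ k : ℤ, ε ≠ (k : ℝ) / 2) : 0 < shiftGap ε := by
  rw [shiftGap, abs_pos, mode_one_eq_exp, exp_ofReal_mul_I_im, Ne, Real.sin_eq_zero_iff]
  rintro ⟨k, hk⟩
  refine hε k ?_
  field_simp
  exact mul_right_cancel₀ Real.pi_ne_zero (by linarith)

lemma shiftGap_le_one (ε : ℝ) : shiftGap ε ≤ 1 :=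
  (abs_im_le_norm _).trans_eq (norm_mode 1 ε)

lemma mode_one_ne_one {ε : ℝ} (hε : 0 < shiftGap ε) : mode 1 ε ≠ 1 := fun h => by
  simp [shiftGap, h] at hε

lemma natCast_toNat {k : ℤ} (hk : 0 ≤ k) : ((k.toNat : ℕ) : ℝ) = k := by
  exact_mod_cast Int.toNat_of_nonneg hk

section GridLogCoeff

variable {ε : ℝ} (hε : 0 < shiftGap ε) (N : ℕ) [NeZero N]

omit [NeZero N] in
include hε in
lemma norm_aliasIntegral_le_of_le {k : ℤ} (hN : 0 < N) (hk : N ≤ 4 * k) :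
    ‖aliasIntegral (mode 1 ε) N k.toNat‖ ≤ 4 / shiftGap ε / N := by
  have hk' : (N : ℝ) ≤ 4 * k := by exact_mod_cast hk
  have hk0 : (0 : ℝ) < k := by exact_mod_cast (by omega : 0 < k)
  refine (norm_aliasIntegral_le (norm_mode 1 ε) hε N (by omega)).trans ?_
  rw [natCast_toNat (by omega), ← shiftGap, inv_eq_one_div, one_div_mul_one_div, div_div,
    div_le_div_iff₀ (by positivity) (by positivity)]
  nlinarith

omit [NeZero N] in
include hε in
lemma norm_aliasIntegral_sub_le_of_le {k k' : ℤ} (hN : 0 < N) (hk : N ≤ 4 * k)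
    (hk' : N ≤ 4 * k') :
    ‖aliasIntegral (mode 1 ε) N k.toNat - aliasIntegral (mode 1 ε) N k'.toNat‖ ≤
      16 / shiftGap ε * |((k - k' : ℤ) : ℝ)| / N ^ 2 := by
  have hkr : (N : ℝ) ≤ 4 * k := by exact_mod_cast hk
  have hkr' : (N : ℝ) ≤ 4 * k' := by exact_mod_cast hk'
  have hNr : (0 : ℝ) < N := by exact_mod_cast hN
  have hk0 : (0 : ℝ) < k := by linarith
  have hk0' : (0 : ℝ) < k' := by linarith
  refine (norm_aliasIntegral_sub_le (norm_mode 1 ε) hε N (by omega) (by omega)).trans ?_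
  rw [natCast_toNat (by omega), natCast_toNat (by omega), ← shiftGap, one_div, one_div,
    inv_sub_inv hk0.ne' hk0'.ne', abs_div, abs_of_pos (mul_pos hk0 hk0'), abs_sub_comm,
    ← Int.cast_sub, ← mul_div_assoc, div_le_div_iff₀ (by positivity) (by positivity)]
  calc (shiftGap ε)⁻¹ * |((k - k' : ℤ) : ℝ)| * (N : ℝ) ^ 2
      ≤ (shiftGap ε)⁻¹ * |((k - k' : ℤ) : ℝ)| * ((4 * k) * (4 * k')) := by
        rw [pow_two]
        gcongr
    _ = 16 / shiftGap ε * |((k - k' : ℤ) : ℝ)| * (k * k') := by ring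

lemma gridLogCoeff_shift (q p : ℤ) :
    gridLogCoeff N ε (q + p * N) = mode (-p) ε * gridLogCoeff N ε q :=
  gridCoeff_add_mul N ε _ q p

include hε

lemma gridLogCoeff_sub_logCoeff {q : ℤ} (hq : |q| < N) :
    gridLogCoeff N ε q - logCoeff q = -(aliasIntegral (mode 1 ε) N (N + q).toNat +
      conj (aliasIntegral (mode 1 ε) N (N - q).toNat)) := by
  rw [gridLogCoeff_eq (mode_one_ne_one hε) N hq]
  ring

lemma norm_gridLogCoeff_sub_logCoeff_le {q : ℤ} (hq : 4 * |q| ≤ 3 * N) :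
    ‖gridLogCoeff N ε q - logCoeff q‖ ≤ 8 / shiftGap ε / N := by
  have hN := NeZero.pos N
  obtain ⟨hlo, hhi⟩ := abs_le.1 (le_refl |q|)
  rw [gridLogCoeff_sub_logCoeff hε N (by omega), norm_neg]
  calc _ ≤ 4 / shiftGap ε / N + 4 / shiftGap ε / N := by
        refine (norm_add_le _ _).trans (add_le_add ?_ ?_)
        · exact norm_aliasIntegral_le_of_le hε N hN (by omega)
        · rw [norm_conj]
          exact norm_aliasIntegral_le_of_le hε N hN (by omega)
    _ = 8 / shiftGap ε / N := by ring

lemma norm_gridLogCoeff_sub_logCoeff_sub_le {q q' : ℤ} (hq : 4 * |q| ≤ 3 * N)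
    (hq' : 4 * |q'| ≤ 3 * N) :
    ‖(gridLogCoeff N ε q - logCoeff q) - (gridLogCoeff N ε q' - logCoeff q')‖ ≤
      32 / shiftGap ε * |((q - q' : ℤ) : ℝ)| / N ^ 2 := by
  have hN := NeZero.pos N
  obtain ⟨hlo, hhi⟩ := abs_le.1 (le_refl |q|)
  obtain ⟨hlo', hhi'⟩ := abs_le.1 (le_refl |q'|)
  have hplus := norm_aliasIntegral_sub_le_of_le hε N (k := N + q) (k' := N + q') hN
    (by omega) (by omega)
  have hminus := norm_aliasIntegral_sub_le_of_le hε N (k := N - q) (k' := N - q') hN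
    (by omega) (by omega)
  rw [add_sub_add_left_eq_sub] at hplus
  rw [sub_sub_sub_cancel_left, ← neg_sub q q', Int.cast_neg, abs_neg, ← norm_conj, map_sub]
    at hminus
  rw [gridLogCoeff_sub_logCoeff hε N (by omega), gridLogCoeff_sub_logCoeff hε N (by omega),
    neg_sub_neg, norm_sub_rev, add_sub_add_comm]
  calc _ ≤ _ := (norm_add_le _ _).trans (add_le_add hplus hminus)
    _ = 32 / shiftGap ε * |((q - q' : ℤ) : ℝ)| / N ^ 2 := by ring

omit hε in
lemma exists_eq_add_mul_of_two_mul_abs_le (q : ℤ) : ∃ p r : ℤ, q = r + p * N ∧ 2 * |r| ≤ N := by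
  have hN := NeZero.pos N
  refine ⟨q.bdiv N, q.bmod N, (Int.bmod_add_bdiv' q N).symm, ?_⟩
  have hlo := Int.le_bmod (x := q) hN
  have hhi := Int.bmod_lt (x := q) hN
  rcases abs_cases (q.bmod N) with h | h <;> omega

lemma norm_gridLogCoeff_le (q : ℤ) : ‖gridLogCoeff N ε q‖ ≤ 9 / shiftGap ε := by
  obtain ⟨p, r, rfl, hr⟩ := exists_eq_add_mul_of_two_mul_abs_le N q
  have hN : (1 : ℝ) ≤ N := by exact_mod_cast NeZero.one_le (n := N)
  have hrem := norm_gridLogCoeff_sub_logCoeff_le hε N (q := r) (by omega)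
  have hgap : 1 ≤ 1 / shiftGap ε := (one_le_div hε).2 (shiftGap_le_one ε)
  rw [gridLogCoeff_shift, norm_mul, norm_mode, one_mul]
  calc ‖gridLogCoeff N ε r‖ ≤ ‖gridLogCoeff N ε r - logCoeff r‖ + ‖logCoeff r‖ := by
        simpa using norm_add_le (gridLogCoeff N ε r - logCoeff r) (logCoeff r)
    _ ≤ 8 / shiftGap ε + 1 / shiftGap ε :=
        add_le_add (hrem.trans (div_le_self (by positivity) hN))
          ((norm_logCoeff_le_one r).trans hgap)
    _ = 9 / shiftGap ε := by ring

end GridLogCoeff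

section LowFrequency

variable {N : ℕ} [NeZero N] {n : ℤ} (hn : 2 * |n| ≤ N)

include hn

lemma two_mul_bracket_le : 2 * bracket n ≤ 3 * N := by
  have hN : (1 : ℝ) ≤ N := by exact_mod_cast NeZero.one_le (n := N)
  have : 2 * |(n : ℝ)| ≤ N := by exact_mod_cast hn
  unfold bracket
  linarith

lemma one_div_le_div_bracket : 1 / (N : ℝ) ≤ 3 / 2 / bracket n := by
  have hN : (0 : ℝ) < N := by exact_mod_cast NeZero.pos N
  rw [div_le_div_iff₀ hN (bracket_pos n)]
  linarith [two_mul_bracket_le hn]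

variable {ε : ℝ} (hε : 0 < shiftGap ε)

include hε

lemma norm_gridLogCoeff_shift_sub_logCoeff_le (l : ℤ) :
    ‖gridLogCoeff N ε (n - l) - logCoeff (n - l)‖ ≤ 40 / shiftGap ε * bracket l / N := by
  have hN : (0 : ℝ) < N := by exact_mod_cast NeZero.pos N
  have hbl := one_le_bracket l
  rcases le_or_gt (4 * |l|) N with hl | hl
  · refine (norm_gridLogCoeff_sub_logCoeff_le hε N (by linarith [abs_sub n l])).trans ?_
    rw [div_mul_eq_mul_div]
    gcongr
    linarith
  · have hgap : 1 ≤ 1 / shiftGap ε := (one_le_div hε).2 (shiftGap_le_one ε)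
    have hNl : (N : ℝ) ≤ 4 * bracket l :=
      (by exact_mod_cast hl.le : (N : ℝ) ≤ 4 * |(l : ℝ)|).trans (by gcongr; exact abs_le_bracket l)
    calc _ ≤ ‖gridLogCoeff N ε (n - l)‖ + ‖logCoeff (n - l)‖ := norm_sub_le _ _
      _ ≤ 9 / shiftGap ε + 1 / shiftGap ε :=
          add_le_add (norm_gridLogCoeff_le hε N _) ((norm_logCoeff_le_one _).trans hgap)
      _ = 10 / shiftGap ε * N / N := by field_simp; norm_num
      _ ≤ 10 / shiftGap ε * (4 * bracket l) / N := by gcongr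
      _ = 40 / shiftGap ε * bracket l / N := by ring

lemma norm_gridLogCoeff_shift_sub_le_of_le {l : ℤ} (hl : 4 * |l| ≤ N) :
    ‖gridLogCoeff N ε (n - l) - gridLogCoeff N ε n‖ ≤
      76 / shiftGap ε * bracket l ^ 2 / bracket n ^ 2 := by
  have hb := bracket_pos n
  have hbl := one_le_bracket l
  have hgap : 4 ≤ 4 / shiftGap ε := (le_div_iff₀ hε).2 (by linarith [shiftGap_le_one ε])
  have hrem := norm_gridLogCoeff_sub_logCoeff_sub_le hε N (q := n - l) (q' := n)
    (by linarith [abs_sub n l]) (by omega)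
  rw [sub_sub_cancel_left, Int.cast_neg, abs_neg] at hrem
  calc ‖gridLogCoeff N ε (n - l) - gridLogCoeff N ε n‖
      = ‖((gridLogCoeff N ε (n - l) - logCoeff (n - l)) - (gridLogCoeff N ε n - logCoeff n)) +
          (logCoeff (n - l) - logCoeff n)‖ := by congr 1; ring
    _ ≤ 32 / shiftGap ε * |(l : ℝ)| / N ^ 2 + 4 * bracket l ^ 2 / bracket n ^ 2 :=
        (norm_add_le _ _).trans (add_le_add hrem (norm_logCoeff_shift_sub_le n l))
    _ ≤ 32 / shiftGap ε * bracket l ^ 2 / (2 / 3 * bracket n) ^ 2 +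
          4 / shiftGap ε * bracket l ^ 2 / bracket n ^ 2 := by
        gcongr
        · nlinarith [abs_le_bracket l]
        · linarith [two_mul_bracket_le hn]
    _ = 76 / shiftGap ε * bracket l ^ 2 / bracket n ^ 2 := by ring

lemma norm_gridLogCoeff_shift_sub_le (l : ℤ) :
    ‖gridLogCoeff N ε (n - l) - gridLogCoeff N ε n‖ ≤
      648 / shiftGap ε * bracket l ^ 2 / bracket n ^ 2 := by
  have hb := bracket_pos n
  rcases le_or_gt (4 * |l|) N with hl | hl
  · refine (norm_gridLogCoeff_shift_sub_le_of_le hn hε hl).trans ?_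
    gcongr
    norm_num
  · have hnl : bracket n ≤ 6 * bracket l := by
      have hlr : (N : ℝ) ≤ 4 * |(l : ℝ)| := by exact_mod_cast hl.le
      linarith [two_mul_bracket_le hn, abs_le_bracket l]
    calc _ ≤ ‖gridLogCoeff N ε (n - l)‖ + ‖gridLogCoeff N ε n‖ := norm_sub_le _ _
      _ ≤ 9 / shiftGap ε + 9 / shiftGap ε :=
          add_le_add (norm_gridLogCoeff_le hε N _) (norm_gridLogCoeff_le hε N _)
      _ = 18 / shiftGap ε * bracket n ^ 2 / bracket n ^ 2 := by field_simp; norm_num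
      _ ≤ 18 / shiftGap ε * (6 * bracket l) ^ 2 / bracket n ^ 2 := by gcongr
      _ = 648 / shiftGap ε * bracket l ^ 2 / bracket n ^ 2 := by ring

lemma one_half_le_norm_gridLogCoeff_mul (h0 : n ≠ 0) (hs : 16 * |(n : ℝ)| ≤ shiftGap ε * N) :
    1 / 2 ≤ ‖gridLogCoeff N ε n‖ * |(n : ℝ)| := by
  have ha : 0 < |(n : ℝ)| := by simpa using h0
  have hN : (0 : ℝ) < N := by exact_mod_cast NeZero.pos N
  have hrem := norm_gridLogCoeff_sub_logCoeff_le hε N (q := n) (by omega)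
  have htri := norm_sub_norm_le (logCoeff n) (logCoeff n - gridLogCoeff N ε n)
  rw [sub_sub_cancel, norm_sub_rev (logCoeff n), norm_logCoeff] at htri
  have hsmall : 8 / shiftGap ε / N ≤ |(n : ℝ)|⁻¹ / 2 := by
    rw [div_div, inv_eq_one_div, div_div, div_le_div_iff₀ (by positivity) (by positivity)]
    linarith
  rw [← div_le_iff₀ ha, div_eq_mul_inv]
  linarith

lemma le_norm_gridLogCoeff :
    shiftGap ε / 2 * (|(n : ℝ)| / N ^ 2) ≤ ‖gridLogCoeff N ε n‖ := by
  have hN := NeZero.pos N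
  obtain ⟨hlo, hhi⟩ := abs_le.1 (le_refl |n|)
  have him : (gridLogCoeff N ε n).im = (aliasIntegral (mode 1 ε) N (N - n).toNat).im -
      (aliasIntegral (mode 1 ε) N (N + n).toNat).im := by
    rw [gridLogCoeff_eq (mode_one_ne_one hε) N (by omega)]
    simp [logCoeff, sub_eq_add_neg, add_comm]
  have hge := abs_im_aliasIntegral_sub_ge (norm_mode 1 ε) hε N
    (k := (N - n).toNat) (k' := (N + n).toNat) (by omega) (by omega)
  rw [← him, natCast_toNat (by omega), natCast_toNat (by omega), ← shiftGap] at hge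
  refine le_trans ?_ (hge.trans (abs_im_le_norm _))
  have hminus : (0 : ℝ) < (N - n : ℤ) := by exact_mod_cast (by omega : 0 < (N : ℤ) - n)
  have hplus : (0 : ℝ) < (N + n : ℤ) := by exact_mod_cast (by omega : 0 < (N : ℤ) + n)
  have hprod : ((N - n : ℤ) : ℝ) * (N + n : ℤ) ≤ (N : ℝ) ^ 2 := by
    push_cast
    nlinarith [sq_nonneg (n : ℝ)]
  rw [one_div, one_div, inv_sub_inv hminus.ne' hplus.ne', abs_div,
    abs_of_pos (mul_pos hminus hplus)]
  calc shiftGap ε / 2 * (|(n : ℝ)| / N ^ 2) = shiftGap ε / 4 * (2 * |(n : ℝ)| / N ^ 2) := by ring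
    _ ≤ shiftGap ε / 4 * (2 * |(n : ℝ)| / (((N - n : ℤ) : ℝ) * (N + n : ℤ))) := by gcongr
    _ = _ := by
        congr 2
        push_cast
        rw [add_sub_sub_cancel, ← two_mul, abs_mul, abs_two]

/-- For frequencies comparable with `N` the aliases compete with `-1/|n|`, and it is their imaginary
part that keeps the sampled logarithm away from `0`. -/
lemma le_norm_gridLogCoeff_mul (h0 : n ≠ 0) :
    shiftGap ε ^ 3 / 512 ≤ ‖gridLogCoeff N ε n‖ * |(n : ℝ)| := by
  have hN : (0 : ℝ) < N := by exact_mod_cast NeZero.pos N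
  rcases le_or_gt (16 * |(n : ℝ)|) (shiftGap ε * N) with hs | hs
  · linarith [one_half_le_norm_gridLogCoeff_mul hn hε h0 hs,
      pow_le_one₀ (n := 3) hε.le (shiftGap_le_one ε)]
  · calc shiftGap ε ^ 3 / 512 = shiftGap ε / 2 * ((shiftGap ε * N / 16) ^ 2 / N ^ 2) := by
          field_simp
          norm_num
      _ ≤ shiftGap ε / 2 * (|(n : ℝ)| ^ 2 / N ^ 2) := by
          gcongr
          linarith
      _ = shiftGap ε / 2 * (|(n : ℝ)| / N ^ 2) * |(n : ℝ)| := by ring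
      _ ≤ ‖gridLogCoeff N ε n‖ * |(n : ℝ)| := by
          gcongr
          exact le_norm_gridLogCoeff hn hε

end LowFrequency

lemma gridOneCoeff_eq (N : ℕ) [NeZero N] (ε : ℝ) (q : ℤ) :
    gridOneCoeff N ε q = if (N : ℤ) ∣ q then mode (-q) (ε / N) else 0 := by
  simp [gridOneCoeff, gridCoeff_mode]

lemma norm_gridOneCoeff_le_one (N : ℕ) [NeZero N] (ε : ℝ) (q : ℤ) : ‖gridOneCoeff N ε q‖ ≤ 1 := by
  rw [gridOneCoeff_eq]
  split_ifs <;> simp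

lemma norm_gridOneCoeff_shift_sub_le {N : ℕ} [NeZero N] {n : ℤ} (hn : 2 * |n| ≤ N) (ε : ℝ)
    (l : ℤ) :
    ‖gridOneCoeff N ε (n - l) - (if n = l then 1 else 0)‖ ≤ 4 * bracket l ^ 2 / N ^ 2 := by
  have hN : (0 : ℝ) < N := by exact_mod_cast NeZero.pos N
  have hnonneg : 0 ≤ 4 * bracket l ^ 2 / (N : ℝ) ^ 2 := by positivity
  rcases eq_or_ne n l with rfl | hne
  · simpa [gridOneCoeff_eq] using hnonneg
  rw [if_neg hne, sub_zero, gridOneCoeff_eq]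
  split_ifs with hdvd
  · have hle := Int.le_of_dvd (abs_pos.2 (sub_ne_zero.2 hne)) ((dvd_abs _ _).2 hdvd)
    have hNl : (N : ℝ) ≤ 2 * |(l : ℝ)| := by
      exact_mod_cast (by linarith [abs_sub n l] : (N : ℤ) ≤ 2 * |l|)
    rw [norm_mode, le_div_iff₀ (by positivity), one_mul]
    nlinarith [abs_le_bracket l]
  · simpa using hnonneg

/-! ### Fourier coefficients of the logarithm -/

lemma sin_pi_mul_pos {t : ℝ} (ht : t ∈ Set.Ioo (0 : ℝ) 1) : 0 < Real.sin (Real.pi * t) :=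
  Real.sin_pos_of_pos_of_lt_pi (mul_pos Real.pi_pos ht.1)
    (mul_lt_of_lt_one_right Real.pi_pos ht.2)

lemma logSinSq_eq_two_mul_log (t : ℝ) : logSinSq t = 2 * Real.log (2 * Real.sin (Real.pi * t)) := by
  rw [logSinSq, show 4 * Real.sin (Real.pi * t) ^ 2 = (2 * Real.sin (Real.pi * t)) ^ 2 by ring,
    Real.log_pow]
  norm_num

lemma logSinSq_one_sub (t : ℝ) : logSinSq (1 - t) = logSinSq t := by
  rw [logSinSq, mul_one_sub, Real.sin_pi_sub, ← logSinSq]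

lemma eqOn_logSinSq : Set.EqOn (fun t => 2 * Real.log 2 + 2 * Real.log (Real.sin (Real.pi * t)))
    logSinSq (Set.uIoo 0 1) := fun t ht => by
  rw [Set.uIoo_of_le zero_le_one] at ht
  rw [logSinSq_eq_two_mul_log, Real.log_mul two_ne_zero (sin_pi_mul_pos ht).ne', mul_add]

lemma intervalIntegrable_log_sin_pi_mul :
    IntervalIntegrable (fun t : ℝ => Real.log (Real.sin (Real.pi * t))) volume 0 1 := by
  simpa [Real.pi_ne_zero] using
    (intervalIntegrable_log_sin (a := 0) (b := Real.pi)).comp_mul_left (c := Real.pi)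

lemma intervalIntegrable_logSinSq : IntervalIntegrable logSinSq volume 0 1 :=
  (intervalIntegrable_const.add (intervalIntegrable_log_sin_pi_mul.const_mul 2)).congr_uIoo
    eqOn_logSinSq

lemma intervalIntegrable_logSinSq_mul {f : ℝ → ℂ} (hf : Continuous f) :
    IntervalIntegrable (fun t => (logSinSq t : ℂ) * f t) volume 0 1 :=
  have hlog : IntervalIntegrable (fun t => (logSinSq t : ℂ)) volume 0 1 :=
    ⟨intervalIntegrable_logSinSq.1.ofReal, intervalIntegrable_logSinSq.2.ofReal⟩
  hlog.mul_continuousOn hf.continuousOn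

lemma integral_logSinSq : ∫ t in (0 : ℝ)..1, logSinSq t = 0 := by
  have hscale : ∫ t in (0 : ℝ)..1, Real.log (Real.sin (Real.pi * t)) = -Real.log 2 := by
    rw [intervalIntegral.integral_comp_mul_left (fun x => Real.log (Real.sin x)) Real.pi_ne_zero,
      mul_zero, mul_one, integral_log_sin_zero_pi, smul_eq_mul]
    field_simp
  rw [← intervalIntegral.integral_congr_uIoo eqOn_logSinSq, intervalIntegral.integral_add
    intervalIntegrable_const (intervalIntegrable_log_sin_pi_mul.const_mul 2),
    intervalIntegral.integral_const, intervalIntegral.integral_const_mul, hscale]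
  simp

lemma mode_one_sub_one (t : ℝ) :
    mode 1 t - 1 = (2 * Real.sin (Real.pi * t) : ℝ) * (I * Complex.exp (Real.pi * t * I)) := by
  have hsq : mode 1 t = Complex.exp (Real.pi * t * I) * Complex.exp (Real.pi * t * I) := by
    rw [mode_eq_exp, ← Complex.exp_add]
    push_cast
    ring_nf
  have hinv : Complex.exp (-(Real.pi * t) * I) * Complex.exp (Real.pi * t * I) = 1 := by
    rw [← Complex.exp_add]
    simp
  push_cast
  rw [two_sin, hsq]
  linear_combination hinv - (Complex.exp (-(Real.pi * t) * I) * Complex.exp (Real.pi * t * I) -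
    Complex.exp (Real.pi * t * I) ^ 2) * I_sq

lemma mode_neg_natCast_sub_one (q : ℕ) (t : ℝ) :
    mode (-q) t - 1 = -((mode 1 t - 1) * ∑ j ∈ Finset.range q, mode (-(j + 1)) t) := by
  induction q with
  | zero => simp
  | succ q ih =>
    have hshift : mode (-(q : ℤ)) t = mode 1 t * mode (-((q : ℤ) + 1)) t := by
      rw [← mode_add_left]
      congr 1
      ring
    rw [Finset.sum_range_succ, mul_add, neg_add, ← ih, hshift]
    push_cast
    ring

lemma hasDerivAt_logSinSq {t : ℝ} (ht : t ∈ Set.Ioo (0 : ℝ) 1) :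
    HasDerivAt (fun t => (logSinSq t : ℂ)) (2 * Real.pi * cot (Real.pi * t)) t := by
  have hsin := (sin_pi_mul_pos ht).ne'
  have hinner : HasDerivAt (fun t => 2 * Real.sin (Real.pi * t))
      (2 * (Real.cos (Real.pi * t) * Real.pi)) t := by
    simpa using (((hasDerivAt_id t).const_mul Real.pi).sin).const_mul 2
  rw [show logSinSq = fun t => 2 * Real.log (2 * Real.sin (Real.pi * t)) from
    funext logSinSq_eq_two_mul_log]
  refine ((hinner.log (by positivity)).const_mul 2).ofReal_comp.congr_deriv ?_
  rw [cot]
  push_cast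
  have hsin' : Complex.sin (Real.pi * t) ≠ 0 := by exact_mod_cast hsin
  field_simp

lemma continuous_logSinSq_mul (q : ℕ) :
    Continuous fun t => (logSinSq t : ℂ) * (mode (-q) t - 1) := by
  have hmulLog : Continuous fun t =>
      2 * Real.sin (Real.pi * t) * Real.log (2 * Real.sin (Real.pi * t)) :=
    Real.continuous_mul_log.comp
      (continuous_const.mul (Real.continuous_sin.comp (continuous_const.mul continuous_id)))
  have hfactor (t : ℝ) : (logSinSq t : ℂ) * (mode (-q) t - 1) =
      -(2 * (2 * Real.sin (Real.pi * t) * Real.log (2 * Real.sin (Real.pi * t)) : ℝ) *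
        (I * Complex.exp (Real.pi * t * I)) * ∑ j ∈ Finset.range q, mode (-(j + 1)) t) := by
    rw [mode_neg_natCast_sub_one, mode_one_sub_one, logSinSq_eq_two_mul_log]
    push_cast
    ring
  simp only [hfactor]
  exact (((continuous_const.mul (continuous_ofReal.comp hmulLog)).mul (by fun_prop)).mul
    (by fun_prop)).neg

/-- Multiplying `logSinSq` by `exp(-2πiqt) - 1` removes the singularity, and differentiating the
product produces a trigonometric polynomial plus a multiple of the integrand we are after. -/
lemma hasDerivAt_logSinSq_mul (q : ℕ) {t : ℝ} (ht : t ∈ Set.Ioo (0 : ℝ) 1) :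
    HasDerivAt (fun t => (logSinSq t : ℂ) * (mode (-q) t - 1))
      (-(2 * Real.pi * I) * ((mode 1 t + 1) * ∑ j ∈ Finset.range q, mode (-(j + 1)) t) -
        2 * Real.pi * I * q * (logSinSq t * mode (-q) t)) t := by
  refine ((hasDerivAt_logSinSq ht).mul ((hasDerivAt_mode (-q) t).sub_const 1)).congr_deriv ?_
  have hne : 1 - mode 1 t ≠ 0 := by
    rw [← neg_sub, neg_ne_zero, mode_one_sub_one]
    exact mul_ne_zero (by exact_mod_cast (mul_pos two_pos (sin_pi_mul_pos ht)).ne') (by simp)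
  have hcot : cot (Real.pi * t) * (1 - mode 1 t) = -I * (mode 1 t + 1) := by
    have hexp : Complex.exp (2 * Real.pi * I * t) = mode 1 t := by simp [mode_eq_exp]
    rw [cot_pi_eq_exp_ratio, hexp]
    field_simp
    linear_combination (mode 1 t + 1) * I_sq
  rw [mode_neg_natCast_sub_one]
  push_cast
  linear_combination 2 * Real.pi * (∑ j ∈ Finset.range q, mode (-(j + 1)) t) * hcot

lemma integral_mode_one_add_one_mul_sum {q : ℕ} (hq : q ≠ 0) :
    ∫ t in (0 : ℝ)..1, (mode 1 t + 1) * ∑ j ∈ Finset.range q, mode (-(j + 1)) t = 1 := by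
  have hexpand (t : ℝ) : (mode 1 t + 1) * ∑ j ∈ Finset.range q, mode (-(j + 1)) t =
      ∑ j ∈ Finset.range q, (mode (-j) t + mode (-(j + 1)) t) := by
    rw [Finset.mul_sum]
    refine Finset.sum_congr rfl fun j _ => ?_
    rw [add_one_mul, ← mode_add_left]
    congr 2
    ring
  have hterm (j : ℕ) : ∫ t in (0 : ℝ)..1, (mode (-j) t + mode (-(j + 1)) t) =
      if j = 0 then 1 else 0 := by
    rw [intervalIntegral.integral_add (Continuous.intervalIntegrable (by fun_prop) _ _)
      (Continuous.intervalIntegrable (by fun_prop) _ _), integral_mode, integral_mode,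
      if_neg (show ¬-((j : ℤ) + 1) = 0 by omega)]
    simp
  simp only [hexpand]
  rw [intervalIntegral.integral_finsetSum
    fun j _ => Continuous.intervalIntegrable (by fun_prop) _ _]
  simp only [hterm]
  simp [hq]

lemma integral_logSinSq_mul_mode_neg_natCast {q : ℕ} (hq : q ≠ 0) :
    ∫ t in (0 : ℝ)..1, (logSinSq t : ℂ) * mode (-q) t = logCoeff q := by
  have hpoly : IntervalIntegrable
      (fun t => (mode 1 t + 1) * ∑ j ∈ Finset.range q, mode (-(j + 1)) t) volume 0 1 :=
    Continuous.intervalIntegrable (by fun_prop) _ _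
  have hlog := intervalIntegrable_logSinSq_mul (continuous_mode (-q))
  have hFTC := intervalIntegral.integral_eq_sub_of_hasDerivAt_of_le zero_le_one
    (continuous_logSinSq_mul q).continuousOn (fun t ht => hasDerivAt_logSinSq_mul q ht)
    ((hpoly.const_mul _).sub (hlog.const_mul _))
  have hone : mode (-q) 1 = 1 := by simpa using mode_intCast (-q) 1
  rw [intervalIntegral.integral_sub (hpoly.const_mul _) (hlog.const_mul _),
    intervalIntegral.integral_const_mul, intervalIntegral.integral_const_mul,
    integral_mode_one_add_one_mul_sum hq, hone, mode_zero_right] at hFTC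
  have hq' : (q : ℂ) ≠ 0 := by exact_mod_cast hq
  have hmul : (q : ℂ) * ∫ t in (0 : ℝ)..1, (logSinSq t : ℂ) * mode (-q) t = -1 :=
    mul_left_cancel₀ two_pi_I_ne_zero (by linear_combination -hFTC)
  have hcoeff : logCoeff q = -(q : ℂ)⁻¹ := by simp [logCoeff]
  rw [hcoeff]
  field_simp
  linear_combination hmul

theorem integral_logSinSq_mul_mode (q : ℤ) :
    ∫ t in (0 : ℝ)..1, (logSinSq t : ℂ) * mode (-q) t = logCoeff q := by
  rcases eq_or_ne q 0 with rfl | h0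
  · simp [logCoeff, intervalIntegral.integral_ofReal, integral_logSinSq]
  obtain ⟨n, rfl | rfl⟩ := q.eq_nat_or_neg
  · exact integral_logSinSq_mul_mode_neg_natCast (by omega)
  · have hreflect := intervalIntegral.integral_comp_sub_left (a := 0) (b := 1)
      (fun t => (logSinSq t : ℂ) * mode n t) 1
    have hmode (t : ℝ) : mode n (1 - t) = mode (-n) t := by
      rw [sub_eq_neg_add, mode_periodic, mode_neg_left]
    simp only [logSinSq_one_sub, hmode, sub_zero, sub_self] at hreflect
    rw [neg_neg, ← hreflect, integral_logSinSq_mul_mode_neg_natCast (by omega)]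
    simp [logCoeff]

/-! ### Fourier series in one variable -/

/-- Rapid decay of a sequence of Fourier coefficients: faster than any power of the weight. -/
def RapidDecay (c : ℤ → ℂ) : Prop := ∀ K : ℕ, ∃ C : ℝ, ∀ n, ‖c n‖ * bracket n ^ K ≤ C

/-- The sum of the Fourier series with coefficients `c`. -/
noncomputable def fourierSeries (c : ℤ → ℂ) (t : ℝ) : ℂ := ∑' n, c n * mode n t

lemma hasSum_fc_mul_mode {f : ℝ → ℂ} (hf : Continuous f) (hper : Function.Periodic f 1)
    (hsum : Summable (fc f)) (t : ℝ) : HasSum (fun n => fc f n * mode n t) (f t) := by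
  let F : C(UnitAddCircle, ℂ) := ⟨hper.lift, continuous_coinduced_dom.2 hf⟩
  have hcoeff : fourierCoeff F = fc f := funext fun n => by
    rw [fourierCoeff_eq_intervalIntegral F n 0, fc_eq_integral_mode]
    simp only [zero_add, div_one, one_smul, smul_eq_mul]
    exact intervalIntegral.integral_congr fun x _ => mul_comm _ _
  have hF := has_pointwise_sum_fourier_series_of_summable (hcoeff ▸ hsum) (t : UnitAddCircle)
  rw [hcoeff] at hF
  exact hF

lemma norm_fc_le {f : ℝ → ℂ} {C : ℝ} (h : ∀ t ∈ Set.Icc (0 : ℝ) 1, ‖f t‖ ≤ C) (n : ℤ) :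
    ‖fc f n‖ ≤ C := by
  rw [fc_eq_integral_mode]
  have hint := intervalIntegral.norm_integral_le_of_norm_le_const (a := 0) (b := 1) (C := C)
    (f := fun t => f t * mode (-n) t) fun t ht => by
      rw [Set.uIoc_of_le zero_le_one] at ht
      rw [norm_mul, norm_mode, mul_one]
      exact h t (Set.Ioc_subset_Icc_self ht)
  simpa using hint

lemma fc_deriv {f : ℝ → ℂ} (hf : ContDiff ℝ 1 f) (hper : Function.Periodic f 1) (n : ℤ) :
    fc (deriv f) n = 2 * Real.pi * I * n * fc f n := by
  have hderiv := hf.continuous_deriv le_rfl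
  have hparts := intervalIntegral.integral_mul_deriv_eq_deriv_mul (a := 0) (b := 1)
    (fun x _ => hasDerivAt_mode (-n) x)
    (fun x _ => (hf.differentiable one_ne_zero x).hasDerivAt)
    (Continuous.intervalIntegrable (by fun_prop) _ _) (hderiv.intervalIntegrable _ _)
  have hf1 : f 1 = f 0 := by simpa using hper 0
  have hmode1 : mode (-n) 1 = 1 := by simpa using mode_intCast (-n) 1
  rw [hf1, hmode1, mode_zero_right, sub_self, zero_sub,
    ← intervalIntegral.integral_neg] at hparts
  simp only [fc_eq_integral_mode, mul_comm _ (mode (-n) _)]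
  rw [hparts, ← intervalIntegral.integral_const_mul]
  refine intervalIntegral.integral_congr fun x _ => ?_
  push_cast
  ring

lemma fc_add {f g : ℝ → ℂ} (hf : Continuous f) (hg : Continuous g) (n : ℤ) :
    fc (fun t => f t + g t) n = fc f n + fc g n := by
  simp only [fc_eq_integral_mode, add_mul]
  exact intervalIntegral.integral_add (Continuous.intervalIntegrable (by fun_prop) _ _)
    (Continuous.intervalIntegrable (by fun_prop) _ _)

lemma fc_const_mul (c : ℂ) (f : ℝ → ℂ) (n : ℤ) : fc (fun t => c * f t) n = c * fc f n := by
  simp only [fc_eq_integral_mode, mul_assoc, intervalIntegral.integral_const_mul]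

lemma fc_add_deriv {f : ℝ → ℂ} (hf : ContDiff ℝ 1 f) (hper : Function.Periodic f 1) (n : ℤ) :
    fc (fun t => f t + deriv f t) n = (1 + 2 * Real.pi * I * n) * fc f n := by
  rw [fc_add hf.continuous (hf.continuous_deriv le_rfl), fc_deriv hf hper]
  ring

lemma bracket_le_two_mul_norm (n : ℤ) : bracket n ≤ 2 * ‖(1 + 2 * Real.pi * I * n : ℂ)‖ := by
  have hre : 1 ≤ ‖(1 + 2 * Real.pi * I * n : ℂ)‖ := by
    simpa using Complex.abs_re_le_norm (1 + 2 * Real.pi * I * n : ℂ)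
  have him : 2 * Real.pi * |(n : ℝ)| ≤ ‖(1 + 2 * Real.pi * I * n : ℂ)‖ := by
    simpa [abs_of_pos Real.pi_pos] using Complex.abs_im_le_norm (1 + 2 * Real.pi * I * n : ℂ)
  unfold bracket
  nlinarith [abs_nonneg (n : ℝ), Real.pi_gt_three]

lemma periodic_deriv {f : ℝ → ℂ} (hper : Function.Periodic f 1) :
    Function.Periodic (deriv f) 1 := fun x => by
  rw [← deriv_comp_add_const, show (fun y => f (y + 1)) = f from funext hper]

lemma rapidDecay_fc {f : ℝ → ℂ} (hf : ContDiff ℝ (⊤ : ℕ∞) f) (hper : Function.Periodic f 1) :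
    RapidDecay (fc f) := by
  intro K
  induction K generalizing f with
  | zero =>
    obtain ⟨C, hC⟩ :=
      isCompact_Icc.exists_bound_of_continuousOn (s := Set.Icc (0 : ℝ) 1) hf.continuous.continuousOn
    exact ⟨C, fun n => by simpa using norm_fc_le hC n⟩
  | succ K ih =>
    obtain ⟨C, hC⟩ := ih (f := fun t => f t + deriv f t) (hf.add (contDiff_infty_iff_deriv.1 hf).2)
      (fun t => by simp only [hper t, periodic_deriv hper t])
    refine ⟨2 * C, fun n => ?_⟩
    have hn := hC n
    rw [fc_add_deriv (hf.of_le (by simp)) hper, norm_mul] at hn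
    have hpos := bracket_pos n
    calc ‖fc f n‖ * bracket n ^ (K + 1)
        = bracket n * (‖fc f n‖ * bracket n ^ K) := by ring
      _ ≤ 2 * ‖(1 + 2 * Real.pi * I * n : ℂ)‖ * (‖fc f n‖ * bracket n ^ K) := by
        gcongr
        exact bracket_le_two_mul_norm n
      _ = 2 * (‖(1 + 2 * Real.pi * I * n : ℂ)‖ * ‖fc f n‖ * bracket n ^ K) := by ring
      _ ≤ 2 * C := by gcongr

lemma RapidDecay.summable_norm {c : ℤ → ℂ} (h : RapidDecay c) : Summable fun n => ‖c n‖ := by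
  obtain ⟨C, hC⟩ := h 2
  refine (summable_of_norm_le_inv_bracket_sq (D := C) fun n => ?_).norm
  have := bracket_pos n
  rw [← div_eq_mul_inv, le_div_iff₀ (by positivity)]
  exact hC n

lemma RapidDecay.of_norm_le {c d : ℤ → ℂ} (h : RapidDecay c) {A : ℝ} {m : ℕ} (hA : 0 ≤ A)
    (hd : ∀ n, ‖d n‖ ≤ A * bracket n ^ m * ‖c n‖) : RapidDecay d := by
  intro K
  obtain ⟨C, hC⟩ := h (m + K)
  refine ⟨A * C, fun n => ?_⟩
  have := bracket_pos n
  calc ‖d n‖ * bracket n ^ K ≤ (A * bracket n ^ m * ‖c n‖) * bracket n ^ K := by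
        gcongr
        exact hd n
    _ = A * (‖c n‖ * bracket n ^ (m + K)) := by ring
    _ ≤ A * C := by
        gcongr
        exact hC n

lemma RapidDecay.two_pi_I_mul {c : ℤ → ℂ} (h : RapidDecay c) :
    RapidDecay fun n => 2 * Real.pi * I * n * c n := by
  refine h.of_norm_le (A := 2 * Real.pi) (m := 1) (by positivity) fun n => ?_
  have hnorm : ‖(2 * Real.pi * I : ℂ)‖ = 2 * Real.pi := by simp [abs_of_pos Real.pi_pos]
  rw [norm_mul, norm_mul, hnorm, Complex.norm_intCast, pow_one]
  gcongr
  exact abs_le_bracket n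

lemma summable_mul_mode {c : ℤ → ℂ} (h : Summable fun n => ‖c n‖) (t : ℝ) :
    Summable fun n => c n * mode n t :=
  .of_norm (by simpa using h)

lemma hasDerivAt_fourierSeries {c : ℤ → ℂ} (h : RapidDecay c) (t : ℝ) :
    HasDerivAt (fourierSeries c) (fourierSeries (fun n => 2 * Real.pi * I * n * c n) t) t :=
  hasDerivAt_tsum (g := fun n t => c n * mode n t)
    (g' := fun n t => 2 * Real.pi * I * n * c n * mode n t) (y₀ := 0) h.two_pi_I_mul.summable_norm
    (fun n y => ((hasDerivAt_mode n y).const_mul (c n)).congr_deriv (by ring))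
    (fun n y => by rw [norm_mul _ (mode n y), norm_mode, mul_one])
    (summable_mul_mode h.summable_norm 0) t

lemma deriv_fourierSeries {c : ℤ → ℂ} (h : RapidDecay c) :
    deriv (fourierSeries c) = fourierSeries fun n => 2 * Real.pi * I * n * c n :=
  funext fun t => (hasDerivAt_fourierSeries h t).deriv

lemma contDiff_fourierSeries {c : ℤ → ℂ} (h : RapidDecay c) :
    ContDiff ℝ (⊤ : ℕ∞) (fourierSeries c) := by
  rw [contDiff_infty]
  intro n
  have hdiff {c : ℤ → ℂ} (h : RapidDecay c) : Differentiable ℝ (fourierSeries c) :=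
    fun t => (hasDerivAt_fourierSeries h t).differentiableAt
  induction n generalizing c with
  | zero => exact contDiff_zero.2 (hdiff h).continuous
  | succ n ih =>
    push_cast
    rw [contDiff_succ_iff_deriv, deriv_fourierSeries h]
    exact ⟨hdiff h, by simp, ih h.two_pi_I_mul⟩

lemma periodic_fourierSeries (c : ℤ → ℂ) : Function.Periodic (fourierSeries c) 1 := fun t =>
  tsum_congr fun n => by rw [mode_periodic n t]

lemma fc_fourierSeries {c : ℤ → ℂ} (h : Summable fun n => ‖c n‖) (m : ℤ) :
    fc (fourierSeries c) m = c m := by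
  have hterm (n : ℤ) : ∫ t in (0 : ℝ)..1, c n * mode n t * mode (-m) t =
      if n = m then c m else 0 := by
    simp only [mul_assoc, ← mode_add_left, intervalIntegral.integral_const_mul, integral_mode,
      ← sub_eq_add_neg, sub_eq_zero]
    split_ifs with hnm <;> simp [hnm]
  have hint : HasSum (fun n => ∫ t in (0 : ℝ)..1, c n * mode n t * mode (-m) t)
      (∫ t in (0 : ℝ)..1, fourierSeries c t * mode (-m) t) :=
    intervalIntegral.hasSum_integral_of_dominated_convergence (fun n _ => ‖c n‖)
      (fun n => Continuous.aestronglyMeasurable (by fun_prop))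
      (fun n => .of_forall fun t _ => by simp) (.of_forall fun t _ => h)
      intervalIntegrable_const
      (.of_forall fun t _ => (summable_mul_mode h t).hasSum.mul_right _)
  simp only [hterm] at hint
  rw [fc_eq_integral_mode]
  exact hint.unique (hasSum_ite_eq m (c m))

lemma summable_sobNorm_terms {f : ℝ → ℂ} (hf : RapidDecay (fc f)) (r : ℕ) :
    Summable fun m : ℤ => if m = 0 then 0 else |(m : ℝ)| ^ (2 * r : ℝ) * ‖fc f m‖ ^ 2 := by
  obtain ⟨C, hC⟩ := hf (r + 1)
  refine summable_inv_bracket_sq.mul_left (C ^ 2) |>.of_nonneg_of_le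
    (fun m => by split_ifs <;> positivity) fun m => ?_
  have := bracket_pos m
  split_ifs
  · positivity
  rw [← div_eq_mul_inv, le_div_iff₀ (by positivity)]
  calc |(m : ℝ)| ^ (2 * r : ℝ) * ‖fc f m‖ ^ 2 * bracket m ^ 2
      = |(m : ℝ)| ^ (2 * r) * ‖fc f m‖ ^ 2 * bracket m ^ 2 := by norm_cast
    _ ≤ bracket m ^ (2 * r) * ‖fc f m‖ ^ 2 * bracket m ^ 2 := by
      gcongr
      exact abs_le_bracket m
    _ = (‖fc f m‖ * bracket m ^ (r + 1)) ^ 2 := by ring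
    _ ≤ C ^ 2 := by
      gcongr
      exact hC m

lemma norm_fc_mul_bracket_pow_le {f : ℝ → ℂ} (hf : RapidDecay (fc f)) (r : ℕ) (n : ℤ) :
    ‖fc f n‖ * bracket n ^ r ≤ 2 ^ r * sobNorm r f := by
  have hnonneg (m : ℤ) : 0 ≤ if m = 0 then 0 else |(m : ℝ)| ^ (2 * r : ℝ) * ‖fc f m‖ ^ 2 := by
    split_ifs <;> positivity
  rcases eq_or_ne n 0 with rfl | h0
  · have hle : ‖fc f 0‖ ≤ sobNorm r f :=
      Real.le_sqrt_of_sq_le (le_add_of_nonneg_right (tsum_nonneg hnonneg))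
    have htwo : (1 : ℝ) ≤ 2 ^ r := one_le_pow₀ one_le_two
    rw [bracket_zero, one_pow, mul_one]
    nlinarith [norm_nonneg (fc f 0)]
  have hterm := (summable_sobNorm_terms hf r).le_tsum n fun m _ => hnonneg m
  rw [if_neg h0] at hterm
  have hle : |(n : ℝ)| ^ r * ‖fc f n‖ ≤ sobNorm r f := by
    refine Real.le_sqrt_of_sq_le ?_
    calc (|(n : ℝ)| ^ r * ‖fc f n‖) ^ 2 = |(n : ℝ)| ^ (2 * r : ℝ) * ‖fc f n‖ ^ 2 := by
          rw [mul_pow, ← pow_mul, mul_comm r]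
          norm_cast
      _ ≤ _ := hterm.trans (le_add_of_nonneg_left (by positivity))
  have := bracket_pos n
  calc ‖fc f n‖ * bracket n ^ r ≤ ‖fc f n‖ * (2 * |(n : ℝ)|) ^ r := by
        gcongr
        exact bracket_le_two_mul_abs h0
    _ = 2 ^ r * (|(n : ℝ)| ^ r * ‖fc f n‖) := by ring
    _ ≤ 2 ^ r * sobNorm r f := by gcongr

/-! ### Fourier series of smooth biperiodic kernels -/

/-- Rapid decay of a doubly indexed family of Fourier coefficients. -/
def RapidDecay₂ (β : ℤ → ℤ → ℂ) : Prop :=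
  ∀ K : ℕ, ∃ C : ℝ, ∀ k l, ‖β k l‖ * (bracket k * bracket l) ^ K ≤ C

/-- The Fourier coefficients of a kernel of two variables, obtained by integrating out the first
variable first. -/
noncomputable def fourierCoeff₂ (B : ℝ → ℝ → ℂ) (k l : ℤ) : ℂ :=
  fc (fun u => fc (fun s => B s u) k) l

/-- The operator `1 + ∂ₛ`; its Fourier symbol `1 + 2πik` never vanishes, so that applying it
repeatedly measures the decay of Fourier coefficients at all frequencies at once. -/
noncomputable def addDeriv (B : ℝ → ℝ → ℂ) (s u : ℝ) : ℂ := B s u + deriv (fun s => B s u) s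

section Kernel

variable {B : ℝ → ℝ → ℂ} (hB : SPK B)

include hB

lemma _root_.SPK.continuous : Continuous fun p : ℝ × ℝ => B p.1 p.2 := hB.1.continuous

lemma _root_.SPK.contDiff_left (u : ℝ) : ContDiff ℝ (⊤ : ℕ∞) fun s => B s u :=
  hB.1.comp (contDiff_id.prodMk contDiff_const)

lemma _root_.SPK.periodic_left (u : ℝ) : Function.Periodic (fun s => B s u) 1 := fun s => hB.2.1 s u

lemma _root_.SPK.flip : SPK fun s u => B u s :=
  ⟨hB.1.comp (contDiff_snd.prodMk contDiff_fst), fun s t => hB.2.2 t s, fun s t => hB.2.1 t s⟩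

lemma _root_.SPK.shear : SPK fun s u => B s (s - u) := by
  refine ⟨hB.1.comp (contDiff_fst.prodMk (contDiff_fst.sub contDiff_snd)), fun s t => ?_,
    fun s t => ?_⟩
  · simp only [add_sub_right_comm, hB.2.2, hB.2.1]
  · simpa [sub_add_eq_sub_sub] using (hB.2.2 s (s - (t + 1))).symm

lemma _root_.SPK.const_mul (c : ℂ) : SPK fun s u => c * B s u :=
  ⟨contDiff_const.mul hB.1, fun s t => by simp only [hB.2.1], fun s t => by simp only [hB.2.2]⟩

lemma _root_.SPK.sub {A : ℝ → ℝ → ℂ} (hA : SPK A) : SPK fun s u => B s u - A s u :=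
  ⟨hB.1.sub hA.1, fun s t => by simp only [hA.2.1, hB.2.1],
    fun s t => by simp only [hA.2.2, hB.2.2]⟩

lemma _root_.SPK.addDeriv : SPK (addDeriv B) := by
  refine ⟨hB.1.add ?_, fun s t => ?_, fun s t => ?_⟩
  · have hpartial (p : ℝ × ℝ) : deriv (fun s => B s p.2) p.1 =
        fderiv ℝ (fun p : ℝ × ℝ => B p.1 p.2) p (1, 0) := by
      have hline : HasDerivAt (fun s : ℝ => (s, p.2)) (1, 0) p.1 :=
        (hasDerivAt_id p.1).prodMk (hasDerivAt_const p.1 p.2)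
      exact ((hB.1.differentiable (by simp) p).hasFDerivAt.comp_hasDerivAt p.1 hline).deriv
    simp only [hpartial]
    exact (hB.1.fderiv_right (m := (⊤ : ℕ∞)) (by simp)).clm_apply contDiff_const
  · simp only [Nystrom.addDeriv, hB.2.1, periodic_deriv (hB.periodic_left t) s]
  · simp only [Nystrom.addDeriv, hB.2.2]

lemma continuous_fc_left (k : ℤ) : Continuous fun u => fc (fun s => B s u) k := by
  simp only [fc_eq_integral_mode]
  exact intervalIntegral.continuous_parametric_intervalIntegral_of_continuous'
    (f := fun u s => B s u * mode (-k) s)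
    ((hB.continuous.comp continuous_swap).mul (by fun_prop)) 0 1

lemma fourierCoeff₂_addDeriv (k l : ℤ) :
    fourierCoeff₂ (addDeriv B) k l = (1 + 2 * Real.pi * I * k) * fourierCoeff₂ B k l := by
  rw [fourierCoeff₂, fourierCoeff₂, ← fc_const_mul]
  congr 1
  ext u
  exact fc_add_deriv ((hB.contDiff_left u).of_le (by simp)) (hB.periodic_left u) k

lemma fourierCoeff₂_flip (k l : ℤ) :
    fourierCoeff₂ (fun s u => B u s) k l = fourierCoeff₂ B l k := by
  simp only [fourierCoeff₂, fc_eq_integral_mode, ← intervalIntegral.integral_mul_const]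
  rw [MeasureTheory.intervalIntegral_intervalIntegral_swap]
  · simp only [mul_right_comm]
  · have hcont : Continuous fun p : ℝ × ℝ => B p.1 p.2 * mode (-k) p.2 * mode (-l) p.1 :=
      (hB.continuous.mul (by fun_prop)).mul (by fun_prop)
    refine (hcont.integrableOn_Icc (a := (0, 0)) (b := (1, 1))).mono_set ?_
    rw [Set.uIoc_of_le zero_le_one, Set.Icc_prod_eq]
    exact Set.prod_mono Set.Ioc_subset_Icc_self Set.Ioc_subset_Icc_self

omit hB in
lemma rapidDecay₂_fourierCoeff₂ (hB : SPK B) : RapidDecay₂ (fourierCoeff₂ B) := by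
  intro K
  induction K generalizing B with
  | zero =>
    obtain ⟨C, hC⟩ := (isCompact_Icc (a := ((0, 0) : ℝ × ℝ))
      (b := (1, 1))).exists_bound_of_continuousOn hB.continuous.continuousOn
    refine ⟨C, fun k l => ?_⟩
    rw [pow_zero, mul_one]
    exact norm_fc_le (fun u hu => norm_fc_le
      (fun s hs => hC (s, u) ⟨⟨hs.1, hu.1⟩, ⟨hs.2, hu.2⟩⟩) k) l
  | succ K ih =>
    obtain ⟨C, hC⟩ := ih hB.addDeriv.flip.addDeriv
    refine ⟨4 * C, fun k l => ?_⟩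
    have hkl := hC l k
    rw [fourierCoeff₂_addDeriv hB.addDeriv.flip, fourierCoeff₂_flip hB.addDeriv,
      fourierCoeff₂_addDeriv hB, norm_mul, norm_mul] at hkl
    have hk := bracket_pos k
    have hl := bracket_pos l
    calc ‖fourierCoeff₂ B k l‖ * (bracket k * bracket l) ^ (K + 1)
        = bracket k * bracket l * (‖fourierCoeff₂ B k l‖ * (bracket k * bracket l) ^ K) := by ring
      _ ≤ 2 * ‖(1 + 2 * Real.pi * I * k : ℂ)‖ * (2 * ‖(1 + 2 * Real.pi * I * l : ℂ)‖) *
          (‖fourierCoeff₂ B k l‖ * (bracket k * bracket l) ^ K) := by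
        gcongr <;> exact bracket_le_two_mul_norm _
      _ = 4 * (‖(1 + 2 * Real.pi * I * l : ℂ)‖ * (‖(1 + 2 * Real.pi * I * k : ℂ)‖ *
          ‖fourierCoeff₂ B k l‖) * (bracket l * bracket k) ^ K) := by ring
      _ ≤ 4 * C := by gcongr

end Kernel

lemma summable_inv_bracket_sq_prod :
    Summable fun p : ℤ × ℤ => (bracket p.1 ^ 2)⁻¹ * (bracket p.2 ^ 2)⁻¹ :=
  summable_inv_bracket_sq.mul_of_nonneg summable_inv_bracket_sq
    (fun n => by have := bracket_pos n; positivity) fun n => by have := bracket_pos n; positivity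

section RapidDecay₂

variable {β : ℤ → ℤ → ℂ} (hβ : RapidDecay₂ β)

include hβ

lemma RapidDecay₂.summable_norm : Summable fun p : ℤ × ℤ => ‖β p.1 p.2‖ := by
  obtain ⟨C, hC⟩ := hβ 2
  refine .of_nonneg_of_le (fun _ => norm_nonneg _) (fun p => ?_)
    (summable_inv_bracket_sq_prod.mul_left C)
  have := bracket_pos p.1
  have := bracket_pos p.2
  rw [← mul_inv, ← mul_pow, ← div_eq_mul_inv, le_div_iff₀ (by positivity)]
  exact hC p.1 p.2

lemma RapidDecay₂.exists_norm_le (K J : ℕ) :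
    ∃ C, 0 ≤ C ∧ ∀ k l, ‖β k l‖ ≤ C / bracket k ^ K / bracket l ^ J := by
  obtain ⟨C, hC⟩ := hβ (max K J)
  have hC0 : 0 ≤ C := le_trans (by have := bracket_pos 0; positivity) (hC 0 0)
  refine ⟨C, hC0, fun k l => ?_⟩
  have := bracket_pos k
  have := bracket_pos l
  rw [div_div, le_div_iff₀ (by positivity)]
  refine le_trans ?_ (hC k l)
  rw [mul_pow]
  gcongr
  · exact one_le_bracket k
  · exact le_max_left K J
  · exact one_le_bracket l
  · exact le_max_right K J

lemma RapidDecay₂.summable_norm_row (k : ℤ) : Summable fun l => ‖β k l‖ :=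
  hβ.summable_norm.prod_factor k

end RapidDecay₂

section Kernel

variable {B : ℝ → ℝ → ℂ} (hB : SPK B)

include hB

lemma hasSum_fourierCoeff₂_mul_mode (k : ℤ) (u : ℝ) :
    HasSum (fun l => fourierCoeff₂ B k l * mode l u) (fc (fun s => B s u) k) :=
  hasSum_fc_mul_mode (continuous_fc_left hB k) (fun u => by simp only [hB.2.2])
    ((rapidDecay₂_fourierCoeff₂ hB).summable_norm_row k).of_norm u

lemma hasSum_fourierCoeff₂ (s u : ℝ) :
    HasSum (fun p : ℤ × ℤ => fourierCoeff₂ B p.1 p.2 * mode p.1 s * mode p.2 u) (B s u) := by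
  have hsum : Summable fun p : ℤ × ℤ => fourierCoeff₂ B p.1 p.2 * mode p.1 s * mode p.2 u :=
    .of_norm (by simpa using (rapidDecay₂_fourierCoeff₂ hB).summable_norm)
  have hinner := hsum.hasSum.prod_fiberwise fun k =>
    ((hasSum_fourierCoeff₂_mul_mode hB k u).mul_right (mode k s)).congr_fun fun l => by ring
  have houter := hasSum_fc_mul_mode (hB.contDiff_left u).continuous (hB.periodic_left u)
    (rapidDecay_fc (hB.contDiff_left u) (hB.periodic_left u)).summable_norm.of_norm s
  rw [← hinner.unique houter]
  exact hsum.hasSum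

lemma hasSum_fourierCoeff₂_row {c : ℂ} (hc : ∀ s, B s 0 = c) (k : ℤ) :
    HasSum (fun l => fourierCoeff₂ B k l) (if k = 0 then c else 0) := by
  have hrow := hasSum_fourierCoeff₂_mul_mode hB k 0
  have hconst : fc (fun _ => c) k = if k = 0 then c else 0 := by
    simp [fc_eq_integral_mode, intervalIntegral.integral_const_mul, integral_mode]
  simpa only [mode_zero_right, mul_one, hc, hconst] using hrow

end Kernel

/-! ### Symbols of the logarithmic operator and of its quadrature discretization -/

/-- Fourier coefficients, in the variables `(s, s - t)`, of the factor of `logSinSq (s - t)` in the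
kernel `logKer A K`. -/
noncomputable def logPartCoeff (A : ℝ → ℝ → ℂ) : ℤ → ℤ → ℂ :=
  fourierCoeff₂ fun s u => I / (2 * Real.pi) * A s (s - u)

/-- Fourier coefficients, in the variables `(s, s - t)`, of the smooth part of the kernel
`logKer A K`; the constant `log 4` compensates for the normalization of `logSinSq`. -/
noncomputable def smoothPartCoeff (A K : ℝ → ℝ → ℂ) : ℤ → ℤ → ℂ :=
  fourierCoeff₂ fun s u => K s (s - u) - I / (2 * Real.pi) * Real.log 4 * A s (s - u)

/-- The symbol of the integral operator whose kernel has logarithmic part `β` and smooth part `κ`: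
the operator maps the mode `n` to `∑ k, layerSymbol β κ k n` times the mode `n + k`. -/
noncomputable def layerSymbol (β κ : ℤ → ℤ → ℂ) (k n : ℤ) : ℂ :=
  ∑' l, (β k l * logCoeff (n - l) + κ k l * if n = l then 1 else 0)

/-- The counterpart of `layerSymbol` for the quadrature rule on the shifted grid. -/
noncomputable def gridLayerSymbol (N : ℕ) (ε : ℝ) (β κ : ℤ → ℤ → ℂ) (k n : ℤ) : ℂ :=
  ∑' l, (β k l * gridLogCoeff N ε (n - l) + κ k l * gridOneCoeff N ε (n - l))

/-- The action on Fourier coefficients of the operator with symbol `v`, which maps the mode `n` to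
`∑ k, v k n` times the mode `n + k`. -/
noncomputable def symbolAct (v : ℤ → ℤ → ℂ) (c : ℤ → ℂ) (m : ℤ) : ℂ :=
  ∑' k, v k (m - k) * c (m - k)

lemma hasSum_integral_logSinSq_add {ι : Type*} [Countable ι] {b d : ι → ℂ}
    (hb : Summable fun i => ‖b i‖) (hd : Summable fun i => ‖d i‖) (m : ι → ℤ) {f : ℝ → ℂ}
    (hf : ∀ u ∈ Set.Ioo (0 : ℝ) 1,
      HasSum (fun i => b i * (logSinSq u * mode (-m i) u) + d i * mode (-m i) u) (f u)) :
    HasSum (fun i => b i * logCoeff (m i) + d i * if m i = 0 then 1 else 0)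
      (∫ u in (0 : ℝ)..1, f u) := by
  have hlog (i : ι) := (intervalIntegrable_logSinSq_mul (continuous_mode (-m i))).const_mul (b i)
  have hmode (i : ι) : IntervalIntegrable (fun u => d i * mode (-m i) u) volume 0 1 :=
    Continuous.intervalIntegrable (by fun_prop) _ _
  have hterm (i : ι) :
      ∫ u in (0 : ℝ)..1, (b i * (logSinSq u * mode (-m i) u) + d i * mode (-m i) u) =
        b i * logCoeff (m i) + d i * if m i = 0 then 1 else 0 := by
    rw [intervalIntegral.integral_add (hlog i) (hmode i), intervalIntegral.integral_const_mul,
      intervalIntegral.integral_const_mul, integral_logSinSq_mul_mode, integral_mode]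
    simp only [neg_eq_zero]
  have hbound (u : ℝ) : HasSum (fun i => ‖b i‖ * |logSinSq u| + ‖d i‖)
      ((∑' i, ‖b i‖) * |logSinSq u| + ∑' i, ‖d i‖) :=
    (hb.hasSum.mul_right _).add hd.hasSum
  simp only [← hterm]
  refine intervalIntegral.hasSum_integral_of_dominated_convergence
    (fun i u => ‖b i‖ * |logSinSq u| + ‖d i‖)
    (fun i => ((hlog i).add (hmode i)).def'.aestronglyMeasurable)
    (fun i => .of_forall fun u _ => ?_) (.of_forall fun u _ => (hbound u).summable) ?_ ?_
  · refine (norm_add_le _ _).trans_eq ?_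
    simp
  · simp only [(hbound _).tsum_eq]
    exact (intervalIntegrable_logSinSq.abs.const_mul _).add intervalIntegrable_const
  · filter_upwards [compl_mem_ae_iff.2 (measure_singleton (1 : ℝ))] with u hu1 hu
    rw [Set.uIoc_of_le zero_le_one] at hu
    exact hf u ⟨hu.1, hu.2.lt_of_ne hu1⟩

lemma Vop_eq_integral_sub {V : ℝ → ℝ → ℂ} {φ : ℝ → ℂ} (s : ℝ)
    (hV : Function.Periodic (fun t => V s t) 1) (hφ : Function.Periodic φ 1) :
    Vop V φ s = ∫ u in (0 : ℝ)..1, V s (s - u) * φ (s - u) := by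
  have hshift := (hV.mul hφ).intervalIntegral_add_eq 0 (s - 1)
  rw [zero_add, sub_add_cancel] at hshift
  rw [intervalIntegral.integral_comp_sub_left (fun t => V s t * φ t) s, sub_zero]
  exact hshift

lemma hasSum_mul_prod {ι ι' : Type*} {f : ι → ℂ} {g : ι' → ℂ} {a b : ℂ} (hf : HasSum f a)
    (hg : HasSum g b) : HasSum (fun x : ι × ι' => f x.1 * g x.2) (a * b) :=
  hf.mul hg (summable_mul_of_summable_norm hf.summable.norm hg.summable.norm)

lemma summable_norm_coeff_mul_mode {β : ℤ → ℤ → ℂ} (hβ : RapidDecay₂ β) {c : ℤ → ℂ}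
    (hc : Summable fun n => ‖c n‖) (s : ℝ) :
    Summable fun x : (ℤ × ℤ) × ℤ => ‖β x.1.1 x.1.2 * (c x.2 * mode (x.1.1 + x.2) s)‖ := by
  simpa using hβ.summable_norm.mul_of_nonneg hc (fun _ => norm_nonneg _) fun _ => norm_nonneg _

lemma hasSum_Vop_fourierSeries {V : ℝ → ℝ → ℂ} {β κ : ℤ → ℤ → ℂ} {s : ℝ}
    (hβ : RapidDecay₂ β) (hκ : RapidDecay₂ κ) (hper : Function.Periodic (fun t => V s t) 1)
    (hV : ∀ u : ℝ, Real.sin (Real.pi * u) ≠ 0 → HasSum (fun p : ℤ × ℤ =>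
      (β p.1 p.2 * logSinSq u + κ p.1 p.2) * mode p.1 s * mode p.2 u) (V s (s - u)))
    {c : ℤ → ℂ} (hc : Summable fun n => ‖c n‖) :
    HasSum (fun x : (ℤ × ℤ) × ℤ => (β x.1.1 x.1.2 * logCoeff (x.2 - x.1.2) +
      κ x.1.1 x.1.2 * if x.2 = x.1.2 then 1 else 0) * c x.2 * mode (x.1.1 + x.2) s)
      (Vop V (fourierSeries c) s) := by
  have hb := summable_norm_coeff_mul_mode hβ hc s
  have hd := summable_norm_coeff_mul_mode hκ hc s
  rw [Vop_eq_integral_sub s hper (periodic_fourierSeries c)]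
  have hint := hasSum_integral_logSinSq_add hb hd (fun x => x.2 - x.1.2)
    (f := fun u => V s (s - u) * fourierSeries c (s - u)) fun u hu => by
      have hker := hV u (sin_pi_mul_pos hu).ne'
      have hseries : HasSum _ (fourierSeries c (s - u)) := (summable_mul_mode hc (s - u)).hasSum
      refine (hasSum_mul_prod hker hseries).congr_fun fun x => ?_
      rw [neg_sub, mode_sub_right, mode_add_left, sub_eq_add_neg, mode_add_left]
      ring
  refine hint.congr_fun fun x => ?_
  simp only [sub_eq_zero]
  ring

section Kernel

variable {A K : ℝ → ℝ → ℂ} (hA : SPK A)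

include hA

lemma rapidDecay₂_logPartCoeff : RapidDecay₂ (logPartCoeff A) :=
  rapidDecay₂_fourierCoeff₂ (hA.shear.const_mul _)

lemma hasSum_logPartCoeff_row {α : ℂ} (hα : ∀ s, A s s = α) (k : ℤ) :
    HasSum (fun l => logPartCoeff A k l) (if k = 0 then I / (2 * Real.pi) * α else 0) :=
  hasSum_fourierCoeff₂_row (hA.shear.const_mul _) (fun s => by simp [hα]) k

variable (hK : SPK K)

include hK

lemma rapidDecay₂_smoothPartCoeff : RapidDecay₂ (smoothPartCoeff A K) :=
  rapidDecay₂_fourierCoeff₂ (hK.shear.sub (hA.shear.const_mul _))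

lemma hasSum_logKer (s : ℝ) {u : ℝ} (hu : Real.sin (Real.pi * u) ≠ 0) :
    HasSum (fun p : ℤ × ℤ => (logPartCoeff A p.1 p.2 * logSinSq u + smoothPartCoeff A K p.1 p.2) *
      mode p.1 s * mode p.2 u) (logKer A K s (s - u)) := by
  have hlog := hasSum_fourierCoeff₂ (hA.shear.const_mul (I / (2 * Real.pi))) s u
  have hsmooth := hasSum_fourierCoeff₂
    (hK.shear.sub (hA.shear.const_mul (I / (2 * Real.pi) * Real.log 4))) s u
  have hsplit : logKer A K s (s - u) = I / (2 * Real.pi) * A s (s - u) * logSinSq u +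
      (K s (s - u) - I / (2 * Real.pi) * Real.log 4 * A s (s - u)) := by
    rw [logKer, sub_sub_cancel, logSinSq, Real.log_mul four_ne_zero (by positivity)]
    push_cast
    ring
  rw [hsplit]
  refine ((hlog.mul_right (logSinSq u : ℂ)).add hsmooth).congr_fun fun p => ?_
  rw [logPartCoeff, smoothPartCoeff]
  ring

lemma periodic_logKer_right (s : ℝ) : Function.Periodic (fun t => logKer A K s t) 1 := fun t => by
  simp only [logKer, hA.2.2, hK.2.2]
  rw [← sub_sub, mul_sub_one, Real.sin_sub_pi, neg_sq]

lemma hasSum_Vop_logKer_fourierSeries {c : ℤ → ℂ} (hc : Summable fun n => ‖c n‖) (s : ℝ) :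
    HasSum (fun x : (ℤ × ℤ) × ℤ => (logPartCoeff A x.1.1 x.1.2 * logCoeff (x.2 - x.1.2) +
      smoothPartCoeff A K x.1.1 x.1.2 * if x.2 = x.1.2 then 1 else 0) * c x.2 *
        mode (x.1.1 + x.2) s) (Vop (logKer A K) (fourierSeries c) s) :=
  hasSum_Vop_fourierSeries (rapidDecay₂_logPartCoeff hA) (rapidDecay₂_smoothPartCoeff hA hK)
    (periodic_logKer_right hA hK s) (fun _ => hasSum_logKer hA hK s) hc

end Kernel

/-! ### Estimates for the symbols -/

/-- The constant `∑ l, (1 + |l|)⁻²`. -/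
noncomputable def bracketSum : ℝ := ∑' l : ℤ, (bracket l ^ 2)⁻¹

lemma bracketSum_pos : 0 < bracketSum :=
  summable_inv_bracket_sq.tsum_pos (fun n => by have := bracket_pos n; positivity) 0 (by simp)

lemma norm_tsum_le_mul_bracketSum {f : ℤ → ℂ} {D : ℝ} (h : ∀ l, ‖f l‖ ≤ D * (bracket l ^ 2)⁻¹) :
    ‖∑' l, f l‖ ≤ D * bracketSum :=
  tsum_of_norm_bounded (summable_inv_bracket_sq.hasSum.mul_left D) h

section Symbol

variable {β κ : ℤ → ℤ → ℂ} (hβ : RapidDecay₂ β) (hκ : RapidDecay₂ κ)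

include hβ hκ

lemma exists_norm_mul_add_mul_le (K p : ℕ) : ∃ C, 0 ≤ C ∧ ∀ (a b : ℤ → ℂ) (D : ℝ),
    (∀ l, ‖a l‖ ≤ D * bracket l ^ p) → (∀ l, ‖b l‖ ≤ D * bracket l ^ p) →
      ∀ k l, ‖β k l * a l + κ k l * b l‖ ≤ C * D / bracket k ^ K * (bracket l ^ 2)⁻¹ := by
  obtain ⟨C₁, hC₁, hβC⟩ := hβ.exists_norm_le K (p + 2)
  obtain ⟨C₂, hC₂, hκC⟩ := hκ.exists_norm_le K (p + 2)
  refine ⟨C₁ + C₂, by positivity, fun a b D ha hb k l => ?_⟩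
  have hk := bracket_pos k
  have hl := bracket_pos l
  calc ‖β k l * a l + κ k l * b l‖ ≤ ‖β k l‖ * ‖a l‖ + ‖κ k l‖ * ‖b l‖ := by
        rw [← norm_mul, ← norm_mul]
        exact norm_add_le _ _
    _ ≤ C₁ / bracket k ^ K / bracket l ^ (p + 2) * (D * bracket l ^ p) +
        C₂ / bracket k ^ K / bracket l ^ (p + 2) * (D * bracket l ^ p) := by
        gcongr
        exacts [hβC k l, ha l, hκC k l, hb l]
    _ = (C₁ + C₂) * D / bracket k ^ K * (bracket l ^ 2)⁻¹ := by
        field_simp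
        ring

lemma summable_mul_add_mul {a b : ℤ → ℂ} {D : ℝ} {p : ℕ} (ha : ∀ l, ‖a l‖ ≤ D * bracket l ^ p)
    (hb : ∀ l, ‖b l‖ ≤ D * bracket l ^ p) (k : ℤ) :
    Summable fun l => β k l * a l + κ k l * b l := by
  obtain ⟨C, -, hC⟩ := exists_norm_mul_add_mul_le hβ hκ 0 p
  exact summable_of_norm_le_inv_bracket_sq (hC a b D ha hb k)

lemma exists_norm_tsum_mul_add_mul_le (K p : ℕ) : ∃ C, 0 ≤ C ∧ ∀ (a b : ℤ → ℂ) (D : ℝ),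
    (∀ l, ‖a l‖ ≤ D * bracket l ^ p) → (∀ l, ‖b l‖ ≤ D * bracket l ^ p) →
      ∀ k, ‖∑' l, (β k l * a l + κ k l * b l)‖ ≤ C * D / bracket k ^ K := by
  obtain ⟨C, hC0, hC⟩ := exists_norm_mul_add_mul_le hβ hκ K p
  refine ⟨C * bracketSum, mul_nonneg hC0 bracketSum_pos.le, fun a b D ha hb k => ?_⟩
  refine (norm_tsum_le_mul_bracketSum (hC a b D ha hb k)).trans_eq ?_
  ring

lemma summable_layerSymbol_terms (k n : ℤ) :
    Summable fun l => β k l * logCoeff (n - l) + κ k l * if n = l then 1 else 0 :=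
  summable_mul_add_mul hβ hκ (D := 1) (p := 0) (fun l => by simpa using norm_logCoeff_le_one _)
    (fun l => by split_ifs <;> simp) k

lemma exists_norm_layerSymbol_le (K : ℕ) :
    ∃ C, 0 ≤ C ∧ ∀ k n, ‖layerSymbol β κ k n‖ ≤ C / bracket k ^ K / bracket n := by
  obtain ⟨C, hC0, hC⟩ := exists_norm_tsum_mul_add_mul_le hβ hκ K 1
  refine ⟨C * 2, by positivity, fun k n => ?_⟩
  have hn := bracket_pos n
  refine (hC _ _ (2 / bracket n) (fun l => ?_) (fun l => ?_) k).trans_eq (by ring)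
  · exact (norm_logCoeff_sub_left_le n l).trans_eq (by ring)
  · split_ifs with hnl
    · subst hnl
      simp [hn.ne']
    · have := bracket_pos l
      rw [norm_zero]
      positivity

section Grid

variable {ε : ℝ} (hε : 0 < shiftGap ε)

include hε

lemma summable_gridLayerSymbol_terms (k n : ℤ) (N : ℕ) [NeZero N] :
    Summable fun l => β k l * gridLogCoeff N ε (n - l) + κ k l * gridOneCoeff N ε (n - l) := by
  refine summable_mul_add_mul hβ hκ (D := 9 / shiftGap ε) (p := 0) (fun l => ?_) (fun l => ?_) k
  · simpa using norm_gridLogCoeff_le hε N (n - l)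
  · rw [pow_zero, mul_one, le_div_iff₀ hε]
    nlinarith [norm_gridOneCoeff_le_one N ε (n - l), shiftGap_le_one ε]

lemma exists_norm_gridLayerSymbol_sub_le (K : ℕ) :
    ∃ C, 0 ≤ C ∧ ∀ (N : ℕ) [NeZero N] (k n : ℤ), 2 * |n| ≤ N →
      ‖gridLayerSymbol N ε β κ k n - layerSymbol β κ k n‖ ≤ C / bracket k ^ K / N := by
  obtain ⟨C, hC0, hC⟩ := exists_norm_tsum_mul_add_mul_le hβ hκ K 2
  refine ⟨C * (40 / shiftGap ε), by positivity, fun N _ k n hn => ?_⟩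
  have hN : (1 : ℝ) ≤ N := by exact_mod_cast NeZero.one_le
  rw [gridLayerSymbol, layerSymbol, ← (summable_gridLayerSymbol_terms hβ hκ hε k n N).tsum_sub
    (summable_layerSymbol_terms hβ hκ k n)]
  simp only [add_sub_add_comm, ← mul_sub]
  refine (hC _ _ (40 / shiftGap ε / N) (fun l => ?_) (fun l => ?_) k).trans_eq (by ring)
  · have := one_le_bracket l
    refine (norm_gridLogCoeff_shift_sub_logCoeff_le hn hε l).trans ?_
    rw [mul_div_right_comm]
    gcongr
    exact le_self_pow₀ this two_ne_zero
  · refine (norm_gridOneCoeff_shift_sub_le hn ε l).trans ?_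
    have h40 : 40 ≤ 40 / shiftGap ε := le_div_self (by norm_num) hε (shiftGap_le_one ε)
    calc 4 * bracket l ^ 2 / (N : ℝ) ^ 2 ≤ 40 / shiftGap ε * bracket l ^ 2 / (N : ℝ) ^ 1 := by
          gcongr
          · linarith
          · norm_num
      _ = 40 / shiftGap ε / N * bracket l ^ 2 := by ring

lemma exists_norm_gridLayerSymbol_le (K : ℕ) :
    ∃ C, 0 ≤ C ∧ ∀ (N : ℕ) [NeZero N] (k n : ℤ),
      ‖gridLayerSymbol N ε β κ k n‖ ≤ C / bracket k ^ K := by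
  obtain ⟨C, hC0, hC⟩ := exists_norm_tsum_mul_add_mul_le hβ hκ K 0
  refine ⟨C * (9 / shiftGap ε), by positivity, fun N _ k n =>
    hC _ _ _ (fun l => ?_) (fun l => ?_) k⟩
  · simpa using norm_gridLogCoeff_le hε N (n - l)
  · rw [pow_zero, mul_one, le_div_iff₀ hε]
    nlinarith [norm_gridOneCoeff_le_one N ε (n - l), shiftGap_le_one ε]

end Grid

end Symbol

lemma norm_gridOneCoeff_shift_le {N : ℕ} [NeZero N] {n : ℤ} (hn : 2 * |n| ≤ N) (ε : ℝ) (l : ℤ) :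
    ‖gridOneCoeff N ε (n - l)‖ ≤ 10 * bracket l ^ 2 / bracket n ^ 2 := by
  have hpos := bracket_pos n
  have hone : ‖(if n = l then 1 else 0 : ℂ)‖ ≤ bracket l ^ 2 / bracket n ^ 2 := by
    split_ifs with hnl
    · subst hnl
      simp [hpos.ne']
    · have := bracket_pos l
      rw [norm_zero]
      positivity
  have herror : ‖gridOneCoeff N ε (n - l) - if n = l then 1 else 0‖ ≤
      9 * bracket l ^ 2 / bracket n ^ 2 :=
    calc _ ≤ 4 * bracket l ^ 2 / (N : ℝ) ^ 2 := norm_gridOneCoeff_shift_sub_le hn ε l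
      _ = 4 * bracket l ^ 2 * (1 / (N : ℝ)) ^ 2 := by ring
      _ ≤ 4 * bracket l ^ 2 * (3 / 2 / bracket n) ^ 2 :=
        mul_le_mul_of_nonneg_left (pow_le_pow_left₀ (by positivity) (one_div_le_div_bracket hn) 2)
          (by positivity)
      _ = 9 * bracket l ^ 2 / bracket n ^ 2 := by ring
  calc _ ≤ _ := norm_le_norm_sub_add _ (if n = l then 1 else 0)
    _ ≤ 9 * bracket l ^ 2 / bracket n ^ 2 + bracket l ^ 2 / bracket n ^ 2 := add_le_add herror hone
    _ = 10 * bracket l ^ 2 / bracket n ^ 2 := by ring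

/-- A logarithmic coefficient that is constant on the diagonal leaves an error that decays one order
faster than the symbol itself. -/
lemma exists_norm_gridLayerSymbol_sub_main_le {β κ : ℤ → ℤ → ℂ} (hβ : RapidDecay₂ β)
    (hκ : RapidDecay₂ κ) {α : ℂ} (hα : ∀ k, HasSum (fun l => β k l) (if k = 0 then α else 0))
    {ε : ℝ} (hε : 0 < shiftGap ε) (K : ℕ) :
    ∃ C, 0 ≤ C ∧ ∀ (N : ℕ) [NeZero N] (k n : ℤ), 2 * |n| ≤ N →
      ‖gridLayerSymbol N ε β κ k n - (if k = 0 then α else 0) * gridLogCoeff N ε n‖ ≤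
        C / bracket k ^ K / bracket n ^ 2 := by
  obtain ⟨C, hC0, hC⟩ := exists_norm_tsum_mul_add_mul_le hβ hκ K 2
  refine ⟨C * (648 / shiftGap ε), by positivity, fun N _ k n hn => ?_⟩
  have hmain := (hα k).mul_right (gridLogCoeff N ε n)
  rw [gridLayerSymbol, ← hmain.tsum_eq,
    ← (summable_gridLayerSymbol_terms hβ hκ hε k n N).tsum_sub hmain.summable]
  simp only [add_sub_right_comm, ← mul_sub]
  refine (hC _ _ (648 / shiftGap ε / bracket n ^ 2) (fun l => ?_) (fun l => ?_) k).trans_eq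
    (by ring)
  · exact (norm_gridLogCoeff_shift_sub_le hn hε l).trans_eq (by ring)
  · have h648 : 648 ≤ 648 / shiftGap ε := le_div_self (by norm_num) hε (shiftGap_le_one ε)
    calc _ ≤ 10 * bracket l ^ 2 / bracket n ^ 2 := norm_gridOneCoeff_shift_le hn ε l
      _ ≤ 648 / shiftGap ε * bracket l ^ 2 / bracket n ^ 2 := by
        gcongr
        linarith
      _ = 648 / shiftGap ε / bracket n ^ 2 * bracket l ^ 2 := by ring

/-- Reindexes the triples `(k, l, n)` by the output frequency `m = k + n`. -/
@[simps]
def outputFreqEquiv : ℤ × (ℤ × ℤ) ≃ (ℤ × ℤ) × ℤ where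
  toFun x := (x.2, x.1 - x.2.1)
  invFun y := (y.2 + y.1.1, y.1)
  left_inv x := by simp
  right_inv y := by simp

theorem hasSum_symbolAct_layerSymbol {A K : ℝ → ℝ → ℂ} (hA : SPK A) (hK : SPK K) {c : ℤ → ℂ}
    (hc : Summable fun n => ‖c n‖) (s : ℝ) :
    HasSum (fun m => symbolAct (layerSymbol (logPartCoeff A) (smoothPartCoeff A K)) c m * mode m s)
      (Vop (logKer A K) (fourierSeries c) s) := by
  have htriple := outputFreqEquiv.hasSum_iff.2 (hasSum_Vop_logKer_fourierSeries hA hK hc s)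
  refine htriple.prod_fiberwise fun m => ?_
  have hfiber := (htriple.summable.prod_factor m).hasSum
  have hpairs := hfiber.prod_fiberwise
    (g := fun k => layerSymbol (logPartCoeff A) (smoothPartCoeff A K) k (m - k) * c (m - k) *
      mode m s) fun k => by
    rw [mul_assoc]
    refine ((summable_layerSymbol_terms (rapidDecay₂_logPartCoeff hA)
      (rapidDecay₂_smoothPartCoeff hA hK) k (m - k)).hasSum.mul_right
        (c (m - k) * mode m s)).congr_fun fun l => ?_
    rw [Function.comp_apply, outputFreqEquiv_apply]
    simp only [add_sub_cancel, mul_assoc]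
  rw [symbolAct, ← tsum_mul_right, hpairs.tsum_eq]
  exact hfiber

/-! ### Action of the Nyström matrix on exponentials -/

section PeriodicSum

variable {N : ℕ} [NeZero N] {F : ℤ → ℂ} (hF : Function.Periodic F (N : ℤ))

include hF

lemma periodic_val_intCast (x : ℤ) : F ((x : ZMod N).val : ℕ) = F x := by
  rw [ZMod.val_intCast]
  conv_rhs => rw [← Int.emod_add_mul_ediv x N, mul_comm]
  exact (hF.int_mul (x / N) (x % N)).symm

lemma sum_val_add (x : ℤ) : ∑ j : ZMod N, F ((j.val : ℕ) + x) = ∑ j : ZMod N, F (j.val : ℕ) := by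
  rw [← Equiv.sum_comp (Equiv.addRight (x : ZMod N)) fun j : ZMod N => F (j.val : ℕ)]
  refine Finset.sum_congr rfl fun j _ => ?_
  rw [← periodic_val_intCast hF]
  simp

lemma sum_sub_val (x : ℤ) : ∑ j : ZMod N, F (x - (j.val : ℕ)) = ∑ j : ZMod N, F (j.val : ℕ) := by
  rw [← Equiv.sum_comp (Equiv.subLeft (x : ZMod N)) fun j : ZMod N => F (j.val : ℕ)]
  refine Finset.sum_congr rfl fun j _ => ?_
  rw [← periodic_val_intCast hF]
  simp

end PeriodicSum

lemma sum_val_eq_sum_range {N : ℕ} [NeZero N] (F : ℕ → ℂ) :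
    ∑ j : ZMod N, F j.val = ∑ j ∈ Finset.range N, F j := by
  obtain ⟨n, rfl⟩ := Nat.exists_eq_succ_of_ne_zero (NeZero.ne N)
  exact Fin.sum_univ_eq_sum_range F (n + 1)

lemma sin_pi_mul_grid_ne_zero {ε : ℝ} (hε : 0 < shiftGap ε) (N : ℕ) [NeZero N] (j : ℕ) :
    Real.sin (Real.pi * ((j + ε) / N)) ≠ 0 := by
  rw [Ne, Real.sin_eq_zero_iff]
  rintro ⟨p, hp⟩
  have hN : (N : ℝ) ≠ 0 := NeZero.ne _
  have hpN : p * N = j + ε := by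
    rw [← eq_div_iff hN]
    exact mul_left_cancel₀ Real.pi_ne_zero (by rw [← hp, mul_comm])
  have hint : ε = ((p * N - j : ℤ) : ℝ) := by
    push_cast
    rw [hpN]
    ring
  exact mode_one_ne_one hε (by rw [hint, mode_intCast])

/-- The rectangle rule with nodes `(j + η) / N` for the integral operator with kernel `V`. -/
noncomputable def gridQuad (N : ℕ) [NeZero N] (V : ℝ → ℝ → ℂ) (η : ℝ) (φ : ℝ → ℂ) (s : ℝ) : ℂ :=
  (N : ℂ)⁻¹ * ∑ j : ZMod N, V s (tg (1 / N) η (j.val : ℕ)) * φ (tg (1 / N) η (j.val : ℕ))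

/-- The symbol of the scaled centered difference `N (v (t + 1/(2N)) - v (t - 1/(2N)))`, divided by
`I`. -/
noncomputable def diffSymbol (N : ℕ) (n : ℤ) : ℝ := 2 * N * Real.sin (Real.pi * n / N)

/-- The symbol of the hypersingular operator `-D V₁ D + V₂`. -/
noncomputable def hypersingularSymbol (β₁ κ₁ β₂ κ₂ : ℤ → ℤ → ℂ) (k n : ℤ) : ℂ :=
  4 * Real.pi ^ 2 * n * (n + k) * layerSymbol β₁ κ₁ k n + layerSymbol β₂ κ₂ k n

/-- The symbol of the Nyström matrix, scaled by `N`. -/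
noncomputable def nystromSymbol (N : ℕ) (ε : ℝ) (β₁ κ₁ β₂ κ₂ : ℤ → ℤ → ℂ) (k n : ℤ) : ℂ :=
  diffSymbol N n * diffSymbol N (n + k) * gridLayerSymbol N ε β₁ κ₁ k n +
    gridLayerSymbol N ε β₂ κ₂ k n

lemma sg_eq_tg (h ε : ℝ) (j : ℤ) : sg h ε j = tg h (-1 / 2 + ε) j := by
  rw [sg, tg]
  ring

lemma mul_mode_sub_mode (n : ℤ) (N : ℕ) (t : ℝ) :
    N * (mode n (t + 1 / (2 * N)) - mode n (t - 1 / (2 * N))) =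
      I * diffSymbol N n * mode n t := by
  have hplus : mode n (1 / (2 * N)) = exp ((Real.pi * n / N : ℝ) * I) := by
    rw [mode_eq_exp]
    congr 1
    push_cast
    ring
  have hminus : mode n (-(1 / (2 * N))) = exp (-(Real.pi * n / N : ℝ) * I) := by
    rw [mode_eq_exp]
    congr 1
    push_cast
    ring
  rw [sub_eq_add_neg t, mode_add_right, mode_add_right, hplus, hminus, diffSymbol, ofReal_mul,
    ofReal_sin, Complex.sin]
  push_cast
  linear_combination
    (N * mode n t * (exp (Real.pi * n / N * I) - exp (-(Real.pi * n / N) * I))) * I_sq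

lemma tg_add_half (N : ℕ) (ε : ℝ) (j : ℤ) :
    tg (1 / N) (-1 / 2 + ε) j + 1 / (2 * N) = tg (1 / N) ε j := by
  rw [tg, tg]
  ring

lemma tg_sub_half (N : ℕ) (ε : ℝ) (j : ℤ) :
    tg (1 / N) (-1 / 2 + ε) (j + 1) - 1 / (2 * N) = tg (1 / N) ε j := by
  rw [tg, tg]
  push_cast
  ring

section Grid

variable {N : ℕ} [NeZero N]

lemma tg_add_natCast (ε : ℝ) (j : ℤ) : tg (1 / N) ε (j + N) = tg (1 / N) ε j + 1 := by
  have hN : (N : ℝ) ≠ 0 := NeZero.ne _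
  rw [tg, tg]
  push_cast
  field_simp
  ring

lemma gridQuad_tg {V : ℝ → ℝ → ℂ} (hV : ∀ s, Function.Periodic (fun t => V s t) 1) {φ : ℝ → ℂ}
    (hφ : Function.Periodic φ 1) (η ε : ℝ) (i : ℤ) {s : ℝ} (hs : s = tg (1 / N) (η + ε) i) :
    gridQuad N V η φ s =
      (N : ℂ)⁻¹ * ∑ m ∈ Finset.range N, V s (s - (m + ε) / N) * φ (s - (m + ε) / N) := by
  have hper : Function.Periodic (fun x : ℤ => V s (tg (1 / N) η x) * φ (tg (1 / N) η x)) N :=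
    fun x => by simp only [tg_add_natCast, (hV s) _, hφ _]
  have hnode (m : ℕ) : tg (1 / N) η (i - m) = s - (m + ε) / N := by
    rw [hs, tg, tg]
    push_cast
    ring
  rw [gridQuad, ← sum_sub_val hper i,
    sum_val_eq_sum_range fun m : ℕ => V s (tg (1 / N) η (i - m)) * φ (tg (1 / N) η (i - m))]
  simp only [hnode]

lemma hasSum_gridQuad_mode {A K : ℝ → ℝ → ℂ} (hA : SPK A) (hK : SPK K) {ε : ℝ}
    (hε : 0 < shiftGap ε) (η : ℝ) (i n : ℤ) {s : ℝ} (hs : s = tg (1 / N) (η + ε) i) :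
    HasSum (fun k =>
      gridLayerSymbol N ε (logPartCoeff A) (smoothPartCoeff A K) k n * mode (n + k) s)
      (gridQuad N (logKer A K) η (mode n) s) := by
  rw [gridQuad_tg (periodic_logKer_right hA hK) (mode_periodic n) η ε i hs, Finset.mul_sum]
  have hpairs := hasSum_sum fun m (_ : m ∈ Finset.range N) =>
    ((hasSum_logKer hA hK s (sin_pi_mul_grid_ne_zero hε N m)).mul_right
      (mode n (s - (m + ε) / N))).mul_left (N : ℂ)⁻¹
  refine hpairs.prod_fiberwise fun k => ?_
  refine ((summable_gridLayerSymbol_terms (rapidDecay₂_logPartCoeff hA)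
    (rapidDecay₂_smoothPartCoeff hA hK) hε k n N).hasSum.mul_right (mode (n + k) s)).congr_fun
      fun l => ?_
  simp only [gridLogCoeff, gridOneCoeff, gridCoeff, add_mul, Finset.mul_sum, Finset.sum_mul,
    ← Finset.sum_add_distrib]
  refine Finset.sum_congr rfl fun m _ => ?_
  rw [mode_sub_right, neg_sub, sub_eq_add_neg l, mode_add_left l, mode_add_left n, mode_zero_left]
  ring

lemma sum_sub_mul_mode {G : ℝ → ℂ} (hG : Function.Periodic G 1) (n : ℤ) :
    N * ∑ j : ZMod N, (G (tg (1 / N) (-1 / 2) ((j.val : ℕ) + 1)) -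
        G (tg (1 / N) (-1 / 2) (j.val : ℕ))) * mode n (tg (1 / N) 0 (j.val : ℕ)) =
      -I * diffSymbol N n * ∑ j : ZMod N, G (tg (1 / N) (-1 / 2) (j.val : ℕ)) *
        mode n (tg (1 / N) (-1 / 2) (j.val : ℕ)) := by
  have hper : Function.Periodic (fun x : ℤ => G (tg (1 / N) (-1 / 2) x) *
      mode n (tg (1 / N) (-1 / 2) x - 1 / (2 * N))) N := fun x => by
    simp only [tg_add_natCast, hG _, add_sub_right_comm, mode_periodic n _]
  have hshift : ∑ j : ZMod N, G (tg (1 / N) (-1 / 2) ((j.val : ℕ) + 1)) *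
        mode n (tg (1 / N) 0 (j.val : ℕ)) = ∑ j : ZMod N, G (tg (1 / N) (-1 / 2) (j.val : ℕ)) *
          mode n (tg (1 / N) (-1 / 2) (j.val : ℕ) - 1 / (2 * N)) := by
    refine Eq.trans ?_ (sum_val_add hper 1)
    simp only [← tg_sub_half N 0, add_zero]
  have hdiff (j : ℤ) :
      N * (mode n (tg (1 / N) (-1 / 2) j - 1 / (2 * N)) - mode n (tg (1 / N) 0 j)) =
        -I * diffSymbol N n * mode n (tg (1 / N) (-1 / 2) j) := by
    rw [← tg_add_half N 0 j, add_zero]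
    linear_combination -mul_mode_sub_mode n N (tg (1 / N) (-1 / 2) j)
  simp only [sub_mul, Finset.sum_sub_distrib, hshift]
  rw [← Finset.sum_sub_distrib, Finset.mul_sum, Finset.mul_sum]
  refine Finset.sum_congr rfl fun j _ => ?_
  linear_combination G (tg (1 / N) (-1 / 2) (j.val : ℕ)) * hdiff (j.val : ℕ)

lemma sum_Wmat_mul_mode {V₁ : ℝ → ℝ → ℂ} (hV : ∀ s, Function.Periodic (fun t => V₁ s t) 1)
    (V₂ : ℝ → ℝ → ℂ) (ε : ℝ) (i n : ℤ) :
    N * ∑ j : ZMod N, Wmat V₁ V₂ (1 / N) ε i (j.val : ℕ) * mode n (tg (1 / N) 0 (j.val : ℕ)) =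
      -I * diffSymbol N n *
        (N * (gridQuad N V₁ (-1 / 2) (mode n) (tg (1 / N) (-1 / 2 + ε) (i + 1)) -
          gridQuad N V₁ (-1 / 2) (mode n) (tg (1 / N) (-1 / 2 + ε) i))) +
      gridQuad N V₂ 0 (mode n) (tg (1 / N) ε i) := by
  have hN : (N : ℂ) ≠ 0 := NeZero.ne _
  have hsq : (N : ℂ) * ((1 / N : ℝ) : ℂ) ^ 2 = (N : ℂ)⁻¹ := by
    push_cast
    field_simp
  have hparts := sum_sub_mul_mode (N := N) ((hV (tg (1 / N) (-1 / 2 + ε) (i + 1))).sub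
    (hV (tg (1 / N) (-1 / 2 + ε) i))) n
  simp only [Pi.sub_apply, sub_mul _ _ (mode n _), Finset.sum_sub_distrib] at hparts
  simp only [Wmat, sg_eq_tg, add_zero, gridQuad, add_mul, sub_mul, Finset.sum_add_distrib,
    Finset.sum_sub_distrib, mul_assoc, ← Finset.mul_sum]
  rw [mul_add, ← mul_assoc (N : ℂ) (_ ^ 2), hsq, ← mul_sub, mul_inv_cancel_left₀ hN]
  congr 1
  linear_combination hparts

theorem hasSum_nystromSymbol_mul_mode {A₁ K₁ A₂ K₂ : ℝ → ℝ → ℂ} (hA₁ : SPK A₁) (hK₁ : SPK K₁)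
    (hA₂ : SPK A₂) (hK₂ : SPK K₂) {ε : ℝ} (hε : 0 < shiftGap ε) (i n : ℤ) :
    HasSum (fun k => nystromSymbol N ε (logPartCoeff A₁) (smoothPartCoeff A₁ K₁) (logPartCoeff A₂)
      (smoothPartCoeff A₂ K₂) k n * mode (n + k) (tg (1 / N) ε i))
      (N * ∑ j : ZMod N, Wmat (logKer A₁ K₁) (logKer A₂ K₂) (1 / N) ε i (j.val : ℕ) *
        mode n (tg (1 / N) 0 (j.val : ℕ))) := by
  have hnext := hasSum_gridQuad_mode (N := N) hA₁ hK₁ hε (-1 / 2) (i + 1) n rfl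
  have hprev := hasSum_gridQuad_mode (N := N) hA₁ hK₁ hε (-1 / 2) i n rfl
  have hquad := hasSum_gridQuad_mode (N := N) hA₂ hK₂ hε 0 i n (by rw [zero_add])
  rw [sum_Wmat_mul_mode (periodic_logKer_right hA₁ hK₁)]
  refine ((((hnext.sub hprev).mul_left (N : ℂ)).mul_left (-I * diffSymbol N n)).add
    hquad).congr_fun fun k => ?_
  have hdiff := mul_mode_sub_mode (n + k) N (tg (1 / N) ε i)
  rw [← eq_add_of_sub_eq (tg_sub_half N ε i), ← eq_sub_of_add_eq (tg_add_half N ε i)] at hdiff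
  rw [← mul_sub, mul_left_comm (N : ℂ), hdiff, nystromSymbol]
  linear_combination (diffSymbol N n * diffSymbol N (n + k) * gridLayerSymbol N ε (logPartCoeff A₁)
    (smoothPartCoeff A₁ K₁) k n * mode (n + k) (tg (1 / N) ε i)) * I_sq

end Grid

/-! ### Symbols of order one -/

/-- Symbols `v k n` of order one in the frequency `n`, rapidly decaying in the frequency shift
`k`. -/
def LinearGrowth (v : ℤ → ℤ → ℂ) : Prop :=
  ∀ K : ℕ, ∃ C : ℝ, 0 ≤ C ∧ ∀ k n, ‖v k n‖ ≤ C / bracket k ^ K * bracket n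

lemma LinearGrowth.summable_norm {v : ℤ → ℤ → ℂ} (hv : LinearGrowth v) (n : ℤ) :
    Summable fun k => ‖v k n‖ := by
  obtain ⟨C, -, hC⟩ := hv 2
  refine .of_nonneg_of_le (fun _ => norm_nonneg _) (fun k => (hC k n).trans_eq ?_)
    (summable_inv_bracket_sq.mul_left (C * bracket n))
  ring

lemma LinearGrowth.summable_of_norm_le {v : ℤ → ℤ → ℂ} (hv : LinearGrowth v) {c : ℤ → ℂ} {D : ℝ}
    (hc : ∀ n, ‖c n‖ ≤ D) (m : ℤ) : Summable fun k => v k (m - k) * c (m - k) := by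
  obtain ⟨C, hC0, hC⟩ := hv 3
  refine summable_of_norm_le_inv_bracket_sq (D := C * bracket m * D) fun k => ?_
  have hk := bracket_pos k
  have hm := bracket_pos m
  calc ‖v k (m - k) * c (m - k)‖ ≤ C / bracket k ^ 3 * (bracket m * bracket k) * D := by
        rw [norm_mul]
        gcongr
        · exact (hC k (m - k)).trans (by gcongr; exact bracket_sub_le m k)
        · exact hc (m - k)
    _ = C * bracket m * D * (bracket k ^ 2)⁻¹ := by field_simp

lemma LinearGrowth.summable {v : ℤ → ℤ → ℂ} (hv : LinearGrowth v) {c : ℤ → ℂ} (hc : RapidDecay c)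
    (m : ℤ) : Summable fun k => v k (m - k) * c (m - k) := by
  obtain ⟨D, hD⟩ := hc 0
  exact hv.summable_of_norm_le (fun n => by simpa using hD n) m

lemma LinearGrowth.exists_norm_symbolAct_le {v : ℤ → ℤ → ℂ} (hv : LinearGrowth v) (K : ℕ) :
    ∃ C : ℝ, 0 ≤ C ∧ ∀ (c : ℤ → ℂ) (D : ℝ), (∀ n, ‖c n‖ * bracket n ^ (K + 1) ≤ D) →
      ∀ m, ‖symbolAct v c m‖ * bracket m ^ K ≤ C * D := by
  obtain ⟨C, hC0, hC⟩ := hv (K + 2)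
  refine ⟨C * bracketSum, mul_nonneg hC0 bracketSum_pos.le, fun c D hD m => ?_⟩
  have hD0 : 0 ≤ D := le_trans (by have := bracket_pos 0; positivity) (hD 0)
  have hm := bracket_pos m
  rw [← le_div_iff₀ (by positivity), mul_right_comm, mul_div_right_comm]
  refine norm_tsum_le_mul_bracketSum fun k => ?_
  have hk := bracket_pos k
  have hn := bracket_pos (m - k)
  have hck : ‖c (m - k)‖ ≤ D / bracket (m - k) ^ (K + 1) := by
    rw [le_div_iff₀ (by positivity)]
    exact hD _
  calc ‖v k (m - k) * c (m - k)‖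
      ≤ (C / bracket k ^ (K + 2) * bracket (m - k)) * (D / bracket (m - k) ^ (K + 1)) := by
        rw [norm_mul]
        gcongr
        exact hC k (m - k)
    _ = C * D / (bracket (m - k) * bracket k) ^ K * (bracket k ^ 2)⁻¹ := by
        rw [mul_pow, pow_add, pow_succ]
        field_simp
        ring
    _ ≤ C * D / bracket m ^ K * (bracket k ^ 2)⁻¹ := by
        gcongr
        exact bracket_le_bracket_sub_mul m k

lemma LinearGrowth.rapidDecay_symbolAct {v : ℤ → ℤ → ℂ} (hv : LinearGrowth v) {c : ℤ → ℂ}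
    (hc : RapidDecay c) : RapidDecay (symbolAct v c) := fun K => by
  obtain ⟨C, -, hC⟩ := hv.exists_norm_symbolAct_le K
  obtain ⟨D, hD⟩ := hc (K + 1)
  exact ⟨C * D, hC c D hD⟩

lemma linearGrowth_layerSymbol {β κ : ℤ → ℤ → ℂ} (hβ : RapidDecay₂ β) (hκ : RapidDecay₂ κ) :
    LinearGrowth (layerSymbol β κ) := fun K => by
  obtain ⟨C, hC0, hC⟩ := exists_norm_layerSymbol_le hβ hκ K
  refine ⟨C, hC0, fun k n => (hC k n).trans ?_⟩
  have hk := bracket_pos k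
  have hnonneg : 0 ≤ C / bracket k ^ K := by positivity
  exact (div_le_self hnonneg (one_le_bracket n)).trans
    (le_mul_of_one_le_right hnonneg (one_le_bracket n))

section HypersingularSymbol

variable {β₁ κ₁ β₂ κ₂ : ℤ → ℤ → ℂ} (hβ₁ : RapidDecay₂ β₁) (hκ₁ : RapidDecay₂ κ₁)
  (hβ₂ : RapidDecay₂ β₂) (hκ₂ : RapidDecay₂ κ₂)

include hβ₁ hκ₁ hβ₂ hκ₂

lemma linearGrowth_hypersingularSymbol : LinearGrowth (hypersingularSymbol β₁ κ₁ β₂ κ₂) :=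
    fun K => by
  obtain ⟨C, hC0, hC⟩ := exists_norm_layerSymbol_le hβ₁ hκ₁ (K + 1)
  obtain ⟨D, hD0, hD⟩ := linearGrowth_layerSymbol hβ₂ hκ₂ K
  refine ⟨4 * Real.pi ^ 2 * C + D, by positivity, fun k n => ?_⟩
  have hk := bracket_pos k
  have hn := bracket_pos n
  have hmain : ‖(4 * Real.pi ^ 2 * n * (n + k) * layerSymbol β₁ κ₁ k n : ℂ)‖ ≤
      4 * Real.pi ^ 2 * bracket n * (bracket n * bracket k) *
        (C / bracket k ^ (K + 1) / bracket n) := by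
    have hcast : (n + k : ℂ) = ((n + k : ℤ) : ℂ) := by push_cast; rfl
    have hpi : ‖(4 * Real.pi ^ 2 : ℂ)‖ = 4 * Real.pi ^ 2 := by simp
    rw [hcast, norm_mul, norm_mul, norm_mul, Complex.norm_intCast, Complex.norm_intCast, hpi]
    gcongr
    · exact abs_le_bracket n
    · exact (abs_le_bracket _).trans (bracket_add_le n k)
    · exact hC k n
  calc ‖hypersingularSymbol β₁ κ₁ β₂ κ₂ k n‖
      ≤ 4 * Real.pi ^ 2 * bracket n * (bracket n * bracket k) *
          (C / bracket k ^ (K + 1) / bracket n) + D / bracket k ^ K * bracket n :=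
        norm_add_le_of_le hmain (hD k n)
    _ = (4 * Real.pi ^ 2 * C + D) / bracket k ^ K * bracket n := by
        rw [pow_succ]
        field_simp
        ring

lemma symbolAct_hypersingularSymbol {c : ℤ → ℂ} (hc : RapidDecay c) (m : ℤ) :
    symbolAct (hypersingularSymbol β₁ κ₁ β₂ κ₂) c m =
      -(2 * Real.pi * I * m *
        symbolAct (layerSymbol β₁ κ₁) (fun n => 2 * Real.pi * I * n * c n) m) +
      symbolAct (layerSymbol β₂ κ₂) c m := by
  have hsum₁ := (linearGrowth_layerSymbol hβ₁ hκ₁).summable hc.two_pi_I_mul m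
  have hsum₂ := (linearGrowth_layerSymbol hβ₂ hκ₂).summable hc m
  rw [symbolAct, symbolAct, symbolAct, ← tsum_mul_left, ← tsum_neg,
    ← (hsum₁.mul_left _).neg.tsum_add hsum₂]
  refine tsum_congr fun k => ?_
  rw [hypersingularSymbol]
  push_cast
  linear_combination
    (4 * (Real.pi : ℂ) ^ 2 * m * (m - k) * layerSymbol β₁ κ₁ k (m - k) * c (m - k)) * I_sq

end HypersingularSymbol

section Wop

variable {A₁ K₁ A₂ K₂ : ℝ → ℝ → ℂ} (hA₁ : SPK A₁) (hK₁ : SPK K₁) (hA₂ : SPK A₂) (hK₂ : SPK K₂)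
  {c : ℤ → ℂ} (hc : RapidDecay c)

include hA₁ hK₁ hA₂ hK₂ hc

theorem Wop_fourierSeries (s : ℝ) :
    Wop (logKer A₁ K₁) (logKer A₂ K₂) (fourierSeries c) s =
      fourierSeries (symbolAct (hypersingularSymbol (logPartCoeff A₁) (smoothPartCoeff A₁ K₁)
        (logPartCoeff A₂) (smoothPartCoeff A₂ K₂)) c) s := by
  have hβ₁ := rapidDecay₂_logPartCoeff hA₁
  have hκ₁ := rapidDecay₂_smoothPartCoeff hA₁ hK₁
  have hβ₂ := rapidDecay₂_logPartCoeff hA₂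
  have hκ₂ := rapidDecay₂_smoothPartCoeff hA₂ hK₂
  have hc' := hc.two_pi_I_mul
  have hdecay := (linearGrowth_layerSymbol hβ₁ hκ₁).rapidDecay_symbolAct hc'
  have hVop : Vop (logKer A₁ K₁) (deriv (fourierSeries c)) = fourierSeries (symbolAct
      (layerSymbol (logPartCoeff A₁) (smoothPartCoeff A₁ K₁)) fun n => 2 * Real.pi * I * n * c n) :=
    funext fun x => by
      rw [deriv_fourierSeries hc]
      exact (hasSum_symbolAct_layerSymbol hA₁ hK₁ hc'.summable_norm x).tsum_eq.symm
  have hderiv := (summable_mul_mode hdecay.two_pi_I_mul.summable_norm s).hasSum.neg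
  have hsum := hderiv.add (hasSum_symbolAct_layerSymbol hA₂ hK₂ hc.summable_norm s)
  rw [Wop, hVop, deriv_fourierSeries hdecay]
  refine (hsum.congr_fun fun m => ?_).tsum_eq.symm
  rw [symbolAct_hypersingularSymbol hβ₁ hκ₁ hβ₂ hκ₂ hc]
  ring

lemma eq_zero_of_symbolAct_hypersingularSymbol_eq_zero
    (hinj : ∀ φ : ℝ → ℂ, ContDiff ℝ (⊤ : ℕ∞) φ → Function.Periodic φ 1 →
      (∀ s, Wop (logKer A₁ K₁) (logKer A₂ K₂) φ s = 0) → ∀ s, φ s = 0)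
    (h0 : ∀ m, symbolAct (hypersingularSymbol (logPartCoeff A₁) (smoothPartCoeff A₁ K₁)
      (logPartCoeff A₂) (smoothPartCoeff A₂ K₂)) c m = 0) (n : ℤ) : c n = 0 := by
  have hzero := hinj (fourierSeries c) (contDiff_fourierSeries hc) (periodic_fourierSeries c)
    fun s => by
      rw [Wop_fourierSeries hA₁ hK₁ hA₂ hK₂ hc, fourierSeries]
      simp [h0]
  rw [← fc_fourierSeries hc.summable_norm n, fc_eq_integral_mode]
  simp [hzero]

end Wop

/-! ### The difference symbol -/

lemma abs_sub_sin_le_sq (x : ℝ) : |x - Real.sin x| ≤ x ^ 2 := by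
  rw [← sq_abs]
  rcases le_total |x| 6 with h | h
  · nlinarith [Real.abs_sub_sin_le x, mul_le_mul_of_nonneg_right h (sq_nonneg |x|)]
  · nlinarith [abs_sub x (Real.sin x), Real.abs_sin_le_abs (x := x)]

section DiffSymbol

variable (N : ℕ) [NeZero N]

lemma abs_diffSymbol_le (n : ℤ) : |diffSymbol N n| ≤ 2 * Real.pi * bracket n := by
  have hN : (0 : ℝ) < N := by exact_mod_cast NeZero.pos N
  have hsin := Real.abs_sin_le_abs (x := Real.pi * n / N)
  rw [abs_div, abs_mul, abs_of_pos Real.pi_pos, abs_of_pos hN] at hsin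
  rw [diffSymbol, abs_mul, abs_of_pos (by positivity : (0 : ℝ) < 2 * N)]
  calc 2 * (N : ℝ) * |Real.sin (Real.pi * n / N)| ≤ 2 * N * (Real.pi * |(n : ℝ)| / N) := by gcongr
    _ = 2 * Real.pi * |(n : ℝ)| := by field_simp
    _ ≤ 2 * Real.pi * bracket n := by
        gcongr
        exact abs_le_bracket n

lemma abs_diffSymbol_sub_le (n : ℤ) :
    |diffSymbol N n - 2 * Real.pi * n| ≤ 2 * Real.pi ^ 2 * bracket n ^ 2 / N := by
  have hN : (0 : ℝ) < N := by exact_mod_cast NeZero.pos N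
  have hscale : diffSymbol N n - 2 * Real.pi * n =
      -(2 * N * (Real.pi * n / N - Real.sin (Real.pi * n / N))) := by
    rw [diffSymbol]
    field_simp
    ring
  rw [hscale, abs_neg, abs_mul, abs_of_pos (by positivity : (0 : ℝ) < 2 * N)]
  calc 2 * (N : ℝ) * |Real.pi * n / N - Real.sin (Real.pi * n / N)|
      ≤ 2 * N * (Real.pi * n / N) ^ 2 := by
        gcongr
        exact abs_sub_sin_le_sq _
    _ = 2 * Real.pi ^ 2 * |(n : ℝ)| ^ 2 / N := by
        rw [sq_abs]
        field_simp
    _ ≤ 2 * Real.pi ^ 2 * bracket n ^ 2 / N := by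
        gcongr
        exact abs_le_bracket n

lemma four_mul_abs_le_abs_diffSymbol {n : ℤ} (hn : 2 * |n| ≤ N) :
    4 * |(n : ℝ)| ≤ |diffSymbol N n| := by
  have hN : (0 : ℝ) < N := by exact_mod_cast NeZero.pos N
  have hn' : 2 * |(n : ℝ)| ≤ N := by exact_mod_cast hn
  have habs : |Real.pi * n / N| = Real.pi * |(n : ℝ)| / N := by
    rw [abs_div, abs_mul, abs_of_pos Real.pi_pos, abs_of_pos hN]
  have hsin := Real.mul_abs_le_abs_sin (x := Real.pi * n / N) (by
    rw [habs, div_le_div_iff₀ hN two_pos]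
    nlinarith [Real.pi_pos])
  rw [habs] at hsin
  rw [diffSymbol, abs_mul, abs_of_pos (by positivity : (0 : ℝ) < 2 * N)]
  calc 4 * |(n : ℝ)| = 2 * N * (2 / Real.pi * (Real.pi * |(n : ℝ)| / N)) := by
        field_simp
        ring
    _ ≤ 2 * N * |Real.sin (Real.pi * n / N)| := by gcongr

lemma norm_diffSymbol_mul_le (n k : ℤ) :
    ‖(diffSymbol N n * diffSymbol N (n + k) : ℂ)‖ ≤
      4 * Real.pi ^ 2 * (bracket n ^ 2 * bracket k) := by
  have hn := bracket_pos n
  rw [norm_mul, Complex.norm_real, Complex.norm_real, Real.norm_eq_abs, Real.norm_eq_abs]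
  calc |diffSymbol N n| * |diffSymbol N (n + k)|
      ≤ (2 * Real.pi * bracket n) * (2 * Real.pi * (bracket n * bracket k)) := by
        gcongr
        · exact abs_diffSymbol_le N n
        · exact (abs_diffSymbol_le N _).trans (by gcongr; exact bracket_add_le n k)
    _ = 4 * Real.pi ^ 2 * (bracket n ^ 2 * bracket k) := by ring

lemma abs_diffSymbol_mul_sub_le (n k : ℤ) :
    |diffSymbol N n * diffSymbol N (n + k) - 4 * Real.pi ^ 2 * n * (n + k)| ≤
      8 * Real.pi ^ 3 * (bracket n ^ 3 * bracket k ^ 2) / N := by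
  have hN : (0 : ℝ) < N := by exact_mod_cast NeZero.pos N
  have hn := bracket_pos n
  have hk := one_le_bracket k
  have hnk := bracket_add_le n k
  have hnk0 := bracket_pos (n + k)
  have hsplit : diffSymbol N n * diffSymbol N (n + k) - 4 * Real.pi ^ 2 * n * (n + k) =
      diffSymbol N n * (diffSymbol N (n + k) - 2 * Real.pi * ((n + k : ℤ) : ℝ)) +
        (diffSymbol N n - 2 * Real.pi * n) * (2 * Real.pi * ((n + k : ℤ) : ℝ)) := by
    push_cast
    ring
  rw [hsplit]
  calc |diffSymbol N n * (diffSymbol N (n + k) - 2 * Real.pi * ((n + k : ℤ) : ℝ)) +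
        (diffSymbol N n - 2 * Real.pi * n) * (2 * Real.pi * ((n + k : ℤ) : ℝ))|
      ≤ 2 * Real.pi * bracket n * (2 * Real.pi ^ 2 * (bracket n * bracket k) ^ 2 / N) +
          2 * Real.pi ^ 2 * bracket n ^ 2 / N * (2 * Real.pi * (bracket n * bracket k ^ 2)) := by
        refine (abs_add_le _ _).trans ?_
        rw [abs_mul, abs_mul, abs_mul, abs_of_pos (by positivity : (0 : ℝ) < 2 * Real.pi)]
        gcongr
        · exact abs_diffSymbol_le N n
        · exact (abs_diffSymbol_sub_le N _).trans (by gcongr)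
        · exact abs_diffSymbol_sub_le N n
        · exact ((abs_le_bracket _).trans hnk).trans (by gcongr; nlinarith)
    _ = 8 * Real.pi ^ 3 * (bracket n ^ 3 * bracket k ^ 2) / N := by ring

lemma mul_abs_le_norm_diffSymbol_mul_gridLogCoeff {ε : ℝ} (hε : 0 < shiftGap ε) {n : ℤ}
    (hn : 2 * |n| ≤ N) :
    shiftGap ε ^ 3 / 32 * |(n : ℝ)| ≤
      ‖(diffSymbol N n * diffSymbol N n : ℂ) * gridLogCoeff N ε n‖ := by
  rcases eq_or_ne n 0 with rfl | h0
  · rw [Int.cast_zero, abs_zero, mul_zero]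
    exact norm_nonneg _
  have hpos : 0 < |(n : ℝ)| := by positivity
  have hlog : shiftGap ε ^ 3 / 512 / |(n : ℝ)| ≤ ‖gridLogCoeff N ε n‖ := by
    rw [div_le_iff₀ hpos]
    exact le_norm_gridLogCoeff_mul hn hε h0
  have hdiff := four_mul_abs_le_abs_diffSymbol N hn
  rw [norm_mul, norm_mul, Complex.norm_real, Real.norm_eq_abs]
  calc shiftGap ε ^ 3 / 32 * |(n : ℝ)|
      = (4 * |(n : ℝ)|) * (4 * |(n : ℝ)|) * (shiftGap ε ^ 3 / 512 / |(n : ℝ)|) := by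
        field_simp
        norm_num
    _ ≤ |diffSymbol N n| * |diffSymbol N n| * ‖gridLogCoeff N ε n‖ := by gcongr

end DiffSymbol

/-! ### Uniform estimates for the symbols of the Nyström matrices -/

/-- The properties of the symbol `w` of the operator and of the symbols `W N` of its
discretizations on which stability and convergence rest: `w` has order one, `W N` approximates it
with one power of `1 / N` on the modes `2 * |n| ≤ N`, the part of `W N` off the diagonal `k = 0` has
order zero, and its diagonal is elliptic of order one. -/
structure EllipticFamily (w : ℤ → ℤ → ℂ) (W : ℕ → ℤ → ℤ → ℂ) : Prop where
  linearGrowth : LinearGrowth w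
  exists_norm_sub_le : ∀ K : ℕ, ∃ C : ℝ, 0 ≤ C ∧ ∀ (N : ℕ) [NeZero N] (k n : ℤ), 2 * |n| ≤ N →
    ‖W N k n - w k n‖ ≤ C / bracket k ^ K * bracket n ^ 2 / N
  exists_norm_offDiag_le : ∀ K : ℕ, ∃ C : ℝ, 0 ≤ C ∧ ∀ (N : ℕ) [NeZero N] (k n : ℤ), k ≠ 0 →
    2 * |n| ≤ N → ‖W N k n‖ ≤ C / bracket k ^ K
  exists_le_norm_diag : ∃ c : ℝ, 0 < c ∧ ∃ C : ℝ, 0 ≤ C ∧ ∀ (N : ℕ) [NeZero N] (n : ℤ),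
    2 * |n| ≤ N → c * bracket n - C ≤ ‖W N 0 n‖

section NystromSymbol

variable {β₁ κ₁ β₂ κ₂ : ℤ → ℤ → ℂ} (hβ₁ : RapidDecay₂ β₁) (hκ₁ : RapidDecay₂ κ₁)
  (hβ₂ : RapidDecay₂ β₂) (hκ₂ : RapidDecay₂ κ₂) {ε : ℝ} (hε : 0 < shiftGap ε)

include hβ₁ hκ₁ hβ₂ hκ₂ hε

lemma exists_norm_nystromSymbol_sub_le (K : ℕ) :
    ∃ C : ℝ, 0 ≤ C ∧ ∀ (N : ℕ) [NeZero N] (k n : ℤ), 2 * |n| ≤ N →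
      ‖nystromSymbol N ε β₁ κ₁ β₂ κ₂ k n - hypersingularSymbol β₁ κ₁ β₂ κ₂ k n‖ ≤
        C / bracket k ^ K * bracket n ^ 2 / N := by
  obtain ⟨C₁, hC₁, hgrid₁⟩ := exists_norm_gridLayerSymbol_sub_le hβ₁ hκ₁ hε (K + 1)
  obtain ⟨C₂, hC₂, hlayer⟩ := exists_norm_layerSymbol_le hβ₁ hκ₁ (K + 2)
  obtain ⟨C₃, hC₃, hgrid₂⟩ := exists_norm_gridLayerSymbol_sub_le hβ₂ hκ₂ hε K
  refine ⟨4 * Real.pi ^ 2 * C₁ + 8 * Real.pi ^ 3 * C₂ + C₃, by positivity, fun N _ k n hn => ?_⟩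
  have hN : (0 : ℝ) < N := by exact_mod_cast NeZero.pos N
  have hbn := bracket_pos n
  have hbk := bracket_pos k
  have hone : 1 ≤ bracket n ^ 2 := one_le_pow₀ (one_le_bracket n)
  have hsplit : nystromSymbol N ε β₁ κ₁ β₂ κ₂ k n - hypersingularSymbol β₁ κ₁ β₂ κ₂ k n =
      (diffSymbol N n * diffSymbol N (n + k)) *
        (gridLayerSymbol N ε β₁ κ₁ k n - layerSymbol β₁ κ₁ k n) +
      ((diffSymbol N n * diffSymbol N (n + k) - 4 * Real.pi ^ 2 * n * (n + k) : ℝ) : ℂ) *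
        layerSymbol β₁ κ₁ k n +
      (gridLayerSymbol N ε β₂ κ₂ k n - layerSymbol β₂ κ₂ k n) := by
    rw [nystromSymbol, hypersingularSymbol]
    push_cast
    ring
  rw [hsplit]
  refine norm_add₃_le.trans ?_
  rw [norm_mul (_ * _), norm_mul (ofReal _) (layerSymbol _ _ _ _), Complex.norm_real (_ - _),
    Real.norm_eq_abs]
  calc ‖(diffSymbol N n * diffSymbol N (n + k) : ℂ)‖ *
          ‖gridLayerSymbol N ε β₁ κ₁ k n - layerSymbol β₁ κ₁ k n‖ +
        |diffSymbol N n * diffSymbol N (n + k) - 4 * Real.pi ^ 2 * n * (n + k)| *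
          ‖layerSymbol β₁ κ₁ k n‖ + ‖gridLayerSymbol N ε β₂ κ₂ k n - layerSymbol β₂ κ₂ k n‖
      ≤ 4 * Real.pi ^ 2 * (bracket n ^ 2 * bracket k) * (C₁ / bracket k ^ (K + 1) / N) +
          8 * Real.pi ^ 3 * (bracket n ^ 3 * bracket k ^ 2) / N *
            (C₂ / bracket k ^ (K + 2) / bracket n) + C₃ / bracket k ^ K * bracket n ^ 2 / N := by
        gcongr
        · exact norm_diffSymbol_mul_le N n k
        · exact hgrid₁ N k n hn
        · exact abs_diffSymbol_mul_sub_le N n k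
        · exact hlayer k n
        · exact (hgrid₂ N k n hn).trans
            (by gcongr; exact le_mul_of_one_le_right (by positivity) hone)
    _ = (4 * Real.pi ^ 2 * C₁ + 8 * Real.pi ^ 3 * C₂ + C₃) / bracket k ^ K * bracket n ^ 2 / N := by
        rw [pow_add, pow_add]
        field_simp

variable {α : ℂ} (hα : ∀ k, HasSum (fun l => β₁ k l) (if k = 0 then α else 0))

include hα

lemma exists_norm_nystromSymbol_sub_main_le (K : ℕ) :
    ∃ C : ℝ, 0 ≤ C ∧ ∀ (N : ℕ) [NeZero N] (k n : ℤ), 2 * |n| ≤ N →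
      ‖nystromSymbol N ε β₁ κ₁ β₂ κ₂ k n - (if k = 0 then α else 0) *
        ((diffSymbol N n * diffSymbol N (n + k)) * gridLogCoeff N ε n)‖ ≤ C / bracket k ^ K := by
  obtain ⟨C₁, hC₁, hmain⟩ := exists_norm_gridLayerSymbol_sub_main_le hβ₁ hκ₁ hα hε (K + 1)
  obtain ⟨C₂, hC₂, hrest⟩ := exists_norm_gridLayerSymbol_le hβ₂ hκ₂ hε K
  refine ⟨4 * Real.pi ^ 2 * C₁ + C₂, by positivity, fun N _ k n hn => ?_⟩
  have hbn := bracket_pos n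
  have hbk := bracket_pos k
  have hsplit : nystromSymbol N ε β₁ κ₁ β₂ κ₂ k n - (if k = 0 then α else 0) *
        ((diffSymbol N n * diffSymbol N (n + k)) * gridLogCoeff N ε n) =
      (diffSymbol N n * diffSymbol N (n + k)) *
        (gridLayerSymbol N ε β₁ κ₁ k n - (if k = 0 then α else 0) * gridLogCoeff N ε n) +
      gridLayerSymbol N ε β₂ κ₂ k n := by
    rw [nystromSymbol]
    ring
  calc ‖nystromSymbol N ε β₁ κ₁ β₂ κ₂ k n - (if k = 0 then α else 0) *
        ((diffSymbol N n * diffSymbol N (n + k)) * gridLogCoeff N ε n)‖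
      ≤ 4 * Real.pi ^ 2 * (bracket n ^ 2 * bracket k) *
          (C₁ / bracket k ^ (K + 1) / bracket n ^ 2) + C₂ / bracket k ^ K := by
        rw [hsplit]
        refine norm_add_le_of_le ?_ (hrest N k n)
        rw [norm_mul]
        gcongr
        · exact norm_diffSymbol_mul_le N n k
        · exact hmain N k n hn
    _ = (4 * Real.pi ^ 2 * C₁ + C₂) / bracket k ^ K := by
        rw [pow_succ]
        field_simp
        ring

lemma exists_le_norm_nystromSymbol_diag (hα0 : α ≠ 0) :
    ∃ c : ℝ, 0 < c ∧ ∃ C : ℝ, 0 ≤ C ∧ ∀ (N : ℕ) [NeZero N] (n : ℤ), 2 * |n| ≤ N →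
      c * bracket n - C ≤ ‖nystromSymbol N ε β₁ κ₁ β₂ κ₂ 0 n‖ := by
  obtain ⟨C, hC0, hC⟩ := exists_norm_nystromSymbol_sub_main_le hβ₁ hκ₁ hβ₂ hκ₂ hε hα 0
  have hα' : 0 < ‖α‖ := norm_pos_iff.2 hα0
  refine ⟨‖α‖ * (shiftGap ε ^ 3 / 32), by positivity, ‖α‖ * (shiftGap ε ^ 3 / 32) + C,
    by positivity, fun N _ n hn => ?_⟩
  have hrest := hC N 0 n hn
  have hmain := mul_abs_le_norm_diffSymbol_mul_gridLogCoeff N hε hn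
  rw [if_pos rfl, add_zero, pow_zero, div_one, norm_sub_rev] at hrest
  have htri := norm_sub_norm_le
    (α * ((diffSymbol N n * diffSymbol N n : ℂ) * gridLogCoeff N ε n))
    (nystromSymbol N ε β₁ κ₁ β₂ κ₂ 0 n)
  rw [norm_mul] at htri
  have hscaled := mul_le_mul_of_nonneg_left hmain hα'.le
  rw [bracket]
  linarith

/-- The logarithmic coefficient being constant on `s = t`, the principal part of the symbol is
carried by the diagonal `k = 0`. -/
theorem ellipticFamily_nystromSymbol (hα0 : α ≠ 0) :
    EllipticFamily (hypersingularSymbol β₁ κ₁ β₂ κ₂)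
      fun N => nystromSymbol N ε β₁ κ₁ β₂ κ₂ where
  linearGrowth := linearGrowth_hypersingularSymbol hβ₁ hκ₁ hβ₂ hκ₂
  exists_norm_sub_le := exists_norm_nystromSymbol_sub_le hβ₁ hκ₁ hβ₂ hκ₂ hε
  exists_norm_offDiag_le K := by
    obtain ⟨C, hC0, hC⟩ := exists_norm_nystromSymbol_sub_main_le hβ₁ hκ₁ hβ₂ hκ₂ hε hα K
    exact ⟨C, hC0, fun N _ k n hk hn => by simpa [hk] using hC N k n hn⟩
  exists_le_norm_diag := exists_le_norm_nystromSymbol_diag hβ₁ hκ₁ hβ₂ hκ₂ hε hα hα0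

end NystromSymbol

lemma eventually_two_mul_abs_lt (n : ℤ) : ∀ᶠ N : ℕ in atTop, 2 * |n| < N := by
  filter_upwards [eventually_gt_atTop (2 * n.natAbs)] with N hN
  rw [Int.abs_eq_natAbs]
  omega

namespace EllipticFamily

variable {w : ℤ → ℤ → ℂ} {W : ℕ → ℤ → ℤ → ℂ} (h : EllipticFamily w W)

include h

lemma exists_norm_le (K : ℕ) :
    ∃ C : ℝ, 0 ≤ C ∧ ∀ (N : ℕ) [NeZero N] (k n : ℤ), 2 * |n| ≤ N →
      ‖W N k n‖ ≤ C / bracket k ^ K * bracket n := by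
  obtain ⟨C₁, hC₁, hw⟩ := h.linearGrowth K
  obtain ⟨C₂, hC₂, hsub⟩ := h.exists_norm_sub_le K
  refine ⟨C₂ * (3 / 2) + C₁, by positivity, fun N _ k n hn => ?_⟩
  have hbn := bracket_pos n
  have hbk := bracket_pos k
  calc ‖W N k n‖ = ‖(W N k n - w k n) + w k n‖ := by rw [sub_add_cancel]
    _ ≤ C₂ / bracket k ^ K * bracket n ^ 2 * (1 / N) + C₁ / bracket k ^ K * bracket n := by
        refine norm_add_le_of_le ((hsub N k n hn).trans_eq ?_) (hw k n)
        ring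
    _ ≤ C₂ / bracket k ^ K * bracket n ^ 2 * (3 / 2 / bracket n) +
          C₁ / bracket k ^ K * bracket n := by
        gcongr C₂ / bracket k ^ K * bracket n ^ 2 * ?_ + _
        exact one_div_le_div_bracket hn
    _ = (C₂ * (3 / 2) + C₁) / bracket k ^ K * bracket n := by field_simp

lemma tendsto (k n : ℤ) : Tendsto (fun N => W N k n) atTop (𝓝 (w k n)) := by
  obtain ⟨C, -, hC⟩ := h.exists_norm_sub_le 0
  rw [tendsto_iff_norm_sub_tendsto_zero]
  refine squeeze_zero' (.of_forall fun _ => norm_nonneg _) ?_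
    (tendsto_const_div_atTop_nhds_zero_nat (C / bracket k ^ 0 * bracket n ^ 2))
  filter_upwards [eventually_two_mul_abs_lt n] with N hN
  have : NeZero N := ⟨by have := abs_nonneg n; omega⟩
  exact hC N k n hN.le

lemma exists_norm_limit_offDiag_le (K : ℕ) :
    ∃ C : ℝ, ∀ k n : ℤ, k ≠ 0 → ‖w k n‖ ≤ C / bracket k ^ K := by
  obtain ⟨C, -, hC⟩ := h.exists_norm_offDiag_le K
  refine ⟨C, fun k n hk => le_of_tendsto (h.tendsto k n).norm ?_⟩
  filter_upwards [eventually_two_mul_abs_lt n] with N hN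
  have : NeZero N := ⟨by have := abs_nonneg n; omega⟩
  exact hC N k n hk hN.le

lemma exists_le_norm_limit_diag :
    ∃ c : ℝ, 0 < c ∧ ∃ C : ℝ, 0 ≤ C ∧ ∀ n : ℤ, c * bracket n - C ≤ ‖w 0 n‖ := by
  obtain ⟨c, hc, C, hC0, hC⟩ := h.exists_le_norm_diag
  refine ⟨c, hc, C, hC0, fun n => ge_of_tendsto (h.tendsto 0 n).norm ?_⟩
  filter_upwards [eventually_two_mul_abs_lt n] with N hN
  have : NeZero N := ⟨by have := abs_nonneg n; omega⟩
  exact hC N n hN.le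

end EllipticFamily

/-! ### Symbols acting on grid vectors -/

section ValMinAbs

variable {N : ℕ} [NeZero N]

lemma two_mul_abs_valMinAbs_le (a : ZMod N) : 2 * |a.valMinAbs| ≤ N := by
  have := ZMod.natAbs_valMinAbs_le a
  rw [Int.abs_eq_natAbs]
  omega

lemma valMinAbs_intCast_of_two_mul_abs_lt {m : ℤ} (hm : 2 * |m| < N) :
    (m : ZMod N).valMinAbs = m := by
  have := abs_lt.1 (show |m * 2| < N by rw [abs_mul, abs_two]; omega)
  exact (ZMod.valMinAbs_spec _ _).2 ⟨rfl, this.1, this.2.le⟩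

lemma abs_valMinAbs_intCast_le (m : ℤ) : |(m : ZMod N).valMinAbs| ≤ |m| := by
  rcases lt_or_ge (2 * |m|) N with hm | hm
  · rw [valMinAbs_intCast_of_two_mul_abs_lt hm]
  · have := two_mul_abs_valMinAbs_le (m : ZMod N)
    omega

lemma bracket_valMinAbs_le (μ : ZMod N) (k : ℤ) :
    bracket μ.valMinAbs ≤ bracket k * bracket (μ - k).valMinAbs := by
  have hμ : ((k + (μ - k).valMinAbs : ℤ) : ZMod N) = μ := by
    push_cast
    ring
  have hle := abs_valMinAbs_intCast_le (N := N) (k + (μ - k).valMinAbs)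
  rw [hμ] at hle
  exact (bracket_le_of_abs_le (by exact_mod_cast hle)).trans (bracket_add_le _ _)

end ValMinAbs

/-- The contribution of the frequency shift `k` to `gridSymbolAct N ε u c μ`. The frequency
`k + (μ - k).valMinAbs`, in general outside the fundamental range, is folded back to `μ.valMinAbs`,
which costs a phase on the grid shifted by `ε / N`. -/
noncomputable def gridSymbolTerm (N : ℕ) (ε : ℝ) (u : ℤ → ℤ → ℂ) (c : ZMod N → ℂ) (μ : ZMod N)
    (k : ℤ) : ℂ :=
  mode (k + (μ - k).valMinAbs - μ.valMinAbs) (ε / N) * (u k (μ - k).valMinAbs * c (μ - k))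

/-- The action of a symbol `u` on the discrete Fourier coefficients `c` of a grid vector; the entry
at `μ : ZMod N` belongs to the frequency `μ.valMinAbs`. -/
noncomputable def gridSymbolAct (N : ℕ) (ε : ℝ) (u : ℤ → ℤ → ℂ) (c : ZMod N → ℂ) (μ : ZMod N) : ℂ :=
  ∑' k, gridSymbolTerm N ε u c μ k

section GridSymbolAct

variable {N : ℕ} {ε : ℝ} {u : ℤ → ℤ → ℂ}

lemma norm_gridSymbolTerm (c : ZMod N → ℂ) (μ : ZMod N) (k : ℤ) :
    ‖gridSymbolTerm N ε u c μ k‖ = ‖u k (μ - k).valMinAbs‖ * ‖c (μ - k)‖ := by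
  rw [gridSymbolTerm, norm_mul, norm_mode, one_mul, norm_mul]

lemma gridSymbolTerm_zero_right (c : ZMod N → ℂ) (μ : ZMod N) :
    gridSymbolTerm N ε u c μ 0 = u 0 μ.valMinAbs * c μ := by
  simp [gridSymbolTerm]

lemma gridSymbolAct_const_mul (r : ℂ) (c : ZMod N → ℂ) (μ : ZMod N) :
    gridSymbolAct N ε u (fun a => r * c a) μ = r * gridSymbolAct N ε u c μ := by
  rw [gridSymbolAct, gridSymbolAct, ← tsum_mul_left]
  exact tsum_congr fun k => by rw [gridSymbolTerm, gridSymbolTerm]; ring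

variable [NeZero N] (hu : ∀ a : ZMod N, Summable fun k => ‖u k a.valMinAbs‖)

include hu

lemma summable_gridSymbolTerm (c : ZMod N → ℂ) (μ : ZMod N) :
    Summable (gridSymbolTerm N ε u c μ) := by
  refine .of_norm_bounded (summable_sum (s := Finset.univ) fun a _ => (hu a).mul_right ‖c a‖)
    fun k => ?_
  rw [norm_gridSymbolTerm]
  exact Finset.single_le_sum (f := fun a => ‖u k a.valMinAbs‖ * ‖c a‖)
    (fun a _ => by positivity) (Finset.mem_univ (μ - (k : ZMod N)))

lemma isLinearMap_gridSymbolAct : IsLinearMap ℂ (gridSymbolAct N ε u) where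
  map_add b c := funext fun μ => by
    rw [Pi.add_apply, gridSymbolAct, gridSymbolAct, gridSymbolAct,
      ← (summable_gridSymbolTerm hu b μ).tsum_add (summable_gridSymbolTerm hu c μ)]
    exact tsum_congr fun k => by
      rw [gridSymbolTerm, gridSymbolTerm, gridSymbolTerm, Pi.add_apply]
      ring
  map_smul r c := funext (gridSymbolAct_const_mul r c)

end GridSymbolAct

/-! ### Stability -/

section EllipticFamily

variable {w : ℤ → ℤ → ℂ} {W : ℕ → ℤ → ℤ → ℂ} (h : EllipticFamily w W)

include h

lemma EllipticFamily.summable_norm {N : ℕ} [NeZero N] (a : ZMod N) :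
    Summable fun k => ‖W N k a.valMinAbs‖ := by
  obtain ⟨C, -, hC⟩ := h.exists_norm_le 2
  refine .of_nonneg_of_le (fun _ => norm_nonneg _)
    (fun k => (hC N k a.valMinAbs (two_mul_abs_valMinAbs_le a)).trans_eq ?_)
    (summable_inv_bracket_sq.mul_left (C * bracket a.valMinAbs))
  ring

lemma EllipticFamily.exists_norm_gridSymbolTerm_le (ε : ℝ) :
    ∃ C : ℝ, ∀ (N : ℕ) [NeZero N] (c : ZMod N → ℂ),
      (∀ a, ‖c a‖ * bracket a.valMinAbs ^ 2 ≤ 1) → ∀ (μ : ZMod N) (k : ℤ),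
      ‖gridSymbolTerm N ε (W N) c μ k‖ ≤ C * (bracket k ^ 2)⁻¹ := by
  obtain ⟨C, hC0, hC⟩ := h.exists_norm_le 2
  refine ⟨C, fun N _ c hc μ k => ?_⟩
  have hk := bracket_pos k
  have hμ := one_le_bracket (μ - k).valMinAbs
  calc ‖gridSymbolTerm N ε (W N) c μ k‖
      ≤ C / bracket k ^ 2 * bracket (μ - k).valMinAbs * ‖c (μ - k)‖ := by
        rw [norm_gridSymbolTerm]
        gcongr
        exact hC N k _ (two_mul_abs_valMinAbs_le _)
    _ ≤ C / bracket k ^ 2 * (‖c (μ - k)‖ * bracket (μ - k).valMinAbs ^ 2) := by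
        rw [mul_assoc, mul_comm (bracket _)]
        gcongr
        exact le_self_pow₀ hμ two_ne_zero
    _ ≤ C * (bracket k ^ 2)⁻¹ := by
        rw [div_eq_mul_inv]
        exact mul_le_of_le_one_right (by positivity) (hc _)

lemma EllipticFamily.exists_norm_gridSymbolAct_sub_diag_le (ε : ℝ) :
    ∃ C : ℝ, ∀ (N : ℕ) [NeZero N] (c : ZMod N → ℂ),
      (∀ a, ‖c a‖ * bracket a.valMinAbs ^ 2 ≤ 1) → ∀ μ : ZMod N,
      ‖gridSymbolAct N ε (W N) c μ - W N 0 μ.valMinAbs * c μ‖ ≤ C / bracket μ.valMinAbs ^ 2 := by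
  obtain ⟨C, hC0, hC⟩ := h.exists_norm_offDiag_le 4
  refine ⟨C * bracketSum, fun N _ c hc μ => ?_⟩
  have hμ := bracket_pos μ.valMinAbs
  rw [gridSymbolAct, (summable_gridSymbolTerm h.summable_norm c μ).tsum_eq_add_tsum_ite 0,
    gridSymbolTerm_zero_right, add_sub_cancel_left, mul_div_right_comm]
  refine norm_tsum_le_mul_bracketSum fun k => ?_
  have hk := bracket_pos k
  have hμk := bracket_pos (μ - k).valMinAbs
  split_ifs with hk0
  · rw [norm_zero]
    positivity
  · calc ‖gridSymbolTerm N ε (W N) c μ k‖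
        ≤ C / bracket k ^ 4 * (1 / bracket (μ - k).valMinAbs ^ 2) := by
          rw [norm_gridSymbolTerm]
          gcongr
          · exact hC N k _ hk0 (two_mul_abs_valMinAbs_le _)
          · exact (le_div_iff₀ (by positivity)).2 (hc _)
      _ = C / (bracket k * bracket (μ - k).valMinAbs) ^ 2 * (bracket k ^ 2)⁻¹ := by field_simp
      _ ≤ C / bracket μ.valMinAbs ^ 2 * (bracket k ^ 2)⁻¹ := by
          gcongr
          exact bracket_valMinAbs_le μ k

lemma EllipticFamily.exists_mul_bracket_sub_le (ε : ℝ) :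
    ∃ r : ℝ, 0 < r ∧ ∃ C : ℝ, ∀ (N : ℕ) [NeZero N] (c : ZMod N → ℂ),
      (∀ a, ‖c a‖ * bracket a.valMinAbs ^ 2 ≤ 1) →
      ∀ ν : ZMod N, ‖c ν‖ * bracket ν.valMinAbs ^ 2 = 1 →
      r * bracket ν.valMinAbs - C ≤ ‖gridSymbolAct N ε (W N) c ν‖ * bracket ν.valMinAbs ^ 2 := by
  obtain ⟨r, hr, C₀, -, hdiag⟩ := h.exists_le_norm_diag
  obtain ⟨C₁, hsub⟩ := h.exists_norm_gridSymbolAct_sub_diag_le ε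
  refine ⟨r, hr, C₀ + C₁, fun N _ c hc ν hν => ?_⟩
  have hb := bracket_pos ν.valMinAbs
  have hle : ‖W N 0 ν.valMinAbs‖ * ‖c ν‖ ≤
      ‖gridSymbolAct N ε (W N) c ν‖ + C₁ / bracket ν.valMinAbs ^ 2 := by
    rw [← norm_mul]
    exact norm_le_norm_add_norm_sub _ _ |>.trans (by gcongr; exact hsub N c hc ν)
  have hmul := mul_le_mul_of_nonneg_right hle (sq_nonneg (bracket ν.valMinAbs))
  rw [mul_assoc, hν, mul_one, add_mul, div_mul_cancel₀ _ (by positivity)] at hmul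
  linarith [hdiag N ν.valMinAbs (two_mul_abs_valMinAbs_le ν)]

section NullSequence

variable {x : ℤ → ℂ} (hnull : ∀ m, symbolAct w x m = 0)

include hnull

lemma EllipticFamily.exists_norm_diag_mul_le {K : ℕ} {D : ℝ}
    (hD : ∀ n, ‖x n‖ * bracket n ^ K ≤ D) : ∃ C, ∀ m, ‖w 0 m * x m‖ ≤ C / bracket m ^ K := by
  obtain ⟨C, hC⟩ := h.exists_norm_limit_offDiag_le (K + 2)
  have hx : ∀ n, ‖x n‖ ≤ D / bracket n ^ K := fun n =>
    (le_div_iff₀ (pow_pos (bracket_pos n) K)).2 (hD n)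
  have hx' : ∀ n, ‖x n‖ ≤ D := fun n =>
    (le_mul_of_one_le_right (norm_nonneg _) (one_le_pow₀ (one_le_bracket n))).trans (hD n)
  have hD0 : 0 ≤ D := (norm_nonneg _).trans (hx' 0)
  refine ⟨|C| * D * bracketSum, fun m => ?_⟩
  have hm := bracket_pos m
  have hsplit := hnull m
  rw [symbolAct, (h.linearGrowth.summable_of_norm_le hx' m).tsum_eq_add_tsum_ite 0, sub_zero]
    at hsplit
  rw [eq_neg_of_add_eq_zero_left hsplit, norm_neg, mul_div_right_comm]
  refine norm_tsum_le_mul_bracketSum fun k => ?_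
  have hk := bracket_pos k
  have hmk := bracket_pos (m - k)
  split_ifs with hk0
  · rw [norm_zero]
    positivity
  · calc ‖w k (m - k) * x (m - k)‖ ≤ |C| / bracket k ^ (K + 2) * (D / bracket (m - k) ^ K) := by
          rw [norm_mul]
          gcongr
          · exact (hC k (m - k) hk0).trans (by gcongr; exact le_abs_self C)
          · exact hx (m - k)
      _ = |C| * D / (bracket (m - k) * bracket k) ^ K * (bracket k ^ 2)⁻¹ := by
          rw [mul_pow, pow_add]
          field_simp
      _ ≤ |C| * D / bracket m ^ K * (bracket k ^ 2)⁻¹ := by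
          gcongr
          exact bracket_le_bracket_sub_mul m k

lemma EllipticFamily.exists_norm_mul_bracket_pow_succ_le {K : ℕ} {D : ℝ}
    (hD : ∀ n, ‖x n‖ * bracket n ^ K ≤ D) : ∃ D', ∀ n, ‖x n‖ * bracket n ^ (K + 1) ≤ D' := by
  obtain ⟨r, hr, C₀, hC₀, hdiag⟩ := h.exists_le_norm_limit_diag
  obtain ⟨C, hC⟩ := h.exists_norm_diag_mul_le hnull hD
  refine ⟨(C₀ * D + C) / r, fun m => ?_⟩
  have hm := bracket_pos m
  have hle : (r * bracket m - C₀) * ‖x m‖ * bracket m ^ K ≤ C := by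
    rw [← le_div_iff₀ (by positivity)]
    refine le_trans ?_ (hC m)
    rw [norm_mul]
    gcongr
    exact hdiag m
  have hmul : C₀ * (‖x m‖ * bracket m ^ K) ≤ C₀ * D := by
    gcongr
    exact hD m
  rw [le_div_iff₀ hr, pow_succ]
  linarith

/-- Each application of ellipticity gains one order of decay. -/
lemma EllipticFamily.rapidDecay_of_symbolAct_eq_zero {D : ℝ} (hD : ∀ n, ‖x n‖ ≤ D) :
    RapidDecay x := fun K => by
  induction K with
  | zero => exact ⟨D, by simpa using hD⟩
  | succ K ih =>
    obtain ⟨D', hD'⟩ := ih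
    exact h.exists_norm_mul_bracket_pow_succ_le hnull hD'

end NullSequence

end EllipticFamily

/-- Stability of the discretizations with symbols `W N` on the grids shifted by `ε / N`, uniformly
in large `N`, in weighted maximum norms of the discrete Fourier coefficients. -/
def UniformlyStable (ε : ℝ) (W : ℕ → ℤ → ℤ → ℂ) : Prop :=
  ∃ C : ℝ, 0 < C ∧ ∃ N₀ : ℕ, ∀ (N : ℕ) [NeZero N], N₀ ≤ N → ∀ (c : ZMod N → ℂ) (B : ℝ),
    (∀ μ, ‖gridSymbolAct N ε (W N) c μ‖ * bracket μ.valMinAbs ≤ B) →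
    ∀ μ, ‖c μ‖ * bracket μ.valMinAbs ^ 2 ≤ C * B

/-- A sequence of normalized coefficient vectors `c M` on grids of `N M → ∞` points, attaining
their norm at `ν M`, whose images under the symbols `W (N M)` tend to zero. -/
structure AlmostNull (ε : ℝ) (W : ℕ → ℤ → ℤ → ℂ) (N : ℕ → ℕ) (c : ∀ M, ZMod (N M) → ℂ)
    (ν : ∀ M, ZMod (N M)) : Prop where
  tendsto : Tendsto N atTop atTop
  le_one : ∀ M a, ‖c M a‖ * bracket a.valMinAbs ^ 2 ≤ 1
  eq_one : ∀ M, ‖c M (ν M)‖ * bracket (ν M).valMinAbs ^ 2 = 1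
  act_le : ∀ M μ,
    ‖gridSymbolAct (N M) ε (W (N M)) (c M) μ‖ * bracket μ.valMinAbs ≤ 1 / ((M : ℝ) + 1)

lemma exists_normalized {ε : ℝ} {N : ℕ} [NeZero N] {u : ℤ → ℤ → ℂ} {c : ZMod N → ℂ} {B R : ℝ}
    (hR : 0 < R) (hB : ∀ μ, ‖gridSymbolAct N ε u c μ‖ * bracket μ.valMinAbs ≤ B) {μ₀ : ZMod N}
    (hμ₀ : R * B < ‖c μ₀‖ * bracket μ₀.valMinAbs ^ 2) :
    ∃ (c' : ZMod N → ℂ) (ν : ZMod N), (∀ a, ‖c' a‖ * bracket a.valMinAbs ^ 2 ≤ 1) ∧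
      ‖c' ν‖ * bracket ν.valMinAbs ^ 2 = 1 ∧
      ∀ μ, ‖gridSymbolAct N ε u c' μ‖ * bracket μ.valMinAbs ≤ 1 / R := by
  obtain ⟨ν, hν⟩ := Finite.exists_max fun a : ZMod N => ‖c a‖ * bracket a.valMinAbs ^ 2
  set P := ‖c ν‖ * bracket ν.valMinAbs ^ 2
  have hB0 : 0 ≤ B := le_trans (by have := bracket_pos μ₀.valMinAbs; positivity) (hB μ₀)
  have hRB : R * B < P := hμ₀.trans_le (hν μ₀)
  have hP0 : 0 < P := lt_of_le_of_lt (by positivity) hRB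
  have hnorm : ‖((P⁻¹ : ℝ) : ℂ)‖ = P⁻¹ := by
    rw [Complex.norm_real, Real.norm_of_nonneg (inv_nonneg.2 hP0.le)]
  refine ⟨fun a => ((P⁻¹ : ℝ) : ℂ) * c a, ν, fun a => ?_, ?_, fun μ => ?_⟩
  · rw [norm_mul, hnorm, mul_assoc, inv_mul_le_one₀ hP0]
    exact hν a
  · rw [norm_mul, hnorm, mul_assoc, inv_mul_cancel₀ hP0.ne']
  · rw [gridSymbolAct_const_mul, norm_mul, hnorm, mul_assoc, inv_mul_le_iff₀ hP0, mul_one_div,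
      le_div_iff₀ hR]
    exact (mul_le_mul_of_nonneg_right (hB μ) hR.le).trans (by linarith)

lemma exists_almostNull {ε : ℝ} {W : ℕ → ℤ → ℤ → ℂ} (hbad : ¬ UniformlyStable ε W) :
    ∃ (N : ℕ → ℕ) (_ : ∀ M, NeZero (N M)) (c : ∀ M, ZMod (N M) → ℂ) (ν : ∀ M, ZMod (N M)),
      AlmostNull ε W N c ν := by
  simp only [UniformlyStable, not_exists, not_and, not_forall, not_le] at hbad
  have hR : ∀ M : ℕ, (0 : ℝ) < M + 1 := fun M => by positivity
  choose N hN hMN c B hB μ hμ using fun M : ℕ => hbad (M + 1) (hR M) M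
  choose c' ν hle heq hact using fun M => exists_normalized (hR M) (hB M) (hμ M)
  exact ⟨N, hN, c', ν, tendsto_atTop_mono hMN tendsto_id, hle, heq, hact⟩

namespace AlmostNull

variable {ε : ℝ} {w : ℤ → ℤ → ℂ} {W : ℕ → ℤ → ℤ → ℂ} {N : ℕ → ℕ} {c : ∀ M, ZMod (N M) → ℂ}
  {ν : ∀ M, ZMod (N M)} (hc : AlmostNull ε W N c ν)

include hc

lemma norm_le_one (M : ℕ) (a : ZMod (N M)) : ‖c M a‖ ≤ 1 :=
  (le_mul_of_one_le_right (norm_nonneg _) (one_le_pow₀ (one_le_bracket _))).trans (hc.le_one M a)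

lemma exists_tendsto_hyperfilter (n : ℤ) :
    ∃ y : ℂ, Tendsto (fun M => c M n) (hyperfilter ℕ) (𝓝 y) := by
  obtain ⟨y, -, hy⟩ := (isCompact_closedBall (0 : ℂ) 1).ultrafilter_le_nhds
    ((hyperfilter ℕ).map fun M => c M n)
    (le_principal_iff.2 (mem_map.2 (univ_mem' fun M => by simpa using hc.norm_le_one M n)))
  exact ⟨y, hy⟩

lemma tendsto_gridSymbolAct_zero (m : ℤ) :
    Tendsto (fun M => gridSymbolAct (N M) ε (W (N M)) (c M) m) atTop (𝓝 0) := by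
  refine squeeze_zero_norm (fun M => ?_) (tendsto_one_div_add_atTop_nhds_zero_nat (𝕜 := ℝ))
  exact (le_mul_of_one_le_right (norm_nonneg _) (one_le_bracket _)).trans (hc.act_le M m)

variable [∀ M, NeZero (N M)]

lemma eventually_valMinAbs_eq (n : ℤ) : ∀ᶠ M in atTop, (n : ZMod (N M)).valMinAbs = n := by
  filter_upwards [hc.tendsto.eventually (eventually_two_mul_abs_lt n)] with M hM
  exact valMinAbs_intCast_of_two_mul_abs_lt hM

variable (h : EllipticFamily w W)

include h

lemma exists_eventually_bracket_le : ∃ R, ∀ᶠ M in atTop, bracket (ν M).valMinAbs ≤ R := by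
  obtain ⟨r, hr, C, hC⟩ := h.exists_mul_bracket_sub_le ε
  refine ⟨2 * C / r, ?_⟩
  filter_upwards [(tendsto_one_div_add_atTop_nhds_zero_nat (𝕜 := ℝ)).eventually
    (gt_mem_nhds (half_pos hr))] with M hM
  have hb := bracket_pos (ν M).valMinAbs
  have hact : ‖gridSymbolAct (N M) ε (W (N M)) (c M) (ν M)‖ * bracket (ν M).valMinAbs ^ 2 ≤
      r / 2 * bracket (ν M).valMinAbs := by
    rw [sq, ← mul_assoc]
    gcongr
    exact (hc.act_le M (ν M)).trans hM.le
  rw [le_div_iff₀ hr]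
  linarith [hC (N M) (c M) (hc.le_one M) (ν M) (hc.eq_one M)]

lemma symbolAct_limit_eq_zero {x : ℤ → ℂ}
    (hx : ∀ n : ℤ, Tendsto (fun M => c M n) (hyperfilter ℕ) (𝓝 (x n))) (m : ℤ) :
    symbolAct w x m = 0 := by
  have hU : (hyperfilter ℕ : Filter ℕ) ≤ atTop := Nat.hyperfilter_le_atTop
  obtain ⟨C, hC⟩ := h.exists_norm_gridSymbolTerm_le ε
  refine tendsto_nhds_unique (tendsto_tsum_of_dominated_convergence
    (summable_inv_bracket_sq.mul_left C) (fun k => ?_)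
    (.of_forall fun M k => hC (N M) (c M) (hc.le_one M) m k))
    ((hc.tendsto_gridSymbolAct_zero m).mono_left hU)
  refine (((h.tendsto k (m - k)).comp (hc.tendsto.mono_left hU)).mul (hx (m - k))).congr' ?_
  filter_upwards [hU (hc.eventually_valMinAbs_eq m), hU (hc.eventually_valMinAbs_eq (m - k))]
    with M hm hmk
  rw [gridSymbolTerm, ← Int.cast_sub, hm, hmk]
  simp

lemma exists_limit : ∃ x : ℤ → ℂ, RapidDecay x ∧ (∀ m, symbolAct w x m = 0) ∧
    ∀ n : ℤ, Tendsto (fun M => c M n) (hyperfilter ℕ) (𝓝 (x n)) := by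
  choose x hx using hc.exists_tendsto_hyperfilter
  have hnull := hc.symbolAct_limit_eq_zero h hx
  have hbound : ∀ n, ‖x n‖ ≤ 1 := fun n =>
    le_of_tendsto (hx n).norm (.of_forall fun M => hc.norm_le_one M n)
  exact ⟨x, h.rapidDecay_of_symbolAct_eq_zero hnull hbound, hnull, hx⟩

end AlmostNull

/-- Otherwise a limit of almost null vectors along an ultrafilter is a null sequence of `w`, hence
zero, although ellipticity keeps the frequency at which they attain their norm bounded. -/
theorem EllipticFamily.uniformlyStable {w : ℤ → ℤ → ℂ} {W : ℕ → ℤ → ℤ → ℂ}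
    (h : EllipticFamily w W) (ε : ℝ)
    (hinj : ∀ c, RapidDecay c → (∀ m, symbolAct w c m = 0) → ∀ n, c n = 0) :
    UniformlyStable ε W := by
  by_contra hbad
  obtain ⟨N, hN, c, ν, hc⟩ := exists_almostNull hbad
  obtain ⟨x, hdecay, hnull, hx⟩ := hc.exists_limit h
  obtain ⟨R, hR⟩ := hc.exists_eventually_bracket_le h
  have hR0 : 0 < R := hR.exists.elim fun M hM => (bracket_pos _).trans_le hM
  have hsmall : ∀ᶠ M in (hyperfilter ℕ : Filter ℕ),
      ∀ n ∈ Finset.Icc (-⌈R⌉) ⌈R⌉, ‖c M n‖ < 1 / R ^ 2 := by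
    rw [eventually_all_finset]
    intro n _
    have hlim := (hx n).norm
    rw [hinj x hdecay hnull n, norm_zero] at hlim
    exact hlim.eventually (gt_mem_nhds (by positivity))
  obtain ⟨M, hMR, hM⟩ := ((hR.filter_mono Nat.hyperfilter_le_atTop).and hsmall).exists
  have hb := bracket_pos (ν M).valMinAbs
  have hmem : (ν M).valMinAbs ∈ Finset.Icc (-⌈R⌉) ⌈R⌉ := by
    rw [Finset.mem_Icc, ← abs_le]
    exact_mod_cast (abs_le_bracket _).trans (hMR.trans (Int.le_ceil R))
  have hlt := hM _ hmem
  rw [ZMod.coe_valMinAbs, lt_div_iff₀ (by positivity)] at hlt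
  refine (hc.eq_one M).not_lt (lt_of_le_of_lt ?_ hlt)
  gcongr

/-! ### Trigonometric interpolation on the shifted grids -/

lemma bijective_of_isLinearMap {K V : Type*} [Field K] [AddCommGroup V] [Module K V]
    [FiniteDimensional K V] {f : V → V} (hf : IsLinearMap K f) (hinj : Function.Injective f) :
    Function.Bijective f :=
  ⟨hinj, (LinearMap.injective_iff_surjective (f := hf.mk' f)).1 hinj⟩

/-- The trigonometric polynomial with coefficients `b` at the frequencies `a.valMinAbs`,
`a : ZMod N`. -/
noncomputable def gridPoly {N : ℕ} [NeZero N] (b : ZMod N → ℂ) (t : ℝ) : ℂ :=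
  ∑ a : ZMod N, b a * mode a.valMinAbs t

/-- Extension of the coefficients `c` of a grid vector by zero outside the fundamental range. -/
noncomputable def zeroExtend {N : ℕ} (c : ZMod N → ℂ) (n : ℤ) : ℂ :=
  if (n : ZMod N).valMinAbs = n then c n else 0

/-- The coefficient at the frequency `μ.valMinAbs` of the trigonometric polynomial which agrees with
`fourierSeries g` on the grid shifted by `ε / N`. -/
noncomputable def foldCoeff (N : ℕ) (ε : ℝ) (g : ℤ → ℂ) (μ : ZMod N) : ℂ :=
  ∑' m : ℤ, if (m : ZMod N) = μ then mode (m - μ.valMinAbs) (ε / N) * g m else 0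

lemma tg_one_div (N : ℕ) (ε : ℝ) (j : ℤ) : tg (1 / N) ε j = (j + ε) / N := by
  rw [tg, mul_one_div]

section Interpolation

variable {N : ℕ} {ε : ℝ}

lemma summable_foldCoeff {g : ℤ → ℂ} (hg : Summable fun m => ‖g m‖) (μ : ZMod N) :
    Summable fun m : ℤ =>
      if (m : ZMod N) = μ then mode (m - μ.valMinAbs) (ε / N) * g m else 0 :=
  .of_norm_bounded hg fun m => by split_ifs <;> simp

lemma foldCoeff_add {f g : ℤ → ℂ} (hf : Summable fun m => ‖f m‖) (hg : Summable fun m => ‖g m‖)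
    (μ : ZMod N) :
    foldCoeff N ε (fun m => f m + g m) μ = foldCoeff N ε f μ + foldCoeff N ε g μ := by
  rw [foldCoeff, foldCoeff, foldCoeff,
    ← (summable_foldCoeff hf μ).tsum_add (summable_foldCoeff hg μ)]
  exact tsum_congr fun m => by split_ifs <;> ring

variable [NeZero N]

lemma mode_sub_mul_mode_tg (ε : ℝ) {m n : ℤ} (h : (m : ZMod N) = n) (i : ℤ) :
    mode (m - n) (ε / N) * mode n (tg (1 / N) ε i) = mode m (tg (1 / N) ε i) := by
  obtain ⟨p, hp⟩ := (ZMod.intCast_eq_intCast_iff_dvd_sub n m N).1 h.symm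
  have hphase : mode (m - n) (ε / N) = mode p ε := by
    simpa [hp, mul_comm] using mode_add_mul_grid N ε 0 p 0
  rw [hphase, tg_one_div, mul_comm, ← mode_add_mul_grid, mul_comm p, ← hp, add_sub_cancel]

lemma gridCoeff_gridPoly (b : ZMod N → ℂ) (a : ZMod N) :
    gridCoeff N ε (gridPoly b) a.valMinAbs = b a := by
  have hdvd (a' : ZMod N) : (N : ℤ) ∣ a'.valMinAbs - a.valMinAbs ↔ a' = a := by
    rw [← ZMod.intCast_zmod_eq_zero_iff_dvd]
    simp [sub_eq_zero]
  calc gridCoeff N ε (gridPoly b) a.valMinAbs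
      = ∑ a', b a' * gridCoeff N ε (mode a'.valMinAbs) a.valMinAbs := gridCoeff_sum ..
    _ = b a := by simp [gridCoeff_mode, hdvd]

lemma gridCoeff_congr_val {f g : ℝ → ℂ}
    (h : ∀ j : ZMod N, f (tg (1 / N) ε (j.val : ℕ)) = g (tg (1 / N) ε (j.val : ℕ))) (q : ℤ) :
    gridCoeff N ε f q = gridCoeff N ε g q := by
  have hsum := sum_val_eq_sum_range (N := N)
  simp only [tg_one_div, Int.cast_natCast] at h
  simp only [gridCoeff, ← hsum fun _ => _ * _, h]

lemma gridPoly_inj {b c : ZMod N → ℂ}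
    (h : ∀ j : ZMod N, gridPoly b (tg (1 / N) ε (j.val : ℕ)) =
      gridPoly c (tg (1 / N) ε (j.val : ℕ))) : b = c :=
  funext fun a => by rw [← gridCoeff_gridPoly (ε := ε) b, gridCoeff_congr_val h, gridCoeff_gridPoly]

lemma bijective_gridPoly (N : ℕ) [NeZero N] (ε : ℝ) :
    Function.Bijective fun (b : ZMod N → ℂ) (j : ZMod N) =>
      gridPoly b (tg (1 / N) ε (j.val : ℕ)) := by
  refine bijective_of_isLinearMap (K := ℂ) ⟨fun b c => ?_, fun r b => ?_⟩ fun b c h =>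
    gridPoly_inj (congrFun h) <;> ext j
  · simp [gridPoly, add_mul, Finset.sum_add_distrib]
  · simp [gridPoly, Finset.mul_sum, mul_assoc]

lemma fourierSeries_tg {g : ℤ → ℂ} (hg : Summable fun m => ‖g m‖) (i : ℤ) :
    fourierSeries g (tg (1 / N) ε i) = gridPoly (foldCoeff N ε g) (tg (1 / N) ε i) := by
  simp only [gridPoly, foldCoeff, ← tsum_mul_right]
  rw [← Summable.tsum_finsetSum fun μ _ => (summable_foldCoeff hg μ).mul_right _]
  refine tsum_congr fun m => ?_
  have hmode := mode_sub_mul_mode_tg ε (ZMod.coe_valMinAbs (m : ZMod N)).symm i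
  simp only [ite_mul, zero_mul, Finset.sum_ite_eq, Finset.mem_univ, if_true]
  rw [← hmode]
  ring

end Interpolation

section ZeroExtend

variable {N : ℕ} [NeZero N] {ε : ℝ} {u : ℤ → ℤ → ℂ} (c : ZMod N → ℂ)

lemma tsum_mul_zeroExtend (f : ℤ → ℂ) :
    ∑' n, f n * zeroExtend c n = ∑ a : ZMod N, f a.valMinAbs * c a := by
  have hsupp : (Function.support fun n => f n * zeroExtend c n) ⊆
      Set.range (ZMod.valMinAbs : ZMod N → ℤ) := fun n hn =>
    ⟨n, by_contra fun h => hn (by simp [zeroExtend, h])⟩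
  rw [← (ZMod.injective_valMinAbs (n := N)).tsum_eq hsupp, tsum_fintype]
  simp [zeroExtend]

lemma fourierSeries_zeroExtend : fourierSeries (zeroExtend c) = gridPoly c := funext fun t => by
  simpa only [fourierSeries, gridPoly, mul_comm] using tsum_mul_zeroExtend c fun n => mode n t

lemma symbolAct_zeroExtend (m : ℤ) :
    symbolAct u (zeroExtend c) m = ∑ a : ZMod N, u (m - a.valMinAbs) a.valMinAbs * c a := by
  rw [← tsum_mul_zeroExtend c fun n => u (m - n) n, symbolAct,
    ← (Equiv.subLeft m).tsum_eq fun n => u (m - n) n * zeroExtend c n]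
  simp

variable (hu : ∀ a : ZMod N, Summable fun k => ‖u k a.valMinAbs‖)

include hu

lemma summable_norm_symbolAct_zeroExtend :
    Summable fun m => ‖symbolAct u (zeroExtend c) m‖ := by
  have hcol (a : ZMod N) : Summable fun m => ‖u (m - a.valMinAbs) a.valMinAbs‖ :=
    (Equiv.subRight a.valMinAbs).summable_iff.2 (hu a)
  refine .of_nonneg_of_le (fun _ => norm_nonneg _) (fun m => ?_)
    (summable_sum (s := Finset.univ) fun a _ => (hcol a).mul_right ‖c a‖)
  rw [symbolAct_zeroExtend]
  exact norm_sum_le_of_le _ fun a _ => norm_mul_le _ _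

lemma foldCoeff_symbolAct_zeroExtend (μ : ZMod N) :
    foldCoeff N ε (symbolAct u (zeroExtend c)) μ = gridSymbolAct N ε u c μ := by
  let term (a : ZMod N) (k : ℤ) : ℂ := if ((k + a.valMinAbs : ℤ) : ZMod N) = μ then
    mode (k + a.valMinAbs - μ.valMinAbs) (ε / N) * (u k a.valMinAbs * c a) else 0
  have hterm (a : ZMod N) : Summable (term a) :=
    .of_norm_bounded ((hu a).mul_right ‖c a‖) fun k => by
      dsimp only [term]
      split_ifs
      · rw [norm_mul, norm_mode, one_mul, norm_mul]
      · rw [norm_zero]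
        positivity
  have hshift (a : ZMod N) : Summable fun m => term a (m - a.valMinAbs) :=
    (hterm a).comp_injective (sub_left_injective (b := a.valMinAbs))
  calc foldCoeff N ε (symbolAct u (zeroExtend c)) μ
      = ∑' m, ∑ a, term a (m - a.valMinAbs) := by
        refine tsum_congr fun m => ?_
        simp only [term, sub_add_cancel, symbolAct_zeroExtend, Finset.mul_sum]
        split_ifs <;> simp
    _ = ∑ a, ∑' m, term a (m - a.valMinAbs) := Summable.tsum_finsetSum fun a _ => hshift a
    _ = ∑ a, ∑' k, term a k :=
        Finset.sum_congr rfl fun a _ => (Equiv.subRight a.valMinAbs).tsum_eq (term a)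
    _ = ∑' k, ∑ a, term a k := (Summable.tsum_finsetSum fun a _ => hterm a).symm
    _ = gridSymbolAct N ε u c μ := by
        refine tsum_congr fun k => ?_
        simp [term, gridSymbolTerm, ← eq_sub_iff_add_eq']

end ZeroExtend

/-! ### Consistency -/

/-- The coefficients of the frequencies which the grid of `N` points does not resolve. -/
noncomputable def highFreq (N : ℕ) (c : ℤ → ℂ) (n : ℤ) : ℂ :=
  if (n : ZMod N).valMinAbs = n then 0 else c n

lemma zeroExtend_add_highFreq {N : ℕ} (c : ℤ → ℂ) (n : ℤ) :
    zeroExtend (fun a : ZMod N => c a.valMinAbs) n + highFreq N c n = c n := by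
  rw [zeroExtend, highFreq]
  split_ifs with hn <;> simp [hn]

lemma norm_highFreq_le (N : ℕ) (c : ℤ → ℂ) (n : ℤ) : ‖highFreq N c n‖ ≤ ‖c n‖ := by
  rw [highFreq]
  split_ifs <;> simp

lemma foldCoeff_eq_tsum_mode_mul {N : ℕ} [NeZero N] (ε : ℝ) (g : ℤ → ℂ) (μ : ZMod N) :
    foldCoeff N ε g μ = ∑' q : ℤ, mode (q * N) (ε / N) * g (μ.valMinAbs + q * N) := by
  have hinj : Function.Injective fun q : ℤ => μ.valMinAbs + q * N := fun p q hpq => by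
    simpa [NeZero.ne N] using hpq
  rw [foldCoeff, ← hinj.tsum_eq]
  · exact tsum_congr fun q => by simp
  · intro m hm
    have hmμ : ((μ.valMinAbs : ℤ) : ZMod N) = m := by
      by_contra hne
      exact hm (if_neg fun h => hne (by simp [h]))
    obtain ⟨q, hq⟩ := (ZMod.intCast_eq_intCast_iff_dvd_sub _ m N).1 hmμ
    exact ⟨q, by simp only; linarith⟩

lemma mul_bracket_le_bracket_add_mul {N : ℕ} {n q : ℤ} (hn : 2 * |n| ≤ N) (hq : q ≠ 0) :
    N * bracket q ≤ 4 * bracket (n + q * N) := by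
  have hn' : 2 * |(n : ℝ)| ≤ N := by exact_mod_cast hn
  have hq' : (1 : ℝ) ≤ |(q : ℝ)| := by exact_mod_cast Int.one_le_abs hq
  have htri : |(q : ℝ)| * N ≤ |(n : ℝ) + q * N| + |(n : ℝ)| := by
    simpa [abs_mul] using abs_sub ((n : ℝ) + q * N) n
  unfold bracket
  push_cast
  nlinarith

lemma inv_bracket_add_mul_sq_le {N : ℕ} [NeZero N] {n q : ℤ} (hn : 2 * |n| ≤ N) (hq : q ≠ 0) :
    (bracket (n + q * N) ^ 2)⁻¹ ≤ 24 / N / bracket n * (bracket q ^ 2)⁻¹ := by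
  have hN : (0 : ℝ) < N := by exact_mod_cast NeZero.pos N
  have hq0 := bracket_pos q
  have hnq := bracket_pos (n + q * N)
  calc (bracket (n + q * N) ^ 2)⁻¹ = 16 * ((4 * bracket (n + q * N)) ^ 2)⁻¹ := by
        field_simp
        norm_num
    _ ≤ 16 * ((N * bracket q) ^ 2)⁻¹ := by
        gcongr 16 * (?_ ^ 2)⁻¹
        exact mul_bracket_le_bracket_add_mul hn hq
    _ = 16 / N * (1 / N) * (bracket q ^ 2)⁻¹ := by field_simp
    _ ≤ 16 / N * (3 / 2 / bracket n) * (bracket q ^ 2)⁻¹ := by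
        gcongr 16 / N * ?_ * _
        exact one_div_le_div_bracket hn
    _ = 24 / N / bracket n * (bracket q ^ 2)⁻¹ := by ring

lemma norm_foldCoeff_mul_bracket_le {N : ℕ} [NeZero N] (ε : ℝ) {g : ℤ → ℂ} {D : ℝ}
    (h₁ : ∀ m, ‖g m‖ * bracket m ≤ D / N) (h₂ : ∀ m, ‖g m‖ * bracket m ^ 2 ≤ D) (μ : ZMod N) :
    ‖foldCoeff N ε g μ‖ * bracket μ.valMinAbs ≤ 24 * bracketSum * D / N := by
  have hN : (0 : ℝ) < N := by exact_mod_cast NeZero.pos N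
  have hμ := bracket_pos μ.valMinAbs
  have hD : 0 ≤ D := le_trans (by have := bracket_pos 0; positivity) (h₂ 0)
  rw [← le_div_iff₀ hμ, show 24 * bracketSum * D / N / bracket μ.valMinAbs =
    24 * D / N / bracket μ.valMinAbs * bracketSum by ring, foldCoeff_eq_tsum_mode_mul]
  refine norm_tsum_le_mul_bracketSum fun q => ?_
  rw [norm_mul, norm_mode, one_mul]
  rcases eq_or_ne q 0 with rfl | hq
  · rw [zero_mul, add_zero, bracket_zero, one_pow, inv_one, mul_one]
    refine ((le_div_iff₀ hμ).2 (h₁ _)).trans ?_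
    gcongr
    linarith
  have hle := two_mul_abs_valMinAbs_le μ
  calc ‖g (μ.valMinAbs + q * N)‖ ≤ D * (bracket (μ.valMinAbs + q * N) ^ 2)⁻¹ := by
        rw [← div_eq_mul_inv, le_div_iff₀ (pow_pos (bracket_pos _) 2)]
        exact h₂ _
    _ ≤ D * (24 / N / bracket μ.valMinAbs * (bracket q ^ 2)⁻¹) :=
        mul_le_mul_of_nonneg_left (inv_bracket_add_mul_sq_le hle hq) hD
    _ = 24 * D / N / bracket μ.valMinAbs * (bracket q ^ 2)⁻¹ := by ring

section Residual

variable {N : ℕ} {c : ℤ → ℂ} {P : ℝ} (hP : ∀ n, ‖c n‖ * bracket n ^ 3 ≤ P)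

include hP

lemma norm_highFreq_mul_bracket_cube_le (n : ℤ) : ‖highFreq N c n‖ * bracket n ^ 3 ≤ P := by
  have hn := bracket_pos n
  exact (by gcongr; exact norm_highFreq_le N c n : _ ≤ ‖c n‖ * bracket n ^ 3).trans (hP n)

lemma norm_le_of_norm_mul_bracket_cube_le (n : ℤ) : ‖c n‖ ≤ P :=
  (le_mul_of_one_le_right (norm_nonneg _) (one_le_pow₀ (one_le_bracket n))).trans (hP n)

variable [NeZero N]

lemma norm_highFreq_mul_bracket_sq_le (n : ℤ) :
    ‖highFreq N c n‖ * bracket n ^ 2 ≤ 2 * P / N := by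
  have hN : (0 : ℝ) < N := by exact_mod_cast NeZero.pos N
  have hn := bracket_pos n
  have hP0 : 0 ≤ P := le_trans (by positivity) (hP n)
  by_cases hres : (n : ZMod N).valMinAbs = n
  · rw [highFreq, if_pos hres, norm_zero, zero_mul]
    positivity
  have hNn : (N : ℝ) ≤ 2 * |(n : ℝ)| := by
    exact_mod_cast not_lt.1 fun hlt => hres (valMinAbs_intCast_of_two_mul_abs_lt hlt)
  rw [le_div_iff₀ hN]
  calc ‖highFreq N c n‖ * bracket n ^ 2 * N
      ≤ ‖highFreq N c n‖ * bracket n ^ 2 * (2 * bracket n) := by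
        gcongr
        exact hNn.trans (by gcongr; exact abs_le_bracket n)
    _ = 2 * (‖highFreq N c n‖ * bracket n ^ 3) := by ring
    _ ≤ 2 * P := by
        gcongr
        exact norm_highFreq_mul_bracket_cube_le hP n

lemma foldCoeff_symbolAct {w : ℤ → ℤ → ℂ} (hw : LinearGrowth w) (ε : ℝ) (μ : ZMod N) :
    foldCoeff N ε (symbolAct w c) μ = gridSymbolAct N ε w (fun a => c a.valMinAbs) μ +
      foldCoeff N ε (symbolAct w (highFreq N c)) μ := by
  let low (n : ℤ) : ℂ := zeroExtend (fun a : ZMod N => c a.valMinAbs) n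
  have hc := norm_le_of_norm_mul_bracket_cube_le hP
  have hhigh := norm_highFreq_mul_bracket_cube_le (N := N) hP
  have hlow : ∀ n, ‖low n‖ ≤ P := fun n => by
    dsimp only [low]
    rw [zeroExtend]
    split_ifs with hn
    · exact hc _
    · rw [norm_zero]
      exact (norm_nonneg _).trans (hc n)
  have hsplit (m : ℤ) : symbolAct w c m = symbolAct w low m + symbolAct w (highFreq N c) m := by
    rw [symbolAct, symbolAct, symbolAct, ← (hw.summable_of_norm_le hlow m).tsum_add
      (hw.summable_of_norm_le (norm_le_of_norm_mul_bracket_cube_le hhigh) m)]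
    exact tsum_congr fun k => by rw [← mul_add, zeroExtend_add_highFreq]
  obtain ⟨C, -, hC⟩ := hw.exists_norm_symbolAct_le 2
  have hsum : Summable fun m => ‖symbolAct w (highFreq N c) m‖ :=
    .of_nonneg_of_le (fun _ => norm_nonneg _) (fun m => (le_div_iff₀ (pow_pos (bracket_pos m) 2)).2
      (hC _ P hhigh m)) (summable_inv_bracket_sq.mul_left (C * P))
  have hw' (a : ZMod N) := hw.summable_norm a.valMinAbs
  rw [show symbolAct w c = _ from funext hsplit,
    foldCoeff_add (summable_norm_symbolAct_zeroExtend _ hw') hsum,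
    foldCoeff_symbolAct_zeroExtend _ hw']

end Residual

lemma LinearGrowth.exists_norm_foldCoeff_highFreq_le {w : ℤ → ℤ → ℂ} (hw : LinearGrowth w)
    (ε : ℝ) : ∃ C : ℝ, 0 ≤ C ∧ ∀ (N : ℕ) [NeZero N] (c : ℤ → ℂ) (P : ℝ),
      (∀ n, ‖c n‖ * bracket n ^ 3 ≤ P) → ∀ μ : ZMod N,
      ‖foldCoeff N ε (symbolAct w (highFreq N c)) μ‖ * bracket μ.valMinAbs ≤ C * P / N := by
  obtain ⟨C₁, hC₁, hact₁⟩ := hw.exists_norm_symbolAct_le 1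
  obtain ⟨C₂, hC₂, hact₂⟩ := hw.exists_norm_symbolAct_le 2
  have hS := bracketSum_pos
  refine ⟨24 * bracketSum * (2 * C₁ + C₂), by positivity, fun N _ c P hP μ => ?_⟩
  have hP0 : 0 ≤ P := (norm_nonneg _).trans (norm_le_of_norm_mul_bracket_cube_le hP 0)
  refine (norm_foldCoeff_mul_bracket_le ε (D := (2 * C₁ + C₂) * P) (fun m => ?_) (fun m => ?_)
    μ).trans_eq (by ring)
  · calc ‖symbolAct w (highFreq N c) m‖ * bracket m ≤ C₁ * (2 * P / N) := by
          simpa using hact₁ _ _ (norm_highFreq_mul_bracket_sq_le hP) m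
      _ = 2 * C₁ * P / N := by ring
      _ ≤ (2 * C₁ + C₂) * P / N := by
          gcongr
          exact le_add_of_nonneg_right hC₂
  · refine (hact₂ _ P (norm_highFreq_mul_bracket_cube_le hP) m).trans ?_
    gcongr
    linarith

section EllipticFamily

variable {w : ℤ → ℤ → ℂ} {W : ℕ → ℤ → ℤ → ℂ} (h : EllipticFamily w W)

include h

lemma EllipticFamily.exists_norm_gridSymbolAct_sub_le (ε : ℝ) :
    ∃ C : ℝ, 0 ≤ C ∧ ∀ (N : ℕ) [NeZero N] (c : ZMod N → ℂ) (P : ℝ),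
      (∀ a, ‖c a‖ * bracket a.valMinAbs ^ 3 ≤ P) → ∀ μ : ZMod N,
      ‖gridSymbolAct N ε (W N) c μ - gridSymbolAct N ε w c μ‖ * bracket μ.valMinAbs ≤
        C * P / N := by
  obtain ⟨C, hC0, hC⟩ := h.exists_norm_sub_le 3
  refine ⟨C * bracketSum, mul_nonneg hC0 bracketSum_pos.le, fun N _ c P hP μ => ?_⟩
  have hμ := bracket_pos μ.valMinAbs
  have hP0 : 0 ≤ P := le_trans (by positivity) (hP μ)
  rw [← le_div_iff₀ hμ, show C * bracketSum * P / N / bracket μ.valMinAbs =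
    C * P / N / bracket μ.valMinAbs * bracketSum by ring, gridSymbolAct, gridSymbolAct,
    ← (summable_gridSymbolTerm h.summable_norm c μ).tsum_sub
      (summable_gridSymbolTerm (fun a => h.linearGrowth.summable_norm a.valMinAbs) c μ)]
  refine norm_tsum_le_mul_bracketSum fun k => ?_
  have hk := bracket_pos k
  have hμk := bracket_pos (μ - k).valMinAbs
  have hdiff : gridSymbolTerm N ε (W N) c μ k - gridSymbolTerm N ε w c μ k =
      gridSymbolTerm N ε (fun k n => W N k n - w k n) c μ k := by
    simp only [gridSymbolTerm]
    ring
  calc ‖gridSymbolTerm N ε (W N) c μ k - gridSymbolTerm N ε w c μ k‖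
      ≤ C / bracket k ^ 3 * bracket (μ - k).valMinAbs ^ 2 / N *
          (P / bracket (μ - k).valMinAbs ^ 3) := by
        rw [hdiff, norm_gridSymbolTerm]
        gcongr
        · exact hC N k _ (two_mul_abs_valMinAbs_le _)
        · exact (le_div_iff₀ (by positivity)).2 (hP _)
    _ = C * P / N / (bracket k * bracket (μ - k).valMinAbs) * (bracket k ^ 2)⁻¹ := by field_simp
    _ ≤ C * P / N / bracket μ.valMinAbs * (bracket k ^ 2)⁻¹ := by
        gcongr
        exact bracket_valMinAbs_le μ k

lemma EllipticFamily.exists_norm_gridSymbolAct_sub_foldCoeff_le (ε : ℝ) :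
    ∃ C : ℝ, 0 ≤ C ∧ ∀ (N : ℕ) [NeZero N] (c : ℤ → ℂ) (P : ℝ),
      (∀ n, ‖c n‖ * bracket n ^ 3 ≤ P) → ∀ μ : ZMod N,
      ‖gridSymbolAct N ε (W N) (fun a => c a.valMinAbs) μ - foldCoeff N ε (symbolAct w c) μ‖ *
        bracket μ.valMinAbs ≤ C * P / N := by
  obtain ⟨C₁, hC₁, hgrid⟩ := h.exists_norm_gridSymbolAct_sub_le ε
  obtain ⟨C₂, hC₂, hfold⟩ := h.linearGrowth.exists_norm_foldCoeff_highFreq_le ε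
  refine ⟨C₁ + C₂, add_nonneg hC₁ hC₂, fun N _ c P hP μ => ?_⟩
  have hμ := bracket_pos μ.valMinAbs
  rw [foldCoeff_symbolAct hP h.linearGrowth, ← sub_sub]
  calc _ ≤ _ := mul_le_mul_of_nonneg_right (norm_sub_le _ _) hμ.le
    _ ≤ C₁ * P / N + C₂ * P / N := by
        rw [add_mul]
        exact add_le_add (hgrid N _ P (fun a => hP _) μ) (hfold N c P hP μ)
    _ = (C₁ + C₂) * P / N := by ring

end EllipticFamily

/-! ### Convergence -/

lemma sum_inv_bracket_valMinAbs_sq_le (N : ℕ) [NeZero N] :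
    ∑ a : ZMod N, (bracket a.valMinAbs ^ 2)⁻¹ ≤ bracketSum := by
  simpa [bracketSum] using summable_inv_bracket_sq.sum_le_tsum
    (Finset.univ.map ⟨ZMod.valMinAbs, ZMod.injective_valMinAbs (n := N)⟩)
    fun n _ => by have := bracket_pos n; positivity

lemma norm_gridPoly_le {N : ℕ} [NeZero N] {b : ZMod N → ℂ} {D : ℝ}
    (hb : ∀ a, ‖b a‖ * bracket a.valMinAbs ^ 2 ≤ D) (t : ℝ) : ‖gridPoly b t‖ ≤ D * bracketSum := by
  have hD : 0 ≤ D := le_trans (by have := bracket_pos (0 : ZMod N).valMinAbs; positivity) (hb 0)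
  calc ‖gridPoly b t‖ ≤ ∑ a : ZMod N, D * (bracket a.valMinAbs ^ 2)⁻¹ :=
        norm_sum_le_of_le _ fun a _ => by
          rw [norm_mul, norm_mode, mul_one, ← div_eq_mul_inv,
            le_div_iff₀ (pow_pos (bracket_pos _) 2)]
          exact hb a
    _ ≤ D * bracketSum := by
        rw [← Finset.mul_sum]
        exact mul_le_mul_of_nonneg_left (sum_inv_bracket_valMinAbs_sq_le N) hD

lemma norm_fourierSeries_le {c : ℤ → ℂ} {D : ℝ} (hc : ∀ n, ‖c n‖ * bracket n ^ 2 ≤ D) (t : ℝ) :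
    ‖fourierSeries c t‖ ≤ D * bracketSum :=
  norm_tsum_le_mul_bracketSum fun n => by
    rw [norm_mul, norm_mode, mul_one, ← div_eq_mul_inv, le_div_iff₀ (pow_pos (bracket_pos n) 2)]
    exact hc n

lemma norm_gridPoly_sub_fourierSeries_le {N : ℕ} [NeZero N] {c : ℤ → ℂ} {P : ℝ}
    (hP : ∀ n, ‖c n‖ * bracket n ^ 3 ≤ P) {b : ZMod N → ℂ} {D : ℝ}
    (hb : ∀ a, ‖b a - c a.valMinAbs‖ * bracket a.valMinAbs ^ 2 ≤ D) (t : ℝ) :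
    ‖gridPoly b t - fourierSeries c t‖ ≤ (D + 2 * P / N) * bracketSum := by
  have hhigh := norm_highFreq_mul_bracket_sq_le (N := N) hP
  have hsum : Summable fun n => ‖highFreq N c n‖ :=
    .of_nonneg_of_le (fun _ => norm_nonneg _) (fun n => (le_div_iff₀ (pow_pos (bracket_pos n) 2)).2
      (hhigh n)) (summable_inv_bracket_sq.mul_left (2 * P / N))
  have hlow : Summable fun n => zeroExtend (fun a : ZMod N => c a.valMinAbs) n * mode n t := by
    refine summable_of_ne_finset_zero
      (s := Finset.univ.map ⟨ZMod.valMinAbs, ZMod.injective_valMinAbs (n := N)⟩) fun n hn => ?_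
    rw [zeroExtend, if_neg fun h => hn (by simpa using ⟨_, h⟩), zero_mul]
  have hsplit : fourierSeries c t = gridPoly (fun a : ZMod N => c a.valMinAbs) t +
      fourierSeries (highFreq N c) t := by
    rw [← fourierSeries_zeroExtend, fourierSeries, fourierSeries, fourierSeries,
      ← hlow.tsum_add (summable_mul_mode hsum t)]
    exact tsum_congr fun n => by rw [← add_mul, zeroExtend_add_highFreq]
  have hsub : gridPoly b t - fourierSeries c t =
      gridPoly (fun a => b a - c a.valMinAbs) t - fourierSeries (highFreq N c) t := by
    rw [hsplit, ← sub_sub]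
    simp only [gridPoly, sub_mul, Finset.sum_sub_distrib]
  rw [hsub, add_mul]
  exact (norm_sub_le _ _).trans (add_le_add (norm_gridPoly_le hb t) (norm_fourierSeries_le hhigh t))

section EllipticFamily

variable {w : ℤ → ℤ → ℂ} {W : ℕ → ℤ → ℤ → ℂ} (h : EllipticFamily w W) {ε : ℝ}

include h

lemma EllipticFamily.exists_forall_bijective_gridSymbolAct (hstable : UniformlyStable ε W) :
    ∃ N₀ : ℕ, ∀ (N : ℕ) [NeZero N], N₀ ≤ N → Function.Bijective (gridSymbolAct N ε (W N)) := by
  obtain ⟨C, -, N₀, hC⟩ := hstable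
  refine ⟨N₀, fun N _ hN => ?_⟩
  have hlin : IsLinearMap ℂ (gridSymbolAct N ε (W N)) := isLinearMap_gridSymbolAct h.summable_norm
  refine bijective_of_isLinearMap hlin fun b c hbc => funext fun a => ?_
  have hle := hC N hN (b - c) 0 (fun μ => by simp [hlin.map_sub, hbc]) a
  rw [mul_zero] at hle
  exact sub_eq_zero.1 (norm_le_zero_iff.1
    (nonpos_of_mul_nonpos_left hle (pow_pos (bracket_pos a.valMinAbs) 2)))

lemma EllipticFamily.exists_norm_gridPoly_sub_fourierSeries_le (hstable : UniformlyStable ε W) :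
    ∃ C : ℝ, 0 < C ∧ ∃ N₀ : ℕ, ∀ (N : ℕ) [NeZero N], N₀ ≤ N → ∀ (c : ℤ → ℂ) (P : ℝ),
      (∀ n, ‖c n‖ * bracket n ^ 3 ≤ P) → ∀ b : ZMod N → ℂ,
      gridSymbolAct N ε (W N) b = foldCoeff N ε (symbolAct w c) →
      ∀ t, ‖gridPoly b t - fourierSeries c t‖ ≤ C * P / N := by
  obtain ⟨C₁, hC₁, N₀, hstab⟩ := hstable
  obtain ⟨C₂, hC₂, hres⟩ := h.exists_norm_gridSymbolAct_sub_foldCoeff_le ε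
  have hS := bracketSum_pos
  refine ⟨(C₁ * C₂ + 2) * bracketSum, by positivity, N₀, fun N _ hN c P hP b hb t => ?_⟩
  have hlin : IsLinearMap ℂ (gridSymbolAct N ε (W N)) := isLinearMap_gridSymbolAct h.summable_norm
  have herr := hstab N hN (b - fun a => c a.valMinAbs) (C₂ * P / N) fun μ => by
    rw [hlin.map_sub, hb, Pi.sub_apply, norm_sub_rev]
    exact hres N c P hP μ
  refine (norm_gridPoly_sub_fourierSeries_le hP herr t).trans_eq ?_
  ring

end EllipticFamily

/-! ### The Nyström system -/

section Kernel

variable {A₁ K₁ A₂ K₂ : ℝ → ℝ → ℂ} (hA₁ : SPK A₁) (hK₁ : SPK K₁) (hA₂ : SPK A₂) (hK₂ : SPK K₂)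
  {ε : ℝ} (hε : 0 < shiftGap ε)

include hA₁ hK₁ hA₂ hK₂ hε

section EllipticFamily

variable {α : ℂ} (hα : α ≠ 0) (hdiag : ∀ s, A₁ s s = α)

include hα hdiag

theorem ellipticFamily_kernel :
    EllipticFamily
      (hypersingularSymbol (logPartCoeff A₁) (smoothPartCoeff A₁ K₁) (logPartCoeff A₂)
        (smoothPartCoeff A₂ K₂))
      fun N => nystromSymbol N ε (logPartCoeff A₁) (smoothPartCoeff A₁ K₁) (logPartCoeff A₂)
        (smoothPartCoeff A₂ K₂) :=
  ellipticFamily_nystromSymbol (rapidDecay₂_logPartCoeff hA₁) (rapidDecay₂_smoothPartCoeff hA₁ hK₁)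
    (rapidDecay₂_logPartCoeff hA₂) (rapidDecay₂_smoothPartCoeff hA₂ hK₂) hε
    (hasSum_logPartCoeff_row hA₁ hdiag) (by simp [hα, Real.pi_ne_zero])

end EllipticFamily

variable {N : ℕ} [NeZero N]

lemma fourierSeries_symbolAct_nystromSymbol (b : ZMod N → ℂ) (i : ℤ) :
    fourierSeries (symbolAct (nystromSymbol N ε (logPartCoeff A₁) (smoothPartCoeff A₁ K₁)
      (logPartCoeff A₂) (smoothPartCoeff A₂ K₂)) (zeroExtend b)) (tg (1 / N) ε i) =
      N * ∑ j : ZMod N, Wmat (logKer A₁ K₁) (logKer A₂ K₂) (1 / N) ε i (j.val : ℕ) *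
        gridPoly b (tg (1 / N) 0 (j.val : ℕ)) := by
  have hmode (a : ZMod N) := ((Equiv.subRight a.valMinAbs).hasSum_iff.2
    (hasSum_nystromSymbol_mul_mode hA₁ hK₁ hA₂ hK₂ hε i a.valMinAbs (N := N))).mul_left (b a)
  calc _ = ∑' m, ∑ a : ZMod N, b a * (_ * mode (a.valMinAbs + (m - a.valMinAbs)) _) := by
        refine tsum_congr fun m => ?_
        rw [symbolAct_zeroExtend, Finset.sum_mul]
        refine Finset.sum_congr rfl fun a _ => ?_
        simp only [Equiv.subRight_apply, add_sub_cancel]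
        ring
    _ = ∑ a : ZMod N, b a * (N * ∑ j : ZMod N, _ * mode a.valMinAbs _) :=
        (hasSum_sum fun a _ => hmode a).tsum_eq
    _ = _ := by
        simp only [gridPoly, Finset.mul_sum]
        rw [Finset.sum_comm]
        exact Finset.sum_congr rfl fun j _ => Finset.sum_congr rfl fun a _ => by ring

lemma nys_gridPoly_iff {c : ℤ → ℂ} (hc : RapidDecay c) (b : ZMod N → ℂ) :
    Nys (logKer A₁ K₁) (logKer A₂ K₂) ε N (fourierSeries c)
        (fun j => gridPoly b (tg (1 / N) 0 (j.val : ℕ))) ↔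
      gridSymbolAct N ε (nystromSymbol N ε (logPartCoeff A₁) (smoothPartCoeff A₁ K₁)
        (logPartCoeff A₂) (smoothPartCoeff A₂ K₂)) b =
      foldCoeff N ε (symbolAct (hypersingularSymbol (logPartCoeff A₁) (smoothPartCoeff A₁ K₁)
        (logPartCoeff A₂) (smoothPartCoeff A₂ K₂)) c) := by
  have hN : (N : ℂ) ≠ 0 := NeZero.ne _
  have hw := linearGrowth_hypersingularSymbol (rapidDecay₂_logPartCoeff hA₁)
    (rapidDecay₂_smoothPartCoeff hA₁ hK₁) (rapidDecay₂_logPartCoeff hA₂)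
    (rapidDecay₂_smoothPartCoeff hA₂ hK₂)
  have hu (a : ZMod N) : Summable fun k => ‖nystromSymbol N ε (logPartCoeff A₁)
      (smoothPartCoeff A₁ K₁) (logPartCoeff A₂) (smoothPartCoeff A₂ K₂) k a.valMinAbs‖ := by
    simpa using (hasSum_nystromSymbol_mul_mode hA₁ hK₁ hA₂ hK₂ hε 0 a.valMinAbs).summable.norm
  rw [← (bijective_gridPoly N ε).injective.eq_iff, funext_iff]
  refine forall_congr' fun i => ?_
  rw [← fourierSeries_tg (hw.rapidDecay_symbolAct hc).summable_norm,
    ← Wop_fourierSeries hA₁ hK₁ hA₂ hK₂ hc, ← funext (foldCoeff_symbolAct_zeroExtend b hu),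
    ← fourierSeries_tg (summable_norm_symbolAct_zeroExtend b hu),
    fourierSeries_symbolAct_nystromSymbol hA₁ hK₁ hA₂ hK₂ hε, one_div (N : ℂ),
    eq_inv_mul_iff_mul_eq₀ hN]

end Kernel

end Nystrom

open Nystrom

/-- first-order uniform nodal convergence
`max_j |φ_j − φ(t_j)| ≤ C h ‖φ‖₃` for all stable `ε`. -/
theorem stmt_17
    (A1 K1 A2 K2 : ℝ → ℝ → ℂ) (hA1 : SPK A1) (hK1 : SPK K1) (hA2 : SPK A2) (hK2 : SPK K2)
    (α : ℂ) (hα : α ≠ 0) (hdiag : ∀ s : ℝ, A1 s s = α)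
    (hinj : ∀ φ : ℝ → ℂ, ContDiff ℝ (⊤ : ℕ∞) φ → Function.Periodic φ 1 →
      (∀ s, Wop (logKer A1 K1) (logKer A2 K2) φ s = 0) → ∀ s, φ s = 0)
    (ε : ℝ) (hε : ∀ k : ℤ, ε ≠ (k : ℝ) / 2) :
    ∃ h0 > (0:ℝ), ∃ C > (0:ℝ), ∀ φ : ℝ → ℂ, ContDiff ℝ (⊤ : ℕ∞) φ → Function.Periodic φ 1 →
      ∀ (N : ℕ) [NeZero N], 1 / (N : ℝ) ≤ h0 →
        (∃! v : ZMod N → ℂ, Nys (logKer A1 K1) (logKer A2 K2) ε N φ v) ∧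
        ∀ v : ZMod N → ℂ, Nys (logKer A1 K1) (logKer A2 K2) ε N φ v →
          ∀ j : ZMod N,
            ‖v j - φ (tg (1 / (N : ℝ)) 0 ((j.val : ℕ) : ℤ))‖ ≤
              C * (1 / (N : ℝ)) * sobNorm 3 φ := by
  have hgap := shiftGap_pos hε
  have helliptic := ellipticFamily_kernel hA1 hK1 hA2 hK2 hgap hα hdiag
  have hstable := helliptic.uniformlyStable ε fun c hc =>
    eq_zero_of_symbolAct_hypersingularSymbol_eq_zero hA1 hK1 hA2 hK2 hc hinj
  obtain ⟨N₁, hbij⟩ := helliptic.exists_forall_bijective_gridSymbolAct hstable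
  obtain ⟨C, hC, N₂, herr⟩ := helliptic.exists_norm_gridPoly_sub_fourierSeries_le hstable
  refine ⟨1 / (max N₁ N₂ + 1 : ℕ), by positivity, 8 * C, by positivity, fun φ hφ hper N _ hN => ?_⟩
  have hNmax : max N₁ N₂ ≤ N := by
    rw [one_div_le_one_div (Nat.cast_pos.2 (NeZero.pos N)) (by positivity), Nat.cast_le] at hN
    omega
  have hdecay := rapidDecay_fc hφ hper
  have hφ' : fourierSeries (fc φ) = φ := funext fun t =>
    (hasSum_fc_mul_mode hφ.continuous hper hdecay.summable_norm.of_norm t).tsum_eq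
  have hnys (b : ZMod N → ℂ) := hφ' ▸ nys_gridPoly_iff hA1 hK1 hA2 hK2 hgap hdecay b
  refine ⟨(bijective_gridPoly N 0).existsUnique_iff.2 ?_, fun v hv j => ?_⟩
  · exact (existsUnique_congr hnys).2 ((hbij N (le_of_max_le_left hNmax)).existsUnique _)
  · obtain ⟨b, rfl⟩ := (bijective_gridPoly N 0).surjective v
    have hle := herr N (le_of_max_le_right hNmax) _ _ (norm_fc_mul_bracket_pow_le hdecay 3) b
      ((hnys b).1 hv) (tg (1 / N) 0 (j.val : ℕ))
    rw [hφ'] at hle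
    exact hle.trans_eq (by push_cast; ring)
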